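/- Riemann Hypothesis for ξ^{G₂/P_long}: if s is a complex number not lying in the exceptional set S₁ = {−1, 0, 1/3, 1/2, 2/3, 1, 2} and ξ^{G₂/P_long}(s) = 0, then Re(s) = 1/2. -/

import Mathlib

open Complex

noncomputable def xiG2Plong (s : ℂ) : ℂ :=
  completedRiemannZeta 2 * completedRiemannZeta (s + 1) * completedRiemannZeta (2 * s) *
      completedRiemannZeta (3 * s) / (s - 2)
  - completedRiemannZeta 2 * completedRiemannZeta (s - 1) * completedRiemannZeta (2 * s - 1) *
      completedRiemannZeta (3 * s - 2) / (s + 1)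
  - completedRiemannZeta (s + 1) * completedRiemannZeta (2 * s) * completedRiemannZeta (3 * s) /
      (2 * s - 2)
  + completedRiemannZeta (s - 1) * completedRiemannZeta (2 * s - 1) *
      completedRiemannZeta (3 * s - 2) / (2 * s)
  - completedRiemannZeta s * completedRiemannZeta (2 * s) * completedRiemannZeta (3 * s - 1) /
      (3 * s * (2 * s - 2))
  - completedRiemannZeta s * completedRiemannZeta (2 * s - 1) * completedRiemannZeta (3 * s - 2) /
      ((3 * s - 1) * (s - 2))
  - completedRiemannZeta s * completedRiemannZeta (2 * s - 1) * completedRiemannZeta (3 * s - 1) /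
      ((3 * s - 3) * (2 * s))
  - completedRiemannZeta s * completedRiemannZeta (2 * s) * completedRiemannZeta (3 * s) /
      ((3 * s - 2) * (s + 1))

def S1 : Set ℂ := {-1, 0, 1/3, 1/2, 2/3, 1, 2}

/-!
Write `X(s) = s (s - 1) ξ(s)`. Up to a polynomial factor vanishing only on `S1`, the zeta function
is `F(z) = V(z) - V(-z)` with `z = s - 1 / 2` and `V(z) = (z - 1 / 2) X(2z + 1) D(z)`, where `D` is
the entire function `mainFactor`. Since `V(-z)` is the conjugate of `V(z)` on the imaginary axis,
the real part of `F / V` is nonnegative there.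

Two half-plane arguments of Phragmén–Lindelöf type, applied after moving zeros to their mirror
images in the imaginary axis, then bound the numbers of zeros with `Re z > 0`. First, `D` has at
most two of them: divided by `X(z + 3 / 2) X(3z + 3 / 2)`, it stays on the imaginary axis within an
angle `π / 2` of an explicit cubic polynomial with exactly two such zeros. For `|z| ≤ 10` this is
checked by interval arithmetic, and for larger `|z|` it follows from `|X(w)| ≤ |X(w + 1)|` for
`Re w ≥ 0`. Second, a zero of `F` other than `1 / 2` and `1 / 6` would contradict `Re (F / V) ≥ 0`
together with `V'(0) > 0`. The zeros `±1 / 2` and `±1 / 6` of `F` correspond to the points `1`, `0`,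
`2 / 3` and `1 / 3` of `S1`.
-/

namespace xiG2Plong

open MeasureTheory Set Filter Topology Asymptotics
open scoped Real ComplexConjugate

/-! ### The theta integral for the completed zeta function -/

/-- The tail `∑_{n ≠ 0} exp (-π n² x)` of the Jacobi theta function; its Mellin integral over
`(1, ∞)` represents `completedRiemannZeta₀`. -/
noncomputable def thetaTail (x : ℝ) : ℝ := HurwitzZeta.cosKernel 0 x - 1

lemma hasSum_thetaTail {x : ℝ} (hx : 0 < x) :
    HasSum (fun n : ℕ ↦ 2 * Real.exp (-π * (n + 1) ^ 2 * x)) (thetaTail x) := by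
  simpa [thetaTail] using HurwitzZeta.hasSum_nat_cosKernel₀ 0 hx

lemma sum_range_le_thetaTail (N : ℕ) {x : ℝ} (hx : 0 < x) :
    ∑ n ∈ Finset.range N, 2 * Real.exp (-π * (n + 1) ^ 2 * x) ≤ thetaTail x :=
  sum_le_hasSum _ (fun _ _ ↦ by positivity) (hasSum_thetaTail hx)

lemma thetaTail_le_sum_range_add (N : ℕ) {x : ℝ} (hx : 1 ≤ x) :
    thetaTail x ≤ ∑ n ∈ Finset.range N, 2 * Real.exp (-π * (n + 1) ^ 2 * x)
      + 4 * Real.exp (-π * (N + 1) ^ 2 * x) := by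
  have hx0 : 0 < x := by linarith
  have tail := (hasSum_nat_add_iff' N).mpr (hasSum_thetaTail hx0)
  have ratio_le : Real.exp (-(π * x)) ≤ 1 / 2 := by
    have : 2 ≤ Real.exp (π * x) := by
      nlinarith [Real.add_one_le_exp (π * x), Real.pi_gt_three]
    rw [Real.exp_neg, one_div]
    exact inv_anti₀ two_pos this
  have geometric := (hasSum_geometric_of_lt_one (Real.exp_pos _).le
    (ratio_le.trans_lt one_half_lt_one)).mul_left (2 * Real.exp (-π * (N + 1) ^ 2 * x))
  have tail_le := hasSum_le (fun n ↦ ?_) tail geometric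
  · have sum_le : (1 - Real.exp (-(π * x)))⁻¹ ≤ 2 := by
      rw [inv_le_comm₀ (by linarith) two_pos]
      linarith
    nlinarith [Real.exp_pos (-π * (N + 1) ^ 2 * x)]
  · rw [← Real.exp_nat_mul, mul_assoc 2 (Real.exp _) (Real.exp _), ← Real.exp_add]
    gcongr
    have gap : 0 ≤ (n : ℝ) ^ 2 + n + 2 * n * N := by positivity
    push_cast
    nlinarith [mul_nonneg (mul_nonneg Real.pi_pos.le hx0.le) gap]

lemma thetaTail_nonneg {x : ℝ} (hx : 0 < x) : 0 ≤ thetaTail x := by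
  simpa using sum_range_le_thetaTail 0 hx

lemma thetaTail_le {x : ℝ} (hx : 1 ≤ x) : thetaTail x ≤ 4 * Real.exp (-π * x) := by
  simpa using thetaTail_le_sum_range_add 0 hx

lemma continuousOn_thetaTail : ContinuousOn thetaTail (Ioi 0) :=
  (HurwitzZeta.continuousOn_cosKernel 0).sub continuousOn_const

lemma integrableOn_exp_neg_mul_rpow {b : ℝ} (hb : 0 < b) (c : ℝ) :
    IntegrableOn (fun x : ℝ ↦ Real.exp (-b * x) * x ^ c) (Ioi 1) := by
  refine integrable_of_isBigO_exp_neg (half_pos hb) (ContinuousOn.mul (by fun_prop) ?_) ?_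
  · exact fun x hx ↦ (Real.continuousAt_rpow_const x c
      (Or.inl (by linarith [mem_Ici.mp hx]))).continuousWithinAt
  · have rpow_le := (isLittleO_rpow_exp_pos_mul_atTop c (half_pos hb)).isBigO
    refine ((isBigO_refl (fun x : ℝ ↦ Real.exp (-b * x)) atTop).mul rpow_le).congr_right
      fun x ↦ ?_
    rw [← Real.exp_add]
    ring_nf

lemma continuousOn_ofReal_cpow (z : ℂ) : ContinuousOn (fun x : ℝ ↦ (x : ℂ) ^ z) (Ioi 1) :=
  fun x hx ↦ (continuousAt_ofReal_cpow_const x z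
    (Or.inr (zero_lt_one.trans hx).ne')).continuousWithinAt

lemma integrableOn_cpow_mul_exp_neg {b : ℝ} (hb : 0 < b) (z : ℂ) :
    IntegrableOn (fun x : ℝ ↦ (x : ℂ) ^ z * (Real.exp (-b * x) : ℂ)) (Ioi 1) := by
  refine Integrable.mono' (integrableOn_exp_neg_mul_rpow hb z.re) ?_ ?_
  · exact ((continuousOn_ofReal_cpow z).mul (by fun_prop)).aestronglyMeasurable measurableSet_Ioi
  · filter_upwards [ae_restrict_mem measurableSet_Ioi] with x hx
    rw [norm_mul, norm_cpow_eq_rpow_re_of_pos (zero_lt_one.trans hx), norm_real,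
      Real.norm_of_nonneg (Real.exp_pos _).le, mul_comm]

lemma norm_cpow_mul_thetaTail {x : ℝ} (hx : 0 < x) (z : ℂ) :
    ‖(x : ℂ) ^ z * (thetaTail x : ℂ)‖ = x ^ z.re * thetaTail x := by
  rw [norm_mul, norm_cpow_eq_rpow_re_of_pos hx, norm_real,
    Real.norm_of_nonneg (thetaTail_nonneg hx)]

lemma integrableOn_cpow_mul_thetaTail (z : ℂ) :
    IntegrableOn (fun x : ℝ ↦ (x : ℂ) ^ z * (thetaTail x : ℂ)) (Ioi 1) := by
  refine Integrable.mono' ((integrableOn_exp_neg_mul_rpow Real.pi_pos z.re).const_mul 4) ?_ ?_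
  · refine ContinuousOn.aestronglyMeasurable ?_ measurableSet_Ioi
    exact (continuousOn_ofReal_cpow z).mul (continuous_ofReal.comp_continuousOn
      (continuousOn_thetaTail.mono (Ioi_subset_Ioi zero_le_one)))
  · filter_upwards [ae_restrict_mem measurableSet_Ioi] with x hx
    have hx0 : 0 < x := zero_lt_one.trans hx
    rw [norm_cpow_mul_thetaTail hx0]
    calc x ^ z.re * thetaTail x ≤ x ^ z.re * (4 * Real.exp (-π * x)) := by
          gcongr
          exact thetaTail_le (le_of_lt hx)
      _ = 4 * (Real.exp (-π * x) * x ^ z.re) := by ring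

lemma integrableOn_rpow_mul_thetaTail (p : ℝ) :
    IntegrableOn (fun x : ℝ ↦ x ^ p * thetaTail x) (Ioi 1) := by
  refine (integrableOn_cpow_mul_thetaTail p).norm.congr ?_
  filter_upwards [ae_restrict_mem measurableSet_Ioi] with x hx
  rw [norm_cpow_mul_thetaTail (zero_lt_one.trans hx), ofReal_re]

/-- The incomplete Mellin transform of `thetaTail`, taken over `(1, ∞)`. -/
noncomputable def thetaMellin (z : ℂ) : ℂ :=
  ∫ x in Ioi (1 : ℝ), (x : ℂ) ^ (z - 1) * (thetaTail x : ℂ)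

/-- `thetaTail` cut off to `(1, ∞)`, so that `thetaMellin` becomes a genuine Mellin transform. -/
noncomputable def cutThetaTail : ℝ → ℂ := (Ioi 1).indicator fun x ↦ (thetaTail x : ℂ)

lemma cpow_smul_cutThetaTail (z : ℂ) (x : ℝ) : (x : ℂ) ^ z • cutThetaTail x =
    (Ioi (1 : ℝ)).indicator (fun x : ℝ ↦ (x : ℂ) ^ z * (thetaTail x : ℂ)) x := by
  by_cases hx : x ∈ Ioi (1 : ℝ) <;> simp [cutThetaTail, hx]

lemma mellin_cutThetaTail (z : ℂ) : mellin cutThetaTail z = thetaMellin z := by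
  simp_rw [mellin, cpow_smul_cutThetaTail]
  rw [setIntegral_indicator measurableSet_Ioi,
    inter_eq_right.mpr (Ioi_subset_Ioi zero_le_one), thetaMellin]

lemma mellinConvergent_cutThetaTail (z : ℂ) : MellinConvergent cutThetaTail z := by
  simp_rw [MellinConvergent, cpow_smul_cutThetaTail]
  rw [integrableOn_indicator_iff measurableSet_Ioi]
  exact (integrableOn_cpow_mul_thetaTail (z - 1)).mono_set inter_subset_left

lemma inv_cpow_half {x : ℝ} (hx : 0 < x) : (x : ℂ)⁻¹ ^ (1 / 2 : ℂ) = ((x ^ (1 / 2 : ℝ))⁻¹ : ℝ) := by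
  rw [← Real.inv_rpow hx.le, ofReal_cpow (by positivity)]
  push_cast
  rfl

lemma f_modif_hurwitzEvenFEPair {x : ℝ} (hx : 0 < x) :
    (HurwitzZeta.hurwitzEvenFEPair 0).f_modif x =
      cutThetaTail x + (x : ℂ)⁻¹ ^ (1 / 2 : ℂ) • cutThetaTail x⁻¹ := by
  simp only [WeakFEPair.f_modif, HurwitzZeta.hurwitzEvenFEPair, Pi.add_apply, cutThetaTail,
    HurwitzZeta.evenKernel_eq_cosKernel_of_zero]
  congr 1
  · by_cases h : x ∈ Ioi (1 : ℝ) <;> simp [h, thetaTail]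
  · by_cases h : x ∈ Ioo (0 : ℝ) 1
    · have h_inv : x⁻¹ ∈ Ioi (1 : ℝ) := (one_lt_inv₀ hx).mpr h.2
      have functional_equation := HurwitzZeta.evenKernel_functional_equation 0 x
      rw [HurwitzZeta.evenKernel_eq_cosKernel_of_zero] at functional_equation
      rw [indicator_of_mem h, indicator_of_mem h_inv, inv_cpow_half hx]
      simp only [thetaTail, Function.comp, smul_eq_mul, one_mul, mul_one]
      rw [functional_equation, Real.rpow_neg hx.le]
      push_cast
      simp only [one_div]
      ring
    · have h_inv : x⁻¹ ∉ Ioi (1 : ℝ) := fun h' ↦ h ⟨hx, (one_lt_inv₀ hx).mp h'⟩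
      rw [indicator_of_notMem h, indicator_of_notMem h_inv, smul_zero]

lemma completedRiemannZeta₀_eq_thetaMellin (s : ℂ) :
    completedRiemannZeta₀ s = (thetaMellin (s / 2) + thetaMellin ((1 - s) / 2)) / 2 := by
  unfold completedRiemannZeta₀ HurwitzZeta.completedHurwitzZetaEven₀ WeakFEPair.Λ₀
  congr 1
  set z := s / 2
  have hz : (1 - s) / 2 = -z + 1 / 2 := by ring
  set B : ℝ → ℂ := fun x ↦ (x : ℂ) ^ (1 / 2 : ℂ) • cutThetaTail x
  have mellin_B : mellin (fun t ↦ B t⁻¹) z = mellin cutThetaTail (-z + 1 / 2) := by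
    rw [mellin_comp_inv, mellin_cpow_smul]
  have mellinConvergent_B : MellinConvergent (fun t ↦ B t⁻¹) z := by
    have h : MellinConvergent B (z / ((-1 : ℝ) : ℂ)) := by
      rw [show z / ((-1 : ℝ) : ℂ) = -z by push_cast; ring]
      exact MellinConvergent.cpow_smul.mpr (mellinConvergent_cutThetaTail _)
    simpa [Real.rpow_neg_one] using (MellinConvergent.comp_rpow (by norm_num)).mpr h
  rw [hz, ← mellin_cutThetaTail, ← mellin_cutThetaTail, ← mellin_B]
  unfold mellin
  rw [← integral_add (mellinConvergent_cutThetaTail z) mellinConvergent_B]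
  refine setIntegral_congr_fun measurableSet_Ioi fun x hx ↦ ?_
  simp only [f_modif_hurwitzEvenFEPair hx, B, ofReal_inv, smul_add]

lemma thetaMellin_ofReal (p : ℝ) :
    thetaMellin p = ((∫ x in Ioi (1 : ℝ), x ^ (p - 1) * thetaTail x : ℝ) : ℂ) := by
  rw [thetaMellin, ← integral_complex_ofReal]
  refine setIntegral_congr_fun measurableSet_Ioi fun x hx ↦ ?_
  rw [ofReal_mul, ofReal_cpow (zero_le_one.trans (le_of_lt hx))]
  push_cast
  rfl

lemma norm_thetaMellin_le (z : ℂ) : ‖thetaMellin z‖ ≤ (thetaMellin z.re).re := by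
  rw [thetaMellin_ofReal, ofReal_re]
  refine (norm_integral_le_integral_norm _).trans_eq ?_
  refine setIntegral_congr_fun measurableSet_Ioi fun x hx ↦ ?_
  simp only [norm_cpow_mul_thetaTail (zero_lt_one.trans hx), sub_re, one_re]

lemma thetaMellin_conj (z : ℂ) : thetaMellin (conj z) = conj (thetaMellin z) := by
  rw [thetaMellin, thetaMellin, ← integral_conj]
  refine setIntegral_congr_fun measurableSet_Ioi fun x hx ↦ ?_
  have arg_ne : (x : ℂ).arg ≠ π := by
    rw [arg_ofReal_of_nonneg (zero_le_one.trans (le_of_lt hx))]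
    exact Real.pi_pos.ne
  have cpow_conj_eq := cpow_conj (x : ℂ) (z - 1) arg_ne
  rw [conj_ofReal, map_sub, map_one] at cpow_conj_eq
  simp only [map_mul, conj_ofReal, cpow_conj_eq]

lemma completedRiemannZeta₀_conj (s : ℂ) :
    completedRiemannZeta₀ (conj s) = conj (completedRiemannZeta₀ s) := by
  simp only [completedRiemannZeta₀_eq_thetaMellin, map_div₀, map_add, ← thetaMellin_conj, map_sub,
    map_one, map_ofNat]

/-- The restriction of `completedRiemannZeta₀` to the real axis, where it is real valued. -/
noncomputable def realZeta₀ (p : ℝ) : ℝ := (completedRiemannZeta₀ p).re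

lemma ofReal_realZeta₀ (p : ℝ) : (realZeta₀ p : ℂ) = completedRiemannZeta₀ p :=
  conj_eq_iff_re.mp (by rw [← completedRiemannZeta₀_conj, conj_ofReal])

lemma realZeta₀_eq_thetaMellin (p : ℝ) :
    realZeta₀ p = ((thetaMellin (p / 2 : ℝ)).re + (thetaMellin ((1 - p) / 2 : ℝ)).re) / 2 := by
  rw [realZeta₀, completedRiemannZeta₀_eq_thetaMellin, div_ofNat_re, add_re]
  push_cast
  rfl

lemma norm_completedRiemannZeta₀_le (s : ℂ) : ‖completedRiemannZeta₀ s‖ ≤ realZeta₀ s.re := by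
  have h₁ := norm_thetaMellin_le (s / 2)
  have h₂ := norm_thetaMellin_le ((1 - s) / 2)
  rw [div_ofNat_re] at h₁ h₂
  rw [sub_re, one_re] at h₂
  rw [completedRiemannZeta₀_eq_thetaMellin, realZeta₀_eq_thetaMellin, norm_div, norm_ofNat]
  gcongr
  exact (norm_add_le _ _).trans (add_le_add h₁ h₂)

lemma realZeta₀_nonneg (p : ℝ) : 0 ≤ realZeta₀ p := by
  simpa using (norm_nonneg _).trans (norm_completedRiemannZeta₀_le p)

lemma rpow_average_mul_thetaTail {x : ℝ} (hx : 0 < x) (p : ℝ) :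
    (x ^ (p / 2 - 1) * thetaTail x + x ^ ((1 - p) / 2 - 1) * thetaTail x) / 2 =
      x ^ (-3 / 4 : ℝ) * thetaTail x * Real.cosh ((p - 1 / 2) / 2 * Real.log x) := by
  have h₁ : x ^ (p / 2 - 1) = x ^ (-3 / 4 : ℝ) * Real.exp ((p - 1 / 2) / 2 * Real.log x) := by
    rw [Real.rpow_def_of_pos hx, Real.rpow_def_of_pos hx, ← Real.exp_add]
    ring_nf
  have h₂ : x ^ ((1 - p) / 2 - 1) =
      x ^ (-3 / 4 : ℝ) * Real.exp (-((p - 1 / 2) / 2 * Real.log x)) := by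
    rw [Real.rpow_def_of_pos hx, Real.rpow_def_of_pos hx, ← Real.exp_add]
    ring_nf
  rw [h₁, h₂, Real.cosh_eq]
  ring

lemma integrableOn_thetaTail_mul_cosh (p : ℝ) :
    IntegrableOn (fun x : ℝ ↦ x ^ (-3 / 4 : ℝ) * thetaTail x *
      Real.cosh ((p - 1 / 2) / 2 * Real.log x)) (Ioi 1) :=
  IntegrableOn.congr_fun (((integrableOn_rpow_mul_thetaTail (p / 2 - 1)).add
    (integrableOn_rpow_mul_thetaTail ((1 - p) / 2 - 1))).div_const 2)
    (fun _ hx ↦ rpow_average_mul_thetaTail (zero_lt_one.trans hx) p) measurableSet_Ioi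

lemma realZeta₀_eq_integral_cosh (p : ℝ) : realZeta₀ p = ∫ x in Ioi (1 : ℝ),
    x ^ (-3 / 4 : ℝ) * thetaTail x * Real.cosh ((p - 1 / 2) / 2 * Real.log x) := by
  rw [realZeta₀_eq_thetaMellin, thetaMellin_ofReal, thetaMellin_ofReal, ofReal_re, ofReal_re,
    ← integral_add (integrableOn_rpow_mul_thetaTail _) (integrableOn_rpow_mul_thetaTail _),
    ← integral_div]
  exact setIntegral_congr_fun measurableSet_Ioi
    fun x hx ↦ rpow_average_mul_thetaTail (zero_lt_one.trans hx) p

lemma realZeta₀_mono {p q : ℝ} (h : |p - 1 / 2| ≤ |q - 1 / 2|) : realZeta₀ p ≤ realZeta₀ q := by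
  rw [realZeta₀_eq_integral_cosh, realZeta₀_eq_integral_cosh]
  refine setIntegral_mono_on (integrableOn_thetaTail_mul_cosh p)
    (integrableOn_thetaTail_mul_cosh q) measurableSet_Ioi fun x hx ↦ ?_
  have hx0 : 0 < x := zero_lt_one.trans hx
  have weight_nonneg : 0 ≤ x ^ (-3 / 4 : ℝ) * thetaTail x :=
    mul_nonneg (Real.rpow_nonneg hx0.le _) (thetaTail_nonneg hx0)
  gcongr
  rw [Real.cosh_le_cosh, abs_mul, abs_mul, abs_div, abs_div]
  gcongr

lemma convexOn_cosh : ConvexOn ℝ univ Real.cosh := by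
  refine ⟨convex_univ, fun u _ v _ a b ha hb hab ↦ ?_⟩
  have h₁ := convexOn_exp.2 (mem_univ u) (mem_univ v) ha hb hab
  have h₂ := convexOn_exp.2 (mem_univ (-u)) (mem_univ (-v)) ha hb hab
  simp only [smul_eq_mul] at h₁ h₂ ⊢
  rw [Real.cosh_eq, Real.cosh_eq, Real.cosh_eq, show -(a * u + b * v) = a * -u + b * -v by ring]
  linarith

lemma convexOn_realZeta₀ : ConvexOn ℝ univ realZeta₀ := by
  refine ⟨convex_univ, fun p _ q _ a b ha hb hab ↦ ?_⟩
  simp only [smul_eq_mul, realZeta₀_eq_integral_cosh]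
  rw [← integral_const_mul, ← integral_const_mul,
    ← integral_add ((integrableOn_thetaTail_mul_cosh p).const_mul a)
      ((integrableOn_thetaTail_mul_cosh q).const_mul b)]
  refine setIntegral_mono_on (integrableOn_thetaTail_mul_cosh _)
    (((integrableOn_thetaTail_mul_cosh p).const_mul a).add
      ((integrableOn_thetaTail_mul_cosh q).const_mul b)) measurableSet_Ioi fun x hx ↦ ?_
  have hx0 : 0 < x := zero_lt_one.trans hx
  have weight_nonneg : 0 ≤ x ^ (-3 / 4 : ℝ) * thetaTail x :=
    mul_nonneg (Real.rpow_nonneg hx0.le _) (thetaTail_nonneg hx0)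
  have cosh_convex := convexOn_cosh.2 (mem_univ ((p - 1 / 2) / 2 * Real.log x))
    (mem_univ ((q - 1 / 2) / 2 * Real.log x)) ha hb hab
  simp only [smul_eq_mul] at cosh_convex
  have argument_eq : (a * p + b * q - 1 / 2) / 2 * Real.log x =
      a * ((p - 1 / 2) / 2 * Real.log x) + b * ((q - 1 / 2) / 2 * Real.log x) := by
    linear_combination (1 / 4) * Real.log x * hab
  rw [argument_eq]
  exact (mul_le_mul_of_nonneg_left cosh_convex weight_nonneg).trans_eq (by ring)

/-! ### The entire function `s (s - 1) ξ(s)` -/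

/-- The entire function `s (s - 1) ξ(s)` (twice Riemann's original `ξ`), written in terms of
`completedRiemannZeta₀` so that it has its correct values `1` at the removable singularities
`0` and `1`. -/
noncomputable def entireXi (s : ℂ) : ℂ := 1 + s * (s - 1) * completedRiemannZeta₀ s

lemma entireXi_one_sub (s : ℂ) : entireXi (1 - s) = entireXi s := by
  rw [entireXi, entireXi, completedRiemannZeta₀_one_sub]
  ring

lemma entireXi_conj (s : ℂ) : entireXi (conj s) = conj (entireXi s) := by
  simp [entireXi, completedRiemannZeta₀_conj]

lemma entireXi_zero : entireXi 0 = 1 := by simp [entireXi]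

lemma entireXi_one : entireXi 1 = 1 := by simp [entireXi]

@[fun_prop]
lemma differentiable_entireXi : Differentiable ℂ entireXi := by
  have := differentiable_completedZeta₀
  unfold entireXi
  fun_prop

lemma entireXi_eq {s : ℂ} (h₀ : s ≠ 0) (h₁ : s ≠ 1) :
    entireXi s = s * (s - 1) * completedRiemannZeta s := by
  have : 1 - s ≠ 0 := sub_ne_zero.mpr h₁.symm
  rw [completedRiemannZeta_eq, entireXi]
  field_simp
  ring

lemma norm_entireXi_le (s : ℂ) : ‖entireXi s‖ ≤ 1 + ‖s‖ * ‖s - 1‖ * realZeta₀ s.re := by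
  refine (norm_add_le _ _).trans ?_
  rw [norm_one, norm_mul, norm_mul]
  gcongr
  exact norm_completedRiemannZeta₀_le s

lemma entireXi_ofReal (p : ℝ) : entireXi p = ((1 + p * (p - 1) * realZeta₀ p : ℝ) : ℂ) := by
  rw [entireXi, ← ofReal_realZeta₀]
  push_cast
  ring

lemma entireXi_ne_zero {s : ℂ} (hs : 1 ≤ s.re) : entireXi s ≠ 0 := by
  rcases eq_or_ne s 1 with rfl | h₁
  · simp [entireXi_one]
  have h₀ : s ≠ 0 := by
    rintro rfl
    norm_num at hs
  have zeta_ne := riemannZeta_ne_zero_of_one_le_re hs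
  rw [riemannZeta_def_of_ne_zero h₀] at zeta_ne
  rw [entireXi_eq h₀ h₁]
  exact mul_ne_zero (mul_ne_zero h₀ (sub_ne_zero.mpr h₁)) (div_ne_zero_iff.mp zeta_ne).1

/-! ### A lower bound for `entireXi` to the right of the critical strip -/

/-- The value `ζ(σ)`, as a sum of norms: it dominates every Dirichlet series with coefficients
bounded by `1` on the half-plane `Re s ≥ σ`. -/
noncomputable def zetaMajorant (σ : ℝ) : ℝ := ∑' n, ‖LSeries.term 1 (σ : ℂ) n‖

lemma norm_LSeries_le_zetaMajorant {f : ℕ → ℂ} (hf : ∀ n, ‖f n‖ ≤ 1) {σ : ℝ} (hσ : 1 < σ) {s : ℂ}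
    (hs : σ ≤ s.re) : ‖LSeries f s‖ ≤ zetaMajorant σ := by
  have summable : LSeriesSummable 1 (σ : ℂ) := LSeriesSummable_one_iff.mpr (by simpa using hσ)
  refine tsum_of_norm_bounded summable.norm.hasSum fun n ↦ ?_
  exact (LSeries.norm_term_le s (g := 1) (by simpa using hf n)).trans
    (LSeries.norm_term_le_of_re_le_re 1 (by simpa using hs) n)

lemma norm_riemannZeta_le {σ : ℝ} (hσ : 1 < σ) {s : ℂ} (hs : σ ≤ s.re) :
    ‖riemannZeta s‖ ≤ zetaMajorant σ := by
  rw [← ArithmeticFunction.LSeries_zeta_eq_riemannZeta (hσ.trans_le hs)]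
  refine norm_LSeries_le_zetaMajorant (fun n ↦ ?_) hσ hs
  by_cases hn : n = 0 <;> simp [hn]

lemma one_le_norm_riemannZeta_mul {σ : ℝ} (hσ : 1 < σ) {s : ℂ} (hs : σ ≤ s.re) :
    1 ≤ ‖riemannZeta s‖ * zetaMajorant σ := by
  have hs₁ : 1 < s.re := hσ.trans_le hs
  have moebius_le : ‖LSeries (fun n ↦ ((ArithmeticFunction.moebius n : ℤ) : ℂ)) s‖ ≤
      zetaMajorant σ := by
    refine norm_LSeries_le_zetaMajorant (fun n ↦ ?_) hσ hs
    rw [norm_intCast]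
    exact_mod_cast ArithmeticFunction.abs_moebius_le_one
  have inversion := congrArg norm (ArithmeticFunction.LSeries_zeta_mul_Lseries_moebius hs₁)
  rw [ArithmeticFunction.LSeries_zeta_eq_riemannZeta hs₁, norm_mul, norm_one] at inversion
  rw [← inversion]
  gcongr

lemma zetaMajorant_nonneg (σ : ℝ) : 0 ≤ zetaMajorant σ := tsum_nonneg fun _ ↦ norm_nonneg _

lemma cosh_le_exp_abs (y : ℝ) : Real.cosh y ≤ Real.exp |y| := by
  have : Real.exp (-|y|) ≤ Real.exp |y| := Real.exp_le_exp.mpr (neg_le_self (abs_nonneg y))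
  rw [← Real.cosh_abs, Real.cosh_eq]
  linarith

lemma normSq_Gamma_half_add_mul_I (y : ℝ) :
    normSq (Gamma (1 / 2 + y * I)) = π / Real.cosh (π * y) := by
  set s : ℂ := 1 / 2 + y * I
  have reflection := Gamma_mul_Gamma_one_sub s
  have one_sub_eq : 1 - s = conj s := by
    simp only [s, map_add, map_mul, conj_ofReal, conj_I, map_div₀, map_one, map_ofNat]
    ring
  have sin_eq : sin (π * s) = (Real.cosh (π * y) : ℂ) := by
    rw [show (π : ℂ) * s = π / 2 - (-(π * y)) * I by simp only [s]; ring, sin_pi_div_two_sub,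
      cos_mul_I, ofReal_cosh, cosh_neg]
    push_cast
    rfl
  rw [one_sub_eq, Gamma_conj, mul_conj, sin_eq, ← ofReal_div] at reflection
  exact_mod_cast reflection

lemma sqrt_pi_mul_exp_le_norm_Gamma (y : ℝ) :
    √π * Real.exp (-(π * |y| / 2)) ≤ ‖Gamma (1 / 2 + y * I)‖ := by
  have cosh_le : Real.cosh (π * y) ≤ Real.exp (π * |y|) := by
    simpa [abs_mul, abs_of_pos Real.pi_pos] using cosh_le_exp_abs (π * y)
  refine le_of_sq_le_sq ?_ (norm_nonneg _)
  rw [← normSq_eq_norm_sq, normSq_Gamma_half_add_mul_I, mul_pow, Real.sq_sqrt Real.pi_pos.le,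
    ← Real.exp_nat_mul, show ((2 : ℕ) : ℝ) * -(π * |y| / 2) = -(π * |y|) by push_cast; ring,
    Real.exp_neg, div_eq_mul_inv]
  gcongr

lemma norm_betaIntegral_le (u v : ℂ) : ‖betaIntegral u v‖ ≤ ‖betaIntegral u.re v.re‖ := by
  set g : ℝ → ℝ := fun x ↦ x ^ (u.re - 1) * (1 - x) ^ (v.re - 1)
  have betaIntegral_re : betaIntegral u.re v.re = ((∫ x in (0 : ℝ)..1, g x : ℝ) : ℂ) := by
    rw [← intervalIntegral.integral_ofReal, betaIntegral]
    refine intervalIntegral.integral_congr fun x hx ↦ ?_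
    rw [uIcc_of_le zero_le_one] at hx
    simp only [g]
    rw [ofReal_mul, ofReal_cpow hx.1, ofReal_cpow (sub_nonneg.mpr hx.2)]
    push_cast
    rfl
  rw [betaIntegral_re, norm_real]
  refine le_trans ?_ (le_abs_self _)
  refine (intervalIntegral.norm_integral_le_integral_norm zero_le_one).trans_eq ?_
  rw [intervalIntegral.integral_of_le zero_le_one, intervalIntegral.integral_of_le zero_le_one,
    integral_Ioc_eq_integral_Ioo, integral_Ioc_eq_integral_Ioo]
  refine setIntegral_congr_fun measurableSet_Ioo fun x hx ↦ ?_
  simp only [g]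
  rw [norm_mul, norm_cpow_eq_rpow_re_of_pos hx.1, show (1 - (x : ℂ)) = ((1 - x : ℝ) : ℂ) by simp,
    norm_cpow_eq_rpow_re_of_pos (sub_pos.mpr hx.2), sub_re, sub_re, one_re]

-- Writing both `Γ(u)` and `Γ(Re u)` through beta integrals reduces the bound to `Re u = 1/2`,
-- where the reflection formula gives the modulus of `Γ` exactly.
lemma Gamma_re_mul_exp_le_norm_Gamma {u : ℂ} (hu : 1 / 2 < u.re) :
    Real.Gamma u.re * Real.exp (-(π * |u.im| / 2)) ≤ ‖Gamma u‖ := by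
  set a := u.re - 1 / 2 with ha
  have ha₀ : 0 < a := sub_pos.mpr hu
  have Gamma_a_pos : 0 < Real.Gamma a := Real.Gamma_pos_of_pos ha₀
  have Gamma_re_pos : 0 < Real.Gamma u.re := Real.Gamma_pos_of_pos (by linarith)
  have beta_u := congrArg norm (Gamma_mul_Gamma_eq_betaIntegral (s := 1 / 2 + u.im * I)
    (t := (a : ℂ)) (by simp) (by simpa))
  have beta_re := congrArg norm (Gamma_mul_Gamma_eq_betaIntegral (s := 1 / 2) (t := (a : ℂ))
    (by simp) (by simpa))
  have norm_sqrt : ‖(π : ℂ) ^ (1 / 2 : ℂ)‖ = √π := by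
    rw [norm_cpow_eq_rpow_re_of_pos Real.pi_pos, Real.sqrt_eq_rpow]
    simp
  rw [show (1 / 2 + u.im * I : ℂ) + a = u by apply Complex.ext <;> simp [ha], norm_mul, norm_mul,
    Gamma_ofReal, norm_real, Real.norm_of_nonneg Gamma_a_pos.le] at beta_u
  rw [show (1 / 2 : ℂ) + a = u.re by simp [ha], norm_mul, norm_mul, Gamma_one_half_eq, norm_sqrt,
    Gamma_ofReal, Gamma_ofReal, norm_real, norm_real, Real.norm_of_nonneg Gamma_a_pos.le,
    Real.norm_of_nonneg Gamma_re_pos.le] at beta_re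
  have beta_le : ‖betaIntegral (1 / 2 + u.im * I) a‖ ≤ ‖betaIntegral (1 / 2) a‖ := by
    simpa using norm_betaIntegral_le (1 / 2 + u.im * I) a
  have half_le := sqrt_pi_mul_exp_le_norm_Gamma u.im
  have h_scaled : √π * Real.Gamma a * (Real.Gamma u.re * Real.exp (-(π * |u.im| / 2))) ≤
      √π * Real.Gamma a * ‖Gamma u‖ := by
    calc _ = Real.Gamma u.re * Real.Gamma a * (√π * Real.exp (-(π * |u.im| / 2))) := by ring
      _ ≤ Real.Gamma u.re * Real.Gamma a * ‖Gamma (1 / 2 + u.im * I)‖ := by gcongr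
      _ = Real.Gamma u.re * (‖Gamma u‖ * ‖betaIntegral (1 / 2 + u.im * I) a‖) := by
        rw [← beta_u]; ring
      _ ≤ Real.Gamma u.re * (‖Gamma u‖ * ‖betaIntegral (1 / 2) a‖) := by gcongr
      _ = ‖Gamma u‖ * (Real.Gamma u.re * ‖betaIntegral (1 / 2) a‖) := by ring
      _ = _ := by rw [← beta_re]; ring
  exact le_of_mul_le_mul_left h_scaled (mul_pos (Real.sqrt_pos.mpr Real.pi_pos) Gamma_a_pos)

lemma norm_entireXi_eq {s : ℂ} (hs : 1 < s.re) :
    ‖entireXi s‖ = ‖s‖ * ‖s - 1‖ * (π ^ (-s.re / 2) * ‖Gamma (s / 2)‖ * ‖riemannZeta s‖) := by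
  have h₀ : s ≠ 0 := by
    rintro rfl
    norm_num at hs
  have h₁ : s ≠ 1 := by
    rintro rfl
    norm_num at hs
  have completed_eq : completedRiemannZeta s = Gammaℝ s * riemannZeta s := by
    have := Gammaℝ_ne_zero_of_re_pos (zero_lt_one.trans hs)
    rw [riemannZeta_def_of_ne_zero h₀]
    field_simp
  rw [entireXi_eq h₀ h₁, completed_eq, Gammaℝ_def, norm_mul, norm_mul, norm_mul, norm_mul,
    norm_cpow_eq_rpow_re_of_pos Real.pi_pos, div_ofNat_re, neg_re]

lemma one_add_mul_realZeta₀_eq {x : ℝ} (hx : 1 < x) : 1 + x * (x - 1) * realZeta₀ x =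
    x * (x - 1) * (π ^ (-x / 2) * Real.Gamma (x / 2) * ‖riemannZeta x‖) := by
  have hx₁ : 0 < x - 1 := sub_pos.mpr hx
  have Gamma_pos : 0 < Real.Gamma (x / 2) := Real.Gamma_pos_of_pos (by linarith)
  have zeta_nonneg := realZeta₀_nonneg x
  have norm_eq := norm_entireXi_eq (s := x) (by simpa using hx)
  rw [entireXi_ofReal, show (x : ℂ) - 1 = (x - 1 : ℝ) by simp,
    show (x : ℂ) / 2 = (x / 2 : ℝ) by simp, Gamma_ofReal, norm_real, norm_real, norm_real,
    norm_real, Real.norm_of_nonneg (by positivity), Real.norm_of_nonneg (by positivity),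
    Real.norm_of_nonneg hx₁.le, Real.norm_of_nonneg Gamma_pos.le, ofReal_re] at norm_eq
  exact norm_eq

lemma one_add_mul_realZeta₀_le {σ x N : ℝ} (hσ : 1 < σ) (hx : σ ≤ x) (hN : x * (x - 1) ≤ N) :
    1 + N * realZeta₀ x ≤ N * (π ^ (-x / 2) * Real.Gamma (x / 2) * zetaMajorant σ) := by
  have hx₁ : 1 < x := hσ.trans_le hx
  have hc : 0 < x * (x - 1) := mul_pos (by linarith) (by linarith)
  set Q := π ^ (-x / 2) * Real.Gamma (x / 2) * zetaMajorant σ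
  have at_c : 1 + x * (x - 1) * realZeta₀ x ≤ x * (x - 1) * Q := by
    rw [one_add_mul_realZeta₀_eq hx₁]
    refine mul_le_mul_of_nonneg_left (mul_le_mul_of_nonneg_left ?_ (by positivity)) hc.le
    exact norm_riemannZeta_le (s := (x : ℂ)) hσ (by simpa using hx)
  have inv_le : (x * (x - 1))⁻¹ ≤ Q - realZeta₀ x := by
    rw [inv_le_iff_one_le_mul₀' hc]
    linarith
  have one_le : 1 ≤ N * (x * (x - 1))⁻¹ := by
    rwa [← div_eq_mul_inv, one_le_div hc]
  nlinarith [mul_le_mul_of_nonneg_left inv_le (hc.le.trans hN)]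

lemma one_add_mul_exp_le_norm_entireXi {σ : ℝ} (hσ : 1 < σ) {s : ℂ} (hs : σ ≤ s.re) :
    (1 + ‖s‖ * ‖s - 1‖ * realZeta₀ s.re) * Real.exp (-(π * |s.im| / 4)) ≤
      zetaMajorant σ ^ 2 * ‖entireXi s‖ := by
  have hs₁ : 1 < s.re := hσ.trans_le hs
  have re_prod_le : s.re * (s.re - 1) ≤ ‖s‖ * ‖s - 1‖ := by
    have : s.re - 1 ≤ ‖s - 1‖ := by simpa using re_le_norm (s - 1)
    exact mul_le_mul (re_le_norm s) this (by linarith) (norm_nonneg _)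
  have Gamma_le := Gamma_re_mul_exp_le_norm_Gamma (u := s / 2) (by rw [div_ofNat_re]; linarith)
  rw [div_ofNat_re, div_ofNat_im, abs_div, abs_two,
    show π * (|s.im| / 2) / 2 = π * |s.im| / 4 by ring] at Gamma_le
  have zeta_ge := one_le_norm_riemannZeta_mul hσ hs
  have := zetaMajorant_nonneg σ
  rw [norm_entireXi_eq hs₁]
  set N := ‖s‖ * ‖s - 1‖
  set P := π ^ (-s.re / 2)
  set Z := zetaMajorant σ
  calc (1 + N * realZeta₀ s.re) * Real.exp (-(π * |s.im| / 4))
      ≤ N * (P * Real.Gamma (s.re / 2) * Z) * Real.exp (-(π * |s.im| / 4)) := by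
        gcongr
        exact one_add_mul_realZeta₀_le hσ hs re_prod_le
    _ = N * Z * P * (Real.Gamma (s.re / 2) * Real.exp (-(π * |s.im| / 4))) * 1 := by ring
    _ ≤ N * Z * P * ‖Gamma (s / 2)‖ * (‖riemannZeta s‖ * Z) := by gcongr
    _ = _ := by ring

/-! ### Shifting `entireXi` to the right increases its modulus -/

lemma norm_le_norm_of_re_sq_le {u v : ℂ} (him : u.im = v.im) (hre : u.re ^ 2 ≤ v.re ^ 2) :
    ‖u‖ ≤ ‖v‖ := by
  rw [← sq_le_sq₀ (norm_nonneg _) (norm_nonneg _), ← normSq_eq_norm_sq, ← normSq_eq_norm_sq,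
    normSq_apply, normSq_apply, him]
  linarith

lemma norm_entireXi_le_exp_mul {c : ℝ} (hc : 1 < c) {w : ℂ} (hw : (1 - c) / 2 ≤ w.re) :
    ‖entireXi w‖ ≤
      zetaMajorant ((1 + c) / 2) ^ 2 * Real.exp (π * |w.im| / 4) * ‖entireXi (w + c)‖ := by
  have shifted := one_add_mul_exp_le_norm_entireXi (σ := (1 + c) / 2) (by linarith)
    (s := w + c) (by rw [add_re, ofReal_re]; linarith)
  rw [add_re, add_im, ofReal_re, ofReal_im, add_zero, Real.exp_neg, ← div_eq_mul_inv,
    div_le_iff₀ (Real.exp_pos _)] at shifted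
  have zeta_le : realZeta₀ w.re ≤ realZeta₀ (w.re + c) := by
    refine realZeta₀_mono ?_
    rw [abs_of_nonneg (by linarith : 0 ≤ w.re + c - 1 / 2), abs_le]
    constructor <;> linarith
  have norm_sub_one_le : ‖w - 1‖ ≤ ‖w + c‖ :=
    norm_le_norm_of_re_sq_le (by simp) (by simp only [sub_re, one_re, add_re, ofReal_re]; nlinarith)
  have norm_le : ‖w‖ ≤ ‖w + c - 1‖ :=
    norm_le_norm_of_re_sq_le (by simp) (by simp only [sub_re, one_re, add_re, ofReal_re]; nlinarith)
  have := realZeta₀_nonneg w.re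
  calc ‖entireXi w‖ ≤ 1 + ‖w - 1‖ * ‖w‖ * realZeta₀ w.re :=
        (norm_entireXi_le w).trans_eq (by ring)
    _ ≤ 1 + ‖w + c‖ * ‖w + c - 1‖ * realZeta₀ (w.re + c) := by gcongr
    _ ≤ _ := shifted.trans_eq (by ring)

/-- The quotient `entireXi w / entireXi (w + c)` recentred at `w = (1 - c) / 2`, so that the
functional equation makes it unimodular on the imaginary axis. -/
noncomputable def shiftQuotient (c : ℝ) (z : ℂ) : ℂ :=
  entireXi (((1 - c) / 2 : ℝ) + z) / entireXi (((1 + c) / 2 : ℝ) + z)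

lemma entireXi_add_ne_zero {c : ℝ} (hc : 1 < c) {z : ℂ} (hz : 0 ≤ z.re) :
    entireXi (((1 + c) / 2 : ℝ) + z) ≠ 0 :=
  entireXi_ne_zero (by rw [add_re, ofReal_re]; linarith)

lemma norm_shiftQuotient_le_exp {c : ℝ} (hc : 1 < c) {z : ℂ} (hz : 0 ≤ z.re) :
    ‖shiftQuotient c z‖ ≤ zetaMajorant ((1 + c) / 2) ^ 2 * Real.exp (π * |z.im| / 4) := by
  rw [shiftQuotient, norm_div, div_le_iff₀ (norm_pos_iff.mpr (entireXi_add_ne_zero hc hz))]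
  have h := norm_entireXi_le_exp_mul hc (w := ((1 - c) / 2 : ℝ) + z)
    (by rw [add_re, ofReal_re]; linarith)
  rw [show (((1 - c) / 2 : ℝ) : ℂ) + z + c = ((1 + c) / 2 : ℝ) + z by push_cast; ring] at h
  simpa using h

lemma norm_shiftQuotient_mul_I_le (c y : ℝ) : ‖shiftQuotient c (y * I)‖ ≤ 1 := by
  rw [shiftQuotient, norm_div]
  refine div_le_one_of_le₀ (le_of_eq ?_) (norm_nonneg _)
  rw [← entireXi_one_sub, ← norm_conj, ← entireXi_conj]
  congr 2
  simp only [map_sub, map_add, map_one, conj_ofReal, map_mul, conj_I]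
  push_cast
  ring

lemma diffContOnCl_of_differentiableAt_re_nonneg {f : ℂ → ℂ}
    (hf : ∀ z : ℂ, 0 ≤ z.re → DifferentiableAt ℂ f z) : DiffContOnCl ℂ f {z | 0 < z.re} := by
  refine DifferentiableOn.diffContOnCl ?_
  rw [show closure {z : ℂ | 0 < z.re} = {z | 0 ≤ z.re} from closure_setOfPred_lt_re 0]
  exact fun z hz ↦ (hf z hz).differentiableWithinAt

lemma norm_shiftQuotient_le_one {c : ℝ} (hc : 1 < c) {z : ℂ} (hz : 0 ≤ z.re) :
    ‖shiftQuotient c z‖ ≤ 1 := by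
  refine PhragmenLindelof.right_half_plane_of_bounded_on_real (C := 1) ?_ ?_ ?_
    (norm_shiftQuotient_mul_I_le c) hz
  · refine diffContOnCl_of_differentiableAt_re_nonneg fun z hz ↦ ?_
    unfold shiftQuotient
    exact DifferentiableAt.div (by fun_prop) (by fun_prop) (entireXi_add_ne_zero hc hz)
  · refine ⟨1, by norm_num, π / 4, IsBigO.of_bound (zetaMajorant ((1 + c) / 2) ^ 2) ?_⟩
    refine eventually_inf_principal.mpr (Eventually.of_forall fun z hz ↦ ?_)
    refine (norm_shiftQuotient_le_exp hc (le_of_lt hz)).trans ?_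
    rw [Real.norm_of_nonneg (Real.exp_pos _).le, Real.rpow_one, div_mul_eq_mul_div]
    gcongr
    exact abs_im_le_norm z
  · refine ⟨zetaMajorant ((1 + c) / 2) ^ 2, ?_⟩
    rw [eventually_map]
    filter_upwards [eventually_ge_atTop 0] with x hx
    simpa using norm_shiftQuotient_le_exp hc (z := x) (by simpa using hx)

lemma norm_entireXi_le_norm_add {c : ℝ} (hc : 1 < c) {w : ℂ} (hw : (1 - c) / 2 ≤ w.re) :
    ‖entireXi w‖ ≤ ‖entireXi (w + c)‖ := by
  have hz : 0 ≤ (w - ((1 - c) / 2 : ℝ)).re := by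
    rw [sub_re, ofReal_re]
    linarith
  have h := norm_shiftQuotient_le_one hc hz
  rwa [shiftQuotient, norm_div, div_le_one₀ (norm_pos_iff.mpr (entireXi_add_ne_zero hc hz)),
    add_sub_cancel, show (((1 + c) / 2 : ℝ) : ℂ) + (w - ((1 - c) / 2 : ℝ)) = w + c by
      push_cast; ring] at h

lemma norm_entireXi_le_norm_add_one {w : ℂ} (hw : 0 ≤ w.re) :
    ‖entireXi w‖ ≤ ‖entireXi (w + 1)‖ := by
  have hcont : Continuous fun c : ℝ ↦ ‖entireXi (w + c)‖ := by
    have := differentiable_entireXi.continuous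
    fun_prop
  have htendsto : Tendsto (fun c : ℝ ↦ ‖entireXi (w + c)‖) (𝓝[>] 1) (𝓝 ‖entireXi (w + 1)‖) := by
    simpa using (hcont.tendsto 1).mono_left nhdsWithin_le_nhds
  refine ge_of_tendsto htendsto ?_
  filter_upwards [self_mem_nhdsWithin] with c hc
  exact norm_entireXi_le_norm_add hc (by linarith [mem_Ioi.mp hc])

/-! ### Bounded functions on the right half-plane -/

lemma one_sub_conj_mul_ne_zero {a z : ℂ} (ha : ‖a‖ < 1) (hz : ‖z‖ ≤ 1) : 1 - conj a * z ≠ 0 := by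
  intro h
  have norm_eq := congrArg norm (sub_eq_zero.mp h)
  rw [norm_one, norm_mul, norm_conj] at norm_eq
  nlinarith [norm_nonneg z, norm_nonneg a]

lemma norm_sub_le_norm_one_sub_conj_mul {a z : ℂ} (ha : ‖a‖ ≤ 1) (hz : ‖z‖ ≤ 1) :
    ‖z - a‖ ≤ ‖1 - conj a * z‖ := by
  have normSq_le {u : ℂ} (hu : ‖u‖ ≤ 1) : u.re * u.re + u.im * u.im ≤ 1 := by
    rw [← normSq_apply, normSq_eq_norm_sq]
    exact pow_le_one₀ (norm_nonneg u) hu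
  rw [← sq_le_sq₀ (norm_nonneg _) (norm_nonneg _), ← normSq_eq_norm_sq, ← normSq_eq_norm_sq,
    normSq_apply, normSq_apply]
  simp only [sub_re, sub_im, mul_re, mul_im, conj_re, conj_im, one_re, one_im]
  nlinarith [mul_nonneg (sub_nonneg.mpr (normSq_le ha)) (sub_nonneg.mpr (normSq_le hz))]

lemma norm_sub_lt_norm_add_conj {w₀ w : ℂ} (hw₀ : 0 < w₀.re) (hw : 0 < w.re) :
    ‖w - w₀‖ < ‖w + conj w₀‖ := by
  rw [← sq_lt_sq₀ (norm_nonneg _) (norm_nonneg _), ← normSq_eq_norm_sq, ← normSq_eq_norm_sq,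
    normSq_apply, normSq_apply]
  simp only [sub_re, sub_im, add_re, add_im, conj_re, conj_im]
  nlinarith

/-- The Möbius map from the unit disc to the right half-plane sending `0` to `w₀`. -/
noncomputable def discToHalfPlane (w₀ ζ : ℂ) : ℂ := (w₀ + conj w₀ * ζ) / (1 - ζ)

lemma one_sub_ne_zero_of_norm_lt_one {ζ : ℂ} (hζ : ‖ζ‖ < 1) : 1 - ζ ≠ 0 :=
  sub_ne_zero.mpr fun h ↦ by simp [← h] at hζ

lemma discToHalfPlane_re_pos {w₀ ζ : ℂ} (hw₀ : 0 < w₀.re) (hζ : ‖ζ‖ < 1) :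
    0 < (discToHalfPlane w₀ ζ).re := by
  have hn : ζ.re * ζ.re + ζ.im * ζ.im < 1 := by
    rw [← normSq_apply, normSq_eq_norm_sq]
    exact pow_lt_one₀ (norm_nonneg ζ) hζ two_ne_zero
  rw [discToHalfPlane, div_re, ← add_div]
  refine div_pos ?_ (normSq_pos.mpr (one_sub_ne_zero_of_norm_lt_one hζ))
  simp only [add_re, add_im, sub_re, sub_im, mul_re, mul_im, conj_re, conj_im, one_re, one_im]
  nlinarith

lemma differentiableAt_discToHalfPlane (w₀ : ℂ) {ζ : ℂ} (hζ : ‖ζ‖ < 1) :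
    DifferentiableAt ℂ (discToHalfPlane w₀) ζ :=
  DifferentiableAt.div (by fun_prop) (by fun_prop) (one_sub_ne_zero_of_norm_lt_one hζ)

lemma discToHalfPlane_div {w₀ w : ℂ} (hw₀ : 0 < w₀.re) (hw : 0 < w.re) :
    discToHalfPlane w₀ ((w - w₀) / (w + conj w₀)) = w := by
  have hlt := norm_sub_lt_norm_add_conj hw₀ hw
  have hpos : 0 < ‖w + conj w₀‖ := (norm_nonneg _).trans_lt hlt
  have hne : w + conj w₀ ≠ 0 := norm_pos_iff.mp hpos
  have hζ : ‖(w - w₀) / (w + conj w₀)‖ < 1 := by rwa [norm_div, div_lt_one hpos]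
  rw [discToHalfPlane, div_eq_iff (one_sub_ne_zero_of_norm_lt_one hζ)]
  field_simp
  ring

lemma schwarzPick_rightHalfPlane {h : ℂ → ℂ}
    (hd : ∀ z : ℂ, 0 < z.re → DifferentiableAt ℂ h z) (hb : ∀ z : ℂ, 0 < z.re → ‖h z‖ ≤ 1)
    {w₀ w : ℂ} (hw₀ : 0 < w₀.re) (hw : 0 < w.re) (hlt : ‖h w₀‖ < 1) :
    ‖h w - h w₀‖ * ‖w + conj w₀‖ ≤ ‖w - w₀‖ * ‖1 - conj (h w₀) * h w‖ := by
  set g : ℂ → ℂ := fun ζ ↦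
    (h (discToHalfPlane w₀ ζ) - h w₀) / (1 - conj (h w₀) * h (discToHalfPlane w₀ ζ))
  have g_zero : g 0 = 0 := by simp [g, discToHalfPlane]
  have norm_h_le {ζ : ℂ} (hζ : ζ ∈ Metric.ball (0 : ℂ) 1) : ‖h (discToHalfPlane w₀ ζ)‖ ≤ 1 :=
    hb _ (discToHalfPlane_re_pos hw₀ (mem_ball_zero_iff.mp hζ))
  have g_diff : DifferentiableOn ℂ g (Metric.ball 0 1) := fun ζ hζ ↦ by
    have hζ' := mem_ball_zero_iff.mp hζ
    have hcomp : DifferentiableAt ℂ (fun ζ ↦ h (discToHalfPlane w₀ ζ)) ζ :=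
      (hd _ (discToHalfPlane_re_pos hw₀ hζ')).comp ζ (differentiableAt_discToHalfPlane w₀ hζ')
    exact ((hcomp.sub_const _).div ((hcomp.const_mul _).const_sub _)
      (one_sub_conj_mul_ne_zero hlt (norm_h_le hζ))).differentiableWithinAt
  have g_maps : MapsTo g (Metric.ball 0 1) (Metric.closedBall 0 1) := fun ζ hζ ↦ by
    rw [mem_closedBall_zero_iff, norm_div]
    exact div_le_one_of_le₀ (norm_sub_le_norm_one_sub_conj_mul hlt.le (norm_h_le hζ))
      (norm_nonneg _)
  have hlt_add := norm_sub_lt_norm_add_conj hw₀ hw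
  have hpos : 0 < ‖w + conj w₀‖ := (norm_nonneg _).trans_lt hlt_add
  have schwarz := norm_le_norm_of_mapsTo_ball g_diff g_maps g_zero
    (z := (w - w₀) / (w + conj w₀)) (by rwa [norm_div, div_lt_one hpos])
  simp only [g, discToHalfPlane_div hw₀ hw, norm_div] at schwarz
  rwa [div_le_div_iff₀ (norm_pos_iff.mpr (one_sub_conj_mul_ne_zero hlt (hb w hw))) hpos] at schwarz

lemma re_nonneg_of_re_mul_I_nonneg {k : ℂ → ℂ} (hd : DiffContOnCl ℂ k {z | 0 < z.re}) {B : ℝ}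
    (hB : ∀ z : ℂ, 0 ≤ z.re → ‖k z‖ ≤ B) (hl : ∀ y : ℝ, 0 ≤ (k (y * I)).re) {z : ℂ}
    (hz : 0 ≤ z.re) : 0 ≤ (k z).re := by
  have exp_le (z : ℂ) (hz : 0 ≤ z.re) : ‖exp (-k z)‖ ≤ Real.exp B := by
    rw [norm_exp, Real.exp_le_exp, neg_re]
    exact (neg_le_abs _).trans ((abs_re_le_norm _).trans (hB z hz))
  suffices ‖exp (-k z)‖ ≤ 1 by simpa [norm_exp] using this
  refine PhragmenLindelof.right_half_plane_of_bounded_on_real (f := fun z ↦ exp (-k z)) (C := 1)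
    ⟨hd.1.neg.cexp, hd.2.neg.cexp⟩ ⟨1, one_lt_two, 0, ?_⟩ ⟨Real.exp B, ?_⟩ ?_ hz
  · refine IsBigO.of_bound (Real.exp B) (eventually_inf_principal.mpr (.of_forall fun z hz ↦ ?_))
    simpa using exp_le z (le_of_lt hz)
  · rw [eventually_map]
    filter_upwards [eventually_ge_atTop 0] with x hx
    exact exp_le x (by simpa using hx)
  · intro y
    simpa [norm_exp] using hl y

/-! ### The quotient of `entireXi` by its unit shift -/

/-- The quotient `X(w) / X(w + 1)` for `X = entireXi`, bounded by `1` on the right half-plane. -/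
noncomputable def unitShiftQuotient (w : ℂ) : ℂ := entireXi w / entireXi (w + 1)

lemma norm_unitShiftQuotient_le_one {w : ℂ} (hw : 0 ≤ w.re) : ‖unitShiftQuotient w‖ ≤ 1 := by
  rw [unitShiftQuotient, norm_div]
  exact div_le_one_of_le₀ (norm_entireXi_le_norm_add_one hw) (norm_nonneg _)

lemma differentiableAt_unitShiftQuotient {w : ℂ} (hw : 0 < w.re) :
    DifferentiableAt ℂ unitShiftQuotient w :=
  DifferentiableAt.div (by fun_prop) (by fun_prop)
    (entireXi_ne_zero (by rw [add_re, one_re]; linarith))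

/-- The values of `unitShiftQuotient` on the critical line `Re w = 1/2`. -/
noncomputable def criticalQuotient (t : ℝ) : ℂ := unitShiftQuotient (1 / 2 + t * I)

lemma norm_one_sub_conj_mul_le {a z : ℂ} {m M : ℝ} (hm₀ : 0 ≤ m) (hm : m ≤ ‖a‖) (hM : ‖a‖ ≤ M)
    (hM₁ : M ≤ 1) : ‖1 - conj a * z‖ ≤ (1 - m ^ 2) + M * ‖z - a‖ := by
  have ha_sq : m ^ 2 ≤ ‖a‖ ^ 2 := pow_le_pow_left₀ hm₀ hm 2
  have ha_one : ‖a‖ ^ 2 ≤ 1 := pow_le_one₀ (norm_nonneg a) (hM.trans hM₁)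
  calc ‖1 - conj a * z‖ = ‖((1 - ‖a‖ ^ 2 : ℝ) : ℂ) - conj a * (z - a)‖ := by
        push_cast
        rw [← conj_mul' a]
        ring_nf
    _ ≤ (1 - ‖a‖ ^ 2) + ‖a‖ * ‖z - a‖ := by
        refine (norm_sub_le _ _).trans_eq ?_
        rw [norm_real, norm_mul, norm_conj, Real.norm_of_nonneg (by linarith)]
    _ ≤ (1 - m ^ 2) + M * ‖z - a‖ := by gcongr

lemma norm_criticalQuotient_sub_mul_le {t t₀ r m M : ℝ} (hr : |t - t₀| ≤ r) (hm₀ : 0 ≤ m)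
    (hm : m ≤ ‖criticalQuotient t₀‖) (hM : ‖criticalQuotient t₀‖ ≤ M) (hM₁ : M < 1) :
    ‖criticalQuotient t - criticalQuotient t₀‖ * (1 - r * M) ≤ r * (1 - m ^ 2) := by
  have hr₀ : 0 ≤ r := (abs_nonneg _).trans hr
  have pick : ‖criticalQuotient t - criticalQuotient t₀‖ * _ ≤
      _ * ‖1 - conj (criticalQuotient t₀) * criticalQuotient t‖ :=
    schwarzPick_rightHalfPlane (h := unitShiftQuotient)
      (fun z ↦ differentiableAt_unitShiftQuotient) (fun z hz ↦ norm_unitShiftQuotient_le_one hz.le)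
      (w₀ := 1 / 2 + t₀ * I) (w := 1 / 2 + t * I) (by simp) (by simp) (hM.trans_lt hM₁)
  have norm_diff : ‖(1 / 2 + t * I : ℂ) - (1 / 2 + t₀ * I)‖ = |t - t₀| := by
    rw [add_sub_add_left_eq_sub, ← sub_mul, ← ofReal_sub, norm_mul, norm_I, mul_one, norm_real,
      Real.norm_eq_abs]
  have one_le : 1 ≤ ‖(1 / 2 + t * I : ℂ) + conj (1 / 2 + t₀ * I : ℂ)‖ := by
    refine le_trans ?_ (re_le_norm _)
    simp; norm_num
  rw [norm_diff] at pick
  set d := ‖criticalQuotient t - criticalQuotient t₀‖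
  have d_le : d ≤ r * ((1 - m ^ 2) + M * d) :=
    calc d ≤ _ := le_mul_of_one_le_right (norm_nonneg _) one_le
      _ ≤ _ := pick
      _ ≤ _ := by gcongr; exact norm_one_sub_conj_mul_le hm₀ hm hM hM₁.le
  linarith

/-! ### Incomplete gamma integrals -/

/-- The integrand of `incGamma`. -/
noncomputable def incGammaKernel (p : ℝ) (w : ℂ) (k : ℕ) (x : ℝ) : ℂ :=
  (Real.exp (-p * (x - 1)) : ℂ) * (x : ℂ) ^ (w - 1) * (1 - (x : ℂ)⁻¹) ^ k

/-- The integrals `∫₁^∞ exp(-p(x-1)) x^(w-1) (1 - 1/x)^k dx`. For `k = 0` this is the upper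
incomplete gamma function `exp(p) p^(-w) Γ(w, p)`; the other `k` provide a three-term recurrence,
hence a continued fraction, for it. -/
noncomputable def incGamma (p : ℝ) (w : ℂ) (k : ℕ) : ℂ :=
  ∫ x in Ioi (1 : ℝ), incGammaKernel p w k x

lemma continuousOn_incGammaKernel (p : ℝ) (w : ℂ) (k : ℕ) :
    ContinuousOn (incGammaKernel p w k) (Ici 1) := by
  intro x hx
  have hx₀ : x ≠ 0 := (zero_lt_one.trans_le (mem_Ici.mp hx)).ne'
  have cont_cpow := continuousAt_ofReal_cpow_const x (w - 1) (Or.inr hx₀)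
  have cont_inv : ContinuousAt (fun x : ℝ ↦ (x : ℂ)⁻¹) x :=
    ContinuousAt.inv₀ (by fun_prop) (ofReal_ne_zero.mpr hx₀)
  have cont_exp : ContinuousAt (fun x : ℝ ↦ (Real.exp (-p * (x - 1)) : ℂ)) x := by fun_prop
  exact ((cont_exp.mul cont_cpow).mul
    ((continuousAt_const.sub cont_inv).pow k)).continuousWithinAt

lemma one_sub_inv_mem_Icc {x : ℝ} (hx : 1 ≤ x) : 1 - x⁻¹ ∈ Icc (0 : ℝ) 1 :=
  ⟨sub_nonneg.mpr (inv_le_one_of_one_le₀ hx), sub_le_self _ (by positivity)⟩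

lemma norm_incGammaKernel (p : ℝ) (w : ℂ) (k : ℕ) {x : ℝ} (hx : 1 ≤ x) :
    ‖incGammaKernel p w k x‖ = Real.exp (-p * (x - 1)) * x ^ (w.re - 1) * (1 - x⁻¹) ^ k := by
  rw [incGammaKernel, norm_mul, norm_mul, norm_real, Real.norm_of_nonneg (Real.exp_pos _).le,
    norm_pow, norm_cpow_eq_rpow_re_of_pos (zero_lt_one.trans_le hx), ← ofReal_inv, ← ofReal_one,
    ← ofReal_sub, norm_real, Real.norm_of_nonneg (one_sub_inv_mem_Icc hx).1, sub_re, ofReal_re]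

lemma exp_neg_mul_sub_one (p x : ℝ) :
    Real.exp (-p * (x - 1)) = Real.exp p * Real.exp (-p * x) := by
  rw [← Real.exp_add]
  ring_nf

lemma norm_incGammaKernel_le (p : ℝ) (w : ℂ) (k : ℕ) {x : ℝ} (hx : 1 ≤ x) :
    ‖incGammaKernel p w k x‖ ≤ Real.exp p * (Real.exp (-p * x) * x ^ (w.re - 1)) := by
  rw [norm_incGammaKernel p w k hx, exp_neg_mul_sub_one, ← mul_assoc]
  exact mul_le_of_le_one_right (by positivity)
    (pow_le_one₀ (one_sub_inv_mem_Icc hx).1 (one_sub_inv_mem_Icc hx).2)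

lemma integrableOn_incGammaKernel {p : ℝ} (hp : 0 < p) (w : ℂ) (k : ℕ) :
    IntegrableOn (incGammaKernel p w k) (Ioi 1) := by
  refine Integrable.mono'
    ((integrableOn_exp_neg_mul_rpow hp (w.re - 1)).const_mul (Real.exp p)) ?_ ?_
  · exact ((continuousOn_incGammaKernel p w k).mono Ioi_subset_Ici_self).aestronglyMeasurable
      measurableSet_Ioi
  · filter_upwards [ae_restrict_mem measurableSet_Ioi] with x hx
    exact norm_incGammaKernel_le p w k (le_of_lt hx)

lemma tendsto_incGammaKernel {p : ℝ} (hp : 0 < p) (w : ℂ) (k : ℕ) :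
    Tendsto (incGammaKernel p w k) atTop (𝓝 0) := by
  have h := (tendsto_rpow_mul_exp_neg_mul_atTop_nhds_zero (w.re - 1) p hp).const_mul (Real.exp p)
  rw [mul_zero] at h
  refine squeeze_zero_norm' ?_ h
  filter_upwards [eventually_ge_atTop 1] with x hx
  rw [mul_comm (x ^ _)]
  exact norm_incGammaKernel_le p w k hx

lemma hasDerivAt_one_sub_inv {x : ℝ} (hx : x ≠ 0) :
    HasDerivAt (fun x : ℝ ↦ 1 - (x : ℂ)⁻¹) ((x : ℂ)⁻¹ ^ 2) x := by
  have h := ((hasDerivAt_id x).ofReal_comp.inv (ofReal_ne_zero.mpr hx)).const_sub 1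
  refine h.congr_deriv ?_
  simp [neg_div]

lemma hasDerivAt_exp_mul_cpow (p : ℝ) (z : ℂ) {x : ℝ} (hx : 0 < x) :
    HasDerivAt (fun x : ℝ ↦ (Real.exp (-p * (x - 1)) : ℂ) * (x : ℂ) ^ z)
      ((-p + z * (x : ℂ)⁻¹) * ((Real.exp (-p * (x - 1)) : ℂ) * (x : ℂ) ^ z)) x := by
  have deriv_exp : HasDerivAt (fun x : ℝ ↦ (Real.exp (-p * (x - 1)) : ℂ))
      ((Real.exp (-p * (x - 1)) * (-p) : ℝ) : ℂ) x := by
    simpa using (((hasDerivAt_id x).sub_const 1).const_mul (-p)).exp.ofReal_comp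
  have deriv_cpow : HasDerivAt (fun x : ℝ ↦ (x : ℂ) ^ z) (z * (x : ℂ) ^ (z - 1)) x := by
    have hmem : id (x : ℂ) ∈ slitPlane := Or.inl (by simpa using hx)
    simpa using ((hasDerivAt_id (x : ℂ)).cpow_const (c := z) hmem).comp_ofReal
  refine (deriv_exp.mul deriv_cpow).congr_deriv ?_
  have hx' : (x : ℂ) ≠ 0 := ofReal_ne_zero.mpr hx.ne'
  rw [cpow_sub _ _ hx', cpow_one]
  push_cast
  field_simp

lemma hasDerivAt_incGammaKernel (p : ℝ) (w : ℂ) (k : ℕ) {x : ℝ} (hx : 0 < x) :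
    HasDerivAt (incGammaKernel p w k)
      (-(p + 1 - w + 2 * k) * incGammaKernel p w k x +
        ((k + 1 - w) * incGammaKernel p w (k + 1) x + k * incGammaKernel p w (k - 1) x)) x := by
  have h := (hasDerivAt_exp_mul_cpow p (w - 1) hx).mul ((hasDerivAt_one_sub_inv hx.ne').pow k)
  refine h.congr_deriv ?_
  cases k <;> simp [incGammaKernel] <;> ring

lemma incGamma_rec {p : ℝ} (hp : 0 < p) (w : ℂ) (k : ℕ) :
    (k + 1 - w) * incGamma p w (k + 1) =
      (p + 1 - w + 2 * k) * incGamma p w k - k * incGamma p w (k - 1) - 0 ^ k := by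
  have int_const (c : ℂ) (k : ℕ) : IntegrableOn (fun x ↦ c * incGammaKernel p w k x) (Ioi 1) :=
    (integrableOn_incGammaKernel hp w k).const_mul c
  have int_sum : IntegrableOn (fun x ↦ (k + 1 - w) * incGammaKernel p w (k + 1) x +
      k * incGammaKernel p w (k - 1) x) (Ioi 1) := (int_const _ _).add (int_const _ _)
  have ftc := integral_Ioi_of_hasDerivAt_of_tendsto
    (continuousOn_incGammaKernel p w k 1 self_mem_Ici)
    (fun x hx ↦ hasDerivAt_incGammaKernel p w k (zero_lt_one.trans hx))
    ((int_const _ k).add int_sum) (tendsto_incGammaKernel hp w k)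
  rw [integral_add (int_const _ k) int_sum, integral_add (int_const _ _) (int_const _ _),
    integral_const_mul, integral_const_mul, integral_const_mul,
    show incGammaKernel p w k 1 = 0 ^ k by simp [incGammaKernel]] at ftc
  simp only [incGamma]
  linear_combination ftc

lemma integrableOn_exp_mul_sub_one_pow {p : ℝ} (hp : 0 < p) (j : ℕ) :
    IntegrableOn (fun x : ℝ ↦ Real.exp (-p * (x - 1)) * (x - 1) ^ j) (Ioi 1) := by
  refine Integrable.mono' ((integrableOn_exp_neg_mul_rpow hp j).const_mul (Real.exp p))
    (Continuous.aestronglyMeasurable (by fun_prop)) ?_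
  filter_upwards [ae_restrict_mem measurableSet_Ioi] with x hx
  have hx' : 0 ≤ x - 1 := sub_nonneg.mpr (le_of_lt hx)
  rw [Real.norm_of_nonneg (by positivity), exp_neg_mul_sub_one, Real.rpow_natCast, mul_assoc]
  gcongr
  exact sub_le_self _ zero_le_one

lemma integral_exp_mul_sub_one_pow {p : ℝ} (hp : 0 < p) (j : ℕ) :
    ∫ x in Ioi (1 : ℝ), Real.exp (-p * (x - 1)) * (x - 1) ^ j = j.factorial / p ^ (j + 1) := by
  have translate := (measurePreserving_sub_right volume (1 : ℝ)).setIntegral_preimage_emb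
    (measurableEmbedding_subRight (1 : ℝ)) (fun y ↦ Real.exp (-p * y) * y ^ j) (Ioi 0)
  rw [preimage_sub_const_Ioi, zero_add] at translate
  rw [translate, ← Real.Gamma_nat_eq_factorial]
  have gamma := Real.integral_rpow_mul_exp_neg_mul_Ioi (a := j + 1) (r := p) (by positivity) hp
  rw [add_sub_cancel_right, ← Nat.cast_add_one, Real.rpow_natCast, one_div, inv_pow,
    inv_mul_eq_div, Nat.cast_add_one] at gamma
  rw [← gamma]
  simp only [Real.rpow_natCast, neg_mul, mul_comm (Real.exp _)]

lemma one_sub_inv_sq_le {x : ℝ} (hx : 1 ≤ x) : (1 - x⁻¹) ^ 2 ≤ (x - 1) / 4 := by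
  rw [show (1 - x⁻¹) ^ 2 = (x - 1) ^ 2 / x ^ 2 by field_simp,
    div_le_div_iff₀ (by positivity) (by norm_num)]
  nlinarith [mul_nonneg (sub_nonneg.mpr hx) (sq_nonneg (x - 2))]

lemma norm_incGamma_le {p : ℝ} (hp : 0 < p) {w : ℂ} (hw : w.re ≤ 1) (j : ℕ) :
    ‖incGamma p w (2 * j)‖ ≤ j.factorial / p ^ (j + 1) / 4 ^ j := by
  rw [← integral_exp_mul_sub_one_pow hp, ← integral_div]
  refine norm_integral_le_of_norm_le ((integrableOn_exp_mul_sub_one_pow hp j).div_const _) ?_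
  filter_upwards [ae_restrict_mem measurableSet_Ioi] with x hx
  have hx' : 1 ≤ x := le_of_lt hx
  have rpow_le : x ^ (w.re - 1) ≤ 1 :=
    Real.rpow_le_one_of_one_le_of_nonpos hx' (by linarith)
  have pow_le : (1 - x⁻¹) ^ (2 * j) ≤ (x - 1) ^ j / 4 ^ j := by
    rw [pow_mul, ← div_pow]
    exact pow_le_pow_left₀ (by positivity) (one_sub_inv_sq_le hx') j
  have pow_nonneg : 0 ≤ (1 - x⁻¹) ^ (2 * j) := by
    rw [pow_mul]
    positivity
  calc ‖incGammaKernel p w (2 * j) x‖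
      = Real.exp (-p * (x - 1)) * (x ^ (w.re - 1) * (1 - x⁻¹) ^ (2 * j)) := by
        rw [norm_incGammaKernel p w _ hx', mul_assoc]
    _ ≤ Real.exp (-p * (x - 1)) * (1 * ((x - 1) ^ j / 4 ^ j)) := by gcongr
    _ = Real.exp (-p * (x - 1)) * (x - 1) ^ j / 4 ^ j := by rw [one_mul, mul_div_assoc]

/-! ### Approximating `completedRiemannZeta₀` by incomplete gamma integrals -/

lemma exp_neg_mul_sub_exp_neg_mul_mem_Icc {x ε p p' : ℝ} (hx : 0 ≤ x) (hp : p ≤ p')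
    (hp' : p' ≤ p + ε) :
    Real.exp (-p * x) - Real.exp (-p' * x) ∈ Icc 0 (ε * x * Real.exp (-p * x)) := by
  have split : Real.exp (-p' * x) = Real.exp (-p * x) * Real.exp (-(p' - p) * x) := by
    rw [← Real.exp_add]
    ring_nf
  have le_one : Real.exp (-(p' - p) * x) ≤ 1 := Real.exp_le_one_iff.mpr (by nlinarith)
  have ge : 1 - Real.exp (-(p' - p) * x) ≤ ε * x := by
    nlinarith [Real.add_one_le_exp (-(p' - p) * x)]
  have pos := Real.exp_pos (-p * x)
  rw [split]
  constructor <;> nlinarith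

lemma exp_neg_nat_mul_pi_mul_le {n : ℕ} (hn : 1 ≤ n) {x : ℝ} (hx : 1 ≤ x) :
    Real.exp (-π * n * x) ≤ 0.05 ^ n * Real.exp (-3 * (x - 1)) := by
  have hn' : (1 : ℝ) ≤ n := by exact_mod_cast hn
  have exp_neg_three : Real.exp (-3) ≤ 0.05 := by
    have h := pow_le_pow_left₀ (by norm_num) Real.exp_one_gt_d9.le 3
    rw [← Real.exp_nat_mul] at h
    rw [Real.exp_neg, inv_le_comm₀ (Real.exp_pos _) (by norm_num)]
    norm_num at h ⊢
    linarith
  calc Real.exp (-π * n * x) ≤ Real.exp (n * (-3) + -3 * (x - 1)) := by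
        refine Real.exp_le_exp.mpr ?_
        nlinarith [Real.pi_gt_three, mul_le_mul hn' hx (by norm_num) (by positivity),
          mul_nonneg (sub_nonneg.mpr hn') (sub_nonneg.mpr hx)]
    _ = Real.exp (-3) ^ n * Real.exp (-3 * (x - 1)) := by
        rw [Real.exp_add, Real.exp_nat_mul]
    _ ≤ 0.05 ^ n * Real.exp (-3 * (x - 1)) := by gcongr

-- Replacing `π` by `355 / 113` costs `2.7e-7`.
lemma abs_thetaTail_half_sub_le {x : ℝ} (hx : 1 ≤ x) :
    |thetaTail x / 2 - (Real.exp (-(355 / 113) * x) + Real.exp (-(1420 / 113) * x))| ≤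
      1.4e-8 * (x * Real.exp (-3 * (x - 1))) := by
  have lower := sum_range_le_thetaTail 2 (zero_lt_one.trans_le hx)
  have upper := thetaTail_le_sum_range_add 2 hx
  have tail_one := exp_neg_nat_mul_pi_mul_le (n := 1) le_rfl hx
  have tail_four := exp_neg_nat_mul_pi_mul_le (n := 4) (by simp) hx
  have tail_nine := exp_neg_nat_mul_pi_mul_le (n := 9) (by simp) hx
  have pi_gt := Real.pi_gt_d20
  have pi_lt := Real.pi_lt_d20
  norm_num [Finset.sum_range_succ] at lower upper tail_one tail_four tail_nine pi_gt pi_lt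
  obtain ⟨d₁_nonneg, d₁_le⟩ := exp_neg_mul_sub_exp_neg_mul_mem_Icc (x := x) (ε := 2.7e-7)
    (p := π) (p' := 355 / 113) (by linarith) (by linarith) (by linarith)
  obtain ⟨d₄_nonneg, d₄_le⟩ := exp_neg_mul_sub_exp_neg_mul_mem_Icc (x := x) (ε := 10.8e-7)
    (p := π * 4) (p' := 1420 / 113) (by linarith) (by linarith) (by linarith)
  simp only [neg_mul] at *
  set E := Real.exp (-(3 * (x - 1)))
  have E_le : E ≤ x * E := le_mul_of_one_le_left (Real.exp_pos _).le hx
  have E_pos : 0 < x * E := mul_pos (by linarith) (Real.exp_pos _)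
  have err_one := mul_le_mul_of_nonneg_left tail_one (by linarith : 0 ≤ 2.7e-7 * x)
  have err_four := mul_le_mul_of_nonneg_left tail_four (by linarith : 0 ≤ 10.8e-7 * x)
  rw [abs_le]
  constructor <;> linarith

lemma exp_neg_mul_incGamma_zero (p : ℝ) (z : ℂ) :
    (Real.exp (-p) : ℂ) * incGamma p z 0 =
      ∫ x in Ioi (1 : ℝ), (x : ℂ) ^ (z - 1) * (Real.exp (-p * x) : ℂ) := by
  rw [incGamma, ← integral_const_mul]
  congr 1 with x
  have hexp : Real.exp (-p) * Real.exp (-p * (x - 1)) = Real.exp (-p * x) := by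
    rw [← Real.exp_add]
    ring_nf
  rw [← hexp, incGammaKernel]
  push_cast
  ring

lemma integral_mul_exp_neg_three_mul_sub_one :
    ∫ x in Ioi (1 : ℝ), x * Real.exp (-3 * (x - 1)) = 4 / 9 := by
  have split := integral_add (integrableOn_exp_mul_sub_one_pow (p := 3) (by norm_num) 0)
    (integrableOn_exp_mul_sub_one_pow (p := 3) (by norm_num) 1)
  rw [integral_exp_mul_sub_one_pow (by norm_num), integral_exp_mul_sub_one_pow (by norm_num)]
    at split
  norm_num at split
  rw [← split]
  congr 1 with x
  ring_nf

lemma integrableOn_mul_exp_neg_three_mul_sub_one :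
    IntegrableOn (fun x : ℝ ↦ x * Real.exp (-3 * (x - 1))) (Ioi 1) :=
  Integrable.of_integral_ne_zero (by rw [integral_mul_exp_neg_three_mul_sub_one]; norm_num)

lemma norm_thetaMellin_half_sub_incGamma_le {z : ℂ} (hz : z.re ≤ 1) :
    ‖thetaMellin z / 2 - ((Real.exp (-(355 / 113)) : ℂ) * incGamma (355 / 113) z 0 +
      (Real.exp (-(1420 / 113)) : ℂ) * incGamma (1420 / 113) z 0)‖ ≤ 6.3e-9 := by
  have int_theta := (integrableOn_cpow_mul_thetaTail (z - 1)).div_const 2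
  have int₁ := integrableOn_cpow_mul_exp_neg (b := 355 / 113) (by norm_num) (z - 1)
  have int₄ := integrableOn_cpow_mul_exp_neg (b := 1420 / 113) (by norm_num) (z - 1)
  have int_sum : IntegrableOn (fun x : ℝ ↦ (x : ℂ) ^ (z - 1) * (Real.exp (-(355 / 113) * x) : ℂ) +
    (x : ℂ) ^ (z - 1) * (Real.exp (-(1420 / 113) * x) : ℂ)) (Ioi 1) := int₁.add int₄
  rw [exp_neg_mul_incGamma_zero, exp_neg_mul_incGamma_zero, thetaMellin, ← integral_div,
    ← integral_add int₁ int₄, ← integral_sub int_theta int_sum]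
  refine (norm_integral_le_of_norm_le
    (integrableOn_mul_exp_neg_three_mul_sub_one.const_mul 1.4e-8) ?_).trans ?_
  · filter_upwards [ae_restrict_mem measurableSet_Ioi] with x hx
    have hx' : 1 ≤ x := le_of_lt hx
    have rpow_le : x ^ ((z - 1).re) ≤ 1 :=
      Real.rpow_le_one_of_one_le_of_nonpos hx' (by rw [sub_re, one_re]; linarith)
    rw [mul_div_assoc, ← mul_add, ← mul_sub, norm_mul,
      norm_cpow_eq_rpow_re_of_pos (zero_lt_one.trans hx)]
    refine (mul_le_of_le_one_left (norm_nonneg _) rpow_le).trans ?_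
    refine le_trans (le_of_eq ?_) (abs_thetaTail_half_sub_le hx')
    rw [← Real.norm_eq_abs, ← norm_real]
    push_cast
    rfl
  · rw [integral_const_mul, integral_mul_exp_neg_three_mul_sub_one]
    norm_num

lemma exp_neg_355_div_113_mem_Ioo :
    Real.exp (-(355 / 113)) ∈ Ioo (0.04321390670 : ℝ) 0.04321390676 := by
  have prod_eq : Real.exp (-(355 / 113)) ^ 113 * (Real.exp 1 ^ 71) ^ 5 = 1 := by
    rw [← Real.exp_nat_mul, ← Real.exp_nat_mul, ← Real.exp_nat_mul, ← Real.exp_add]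
    norm_num
  constructor
  · by_contra! h
    have := mul_le_mul (pow_le_pow_left₀ (Real.exp_pos _).le h 113)
      (pow_le_pow_left₀ (by positivity)
        (pow_le_pow_left₀ (Real.exp_pos 1).le Real.exp_one_lt_d9.le 71) 5)
      (by positivity) (by positivity)
    rw [prod_eq] at this
    norm_num at this
  · by_contra! h
    have := mul_le_mul (pow_le_pow_left₀ (by norm_num) h 113)
      (pow_le_pow_left₀ (by positivity)
        (pow_le_pow_left₀ (by norm_num) Real.exp_one_gt_d9.le 71) 5)
      (by positivity) (by positivity)
    rw [prod_eq] at this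
    norm_num at this

lemma abs_exp_neg_355_div_113_sub_le :
    |Real.exp (-(355 / 113)) - 0.04321390673| ≤ 3e-11 := by
  obtain ⟨lower, upper⟩ := exp_neg_355_div_113_mem_Ioo
  rw [abs_le]
  constructor <;> linarith

lemma abs_exp_neg_1420_div_113_sub_le :
    |Real.exp (-(1420 / 113)) - 0.00000348735| ≤ 5e-11 := by
  obtain ⟨lower, upper⟩ := exp_neg_355_div_113_mem_Ioo
  have exp_eq : Real.exp (-(1420 / 113)) = Real.exp (-(355 / 113)) ^ 4 := by
    rw [← Real.exp_nat_mul]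
    ring_nf
  have pow_lower := pow_le_pow_left₀ (by norm_num) lower.le 4
  have pow_upper := pow_le_pow_left₀ (Real.exp_pos _).le upper.le 4
  rw [exp_eq, abs_le]
  norm_num at pow_lower pow_upper ⊢
  constructor <;> linarith

lemma norm_ofReal_mul_sub_ofReal_mul_le {q q' d B : ℝ} {G j : ℂ} (hd : |q - q'| ≤ d)
    (hG : ‖G‖ ≤ B) : ‖(q : ℂ) * G - q' * j‖ ≤ d * B + |q'| * ‖G - j‖ := by
  have hd₀ : 0 ≤ d := (abs_nonneg _).trans hd
  calc ‖(q : ℂ) * G - q' * j‖ = ‖((q - q' : ℝ) : ℂ) * G + (q' : ℂ) * (G - j)‖ := by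
        push_cast
        ring_nf
    _ ≤ |q - q'| * ‖G‖ + |q'| * ‖G - j‖ := by
        refine (norm_add_le _ _).trans_eq ?_
        rw [norm_mul, norm_mul, norm_real, norm_real, Real.norm_eq_abs, Real.norm_eq_abs]
    _ ≤ d * B + |q'| * ‖G - j‖ := by gcongr

lemma norm_thetaMellin_half_sub_le {z : ℂ} (hz : z.re ≤ 1) {j₁ j₄ : ℂ}
    (h₁ : ‖incGamma (355 / 113) z 0 - j₁‖ ≤ 2e-8)
    (h₄ : ‖incGamma (1420 / 113) z 0 - j₄‖ ≤ 2e-4) :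
    ‖thetaMellin z / 2 - (0.04321390673 * j₁ + 0.00000348735 * j₄)‖ ≤ 1e-8 := by
  have main := norm_thetaMellin_half_sub_incGamma_le hz
  have gamma₁ := norm_incGamma_le (p := 355 / 113) (by norm_num) hz 0
  have gamma₄ := norm_incGamma_le (p := 1420 / 113) (by norm_num) hz 0
  have err₁ := norm_ofReal_mul_sub_ofReal_mul_le (j := j₁) abs_exp_neg_355_div_113_sub_le gamma₁
  have err₄ := norm_ofReal_mul_sub_ofReal_mul_le (j := j₄) abs_exp_neg_1420_div_113_sub_le gamma₄
  have triangle := norm_add₃_le (a := thetaMellin z / 2 - ((Real.exp (-(355 / 113)) : ℂ) *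
      incGamma (355 / 113) z 0 + (Real.exp (-(1420 / 113)) : ℂ) * incGamma (1420 / 113) z 0))
    (b := (Real.exp (-(355 / 113)) : ℂ) * incGamma (355 / 113) z 0 - (0.04321390673 : ℝ) * j₁)
    (c := (Real.exp (-(1420 / 113)) : ℂ) * incGamma (1420 / 113) z 0 - (0.00000348735 : ℝ) * j₄)
  rw [show ∀ M a b c d : ℂ, M - (a + b) + (a - c) + (b - d) = M - (c + d) by intros; ring]
    at triangle
  norm_num at *
  linarith

lemma norm_completedRiemannZeta₀_sub_le {s : ℂ} (hs : s.re ∈ Icc (-1 : ℝ) 2)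
    {j₁ j₁' j₄ j₄' : ℂ} (h₁ : ‖incGamma (355 / 113) (s / 2) 0 - j₁‖ ≤ 2e-8)
    (h₁' : ‖incGamma (355 / 113) ((1 - s) / 2) 0 - j₁'‖ ≤ 2e-8)
    (h₄ : ‖incGamma (1420 / 113) (s / 2) 0 - j₄‖ ≤ 2e-4)
    (h₄' : ‖incGamma (1420 / 113) ((1 - s) / 2) 0 - j₄'‖ ≤ 2e-4) :
    ‖completedRiemannZeta₀ s -
      (0.04321390673 * (j₁ + j₁') + 0.00000348735 * (j₄ + j₄'))‖ ≤ 2e-8 := by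
  have left := norm_thetaMellin_half_sub_le (z := s / 2) (by simpa using by linarith [hs.2]) h₁ h₄
  have right := norm_thetaMellin_half_sub_le (z := (1 - s) / 2)
    (by simpa using by linarith [hs.1]) h₁' h₄'
  rw [completedRiemannZeta₀_eq_thetaMellin]
  calc _ = ‖(thetaMellin (s / 2) / 2 - (0.04321390673 * j₁ + 0.00000348735 * j₄)) +
        (thetaMellin ((1 - s) / 2) / 2 - (0.04321390673 * j₁' + 0.00000348735 * j₄'))‖ := by
        ring_nf
    _ ≤ 1e-8 + 1e-8 := norm_add_le_of_le left right
    _ = 2e-8 := by norm_num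

/-! ### Certified values of the incomplete gamma integrals -/

/-- A convergent of the continued fraction for `incGamma (P / S) (W / S) 0`, with numerator, sign
reversed, and denominator cleared to Gaussian integers, together with its successor and with the
factor `scale` by which clearing denominators multiplies the remainder. -/
structure IncGammaConvergent where
  num : GaussianInt
  den : GaussianInt
  numNext : GaussianInt
  denNext : GaussianInt
  scale : GaussianInt

/-- The `k`-th convergent for `incGamma (P / S) (W / S) 0`, computed from `incGamma_rec`. -/
def incGammaConvergent (P S : ℤ) (W : GaussianInt) : ℕ → IncGammaConvergent
  | 0 => ⟨0, 1, -S, P + S - W, 1⟩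
  | k + 1 =>
    let c := incGammaConvergent P S W k
    let a : GaussianInt := (k + 1) * S - W
    let b : GaussianInt := P + S - W + 2 * (k + 1) * S
    ⟨c.numNext, c.denNext, b * c.numNext - (k + 1) * S * a * c.num,
      b * c.denNext - (k + 1) * S * a * c.den, c.scale * a⟩

lemma incGamma_rec_cleared {P S : ℤ} (hP : 0 < P) (hS : 0 < S) (W : ℂ) (k : ℕ) :
    ((k + 1) * S - W) * incGamma (P / S) (W / S) (k + 1) =
      (P + S - W + 2 * k * S) * incGamma (P / S) (W / S) k -
        k * S * incGamma (P / S) (W / S) (k - 1) - S * 0 ^ k := by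
  have S_ne : (S : ℂ) ≠ 0 := by exact_mod_cast hS.ne'
  have p_pos : (0 : ℝ) < P / S := div_pos (by exact_mod_cast hP) (by exact_mod_cast hS)
  have W_eq : W / S * S = W := div_mul_cancel₀ W S_ne
  have P_eq : ((P / S : ℝ) : ℂ) * S = P := by
    push_cast
    exact div_mul_cancel₀ _ S_ne
  linear_combination (S : ℂ) * incGamma_rec p_pos (W / S) k +
    incGamma (P / S) (W / S) k * P_eq +
    (incGamma (P / S) (W / S) (k + 1) - incGamma (P / S) (W / S) k) * W_eq

lemma incGammaConvergent_spec {P S : ℤ} (hP : 0 < P) (hS : 0 < S) (W : GaussianInt) (k : ℕ) :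
    let c := incGammaConvergent P S W k
    c.num + c.den * incGamma (P / S) (W / S) 0 = c.scale * incGamma (P / S) (W / S) k ∧
    c.numNext + c.denNext * incGamma (P / S) (W / S) 0 =
      c.scale * (((k + 1) * S - W) * incGamma (P / S) (W / S) (k + 1)) := by
  induction k with
  | zero =>
    refine ⟨by simp [incGammaConvergent], ?_⟩
    rw [incGamma_rec_cleared hP hS]
    simp only [incGammaConvergent, map_sub, map_add, map_neg, map_one, map_intCast]
    push_cast
    ring
  | succ k ih =>
    obtain ⟨current, next⟩ := ih
    refine ⟨by simp [incGammaConvergent, next, mul_assoc], ?_⟩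
    rw [incGamma_rec_cleared hP hS]
    simp only [incGammaConvergent, map_sub, map_add, map_mul, map_ofNat, map_one, map_natCast,
      map_intCast]
    push_cast
    linear_combination (P + S - W + 2 * (k + 1) * S : ℂ) * next -
      (k + 1) * S * ((k + 1) * S - W : ℂ) * current

/-- The value of the convergent times `10 ^ 9`, rounded to a Gaussian integer. -/
def IncGammaConvergent.approx (c : IncGammaConvergent) : GaussianInt := -(10 ^ 9 * c.num) / c.den

/-- The numerical condition under which the `2 j`-th convergent computes
`incGamma (P / S) (W / S) 0` to accuracy `(E + 1) / 10 ^ 9`: the remainder contributes at most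
`E / 10 ^ 9` and the rounding at most `1 / 10 ^ 9`. -/
def IncGammaCertificate (P S : ℤ) (W : GaussianInt) (j : ℕ) (E : ℤ) : Prop :=
  let c := incGammaConvergent P S W (2 * j)
  0 < c.den.norm ∧ (10 ^ 9 * (j.factorial * S ^ (j + 1))) ^ 2 * c.scale.norm ≤
    (E * (P ^ (j + 1) * 4 ^ j)) ^ 2 * c.den.norm

instance (P S : ℤ) (W : GaussianInt) (j : ℕ) (E : ℤ) :
    Decidable (IncGammaCertificate P S W j E) :=
  inferInstanceAs (Decidable (_ ∧ _))

lemma gaussianInt_norm_eq (z : GaussianInt) : (z.norm : ℝ) = ‖(z : ℂ)‖ ^ 2 := by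
  rw [GaussianInt.intCast_real_norm, Complex.normSq_eq_norm_sq]

lemma norm_div_sub_gaussianInt_div_le (x y : GaussianInt) :
    ‖(x / y : ℂ) - ((x / y : GaussianInt) : ℂ)‖ ≤ 1 := by
  have h := GaussianInt.normSq_div_sub_div_lt_one x y
  rw [Complex.normSq_eq_norm_sq] at h
  exact (sq_le_one_iff₀ (norm_nonneg _)).mp h.le

lemma norm_incGamma_add_num_div_den_le {P S : ℤ} (hP : 0 < P) (hS : 0 < S) {W : GaussianInt}
    (hW : (W / S : ℂ).re ≤ 1) {j : ℕ} {E : ℤ} (hE : 0 ≤ E) (h : IncGammaCertificate P S W j E) :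
    ‖incGamma (P / S) (W / S) 0 + (incGammaConvergent P S W (2 * j)).num /
      (incGammaConvergent P S W (2 * j)).den‖ ≤ E / 10 ^ 9 := by
  obtain ⟨den_pos, scale_le⟩ := h
  have spec := (incGammaConvergent_spec hP hS W (2 * j)).1
  generalize incGammaConvergent P S W (2 * j) = c at *
  have P_pos : (0 : ℝ) < P := by exact_mod_cast hP
  have S_pos : (0 : ℝ) < S := by exact_mod_cast hS
  have : (0 : ℝ) ≤ E := by exact_mod_cast hE
  have den_ne : (c.den : ℂ) ≠ 0 := by simpa using GaussianInt.norm_pos.mp den_pos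
  have den_norm_pos := norm_pos_iff.mpr den_ne
  have scale_norm_le : 10 ^ 9 * (j.factorial * S ^ (j + 1)) * ‖(c.scale : ℂ)‖ ≤
      E * (P ^ (j + 1) * 4 ^ j) * ‖(c.den : ℂ)‖ := by
    refine (pow_le_pow_iff_left₀ (by positivity) (by positivity) two_ne_zero).mp ?_
    rw [mul_pow _ ‖_‖, mul_pow _ ‖_‖, ← gaussianInt_norm_eq, ← gaussianInt_norm_eq]
    exact_mod_cast scale_le
  have remainder_le : ‖incGamma (P / S) (W / S) (2 * j)‖ ≤
      j.factorial * S ^ (j + 1) / (P ^ (j + 1) * 4 ^ j) := by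
    refine (norm_incGamma_le (div_pos P_pos S_pos) hW j).trans_eq ?_
    rw [div_pow]
    field_simp
  have split : incGamma (P / S) (W / S) 0 + c.num / c.den =
      c.scale * incGamma (P / S) (W / S) (2 * j) / c.den := by
    rw [← spec]
    field_simp
    ring
  rw [split, norm_div, norm_mul, div_le_div_iff₀ den_norm_pos (by positivity)]
  calc ‖(c.scale : ℂ)‖ * ‖incGamma (P / S) (W / S) (2 * j)‖ * 10 ^ 9
      ≤ ‖(c.scale : ℂ)‖ * (j.factorial * S ^ (j + 1) / (P ^ (j + 1) * 4 ^ j)) * 10 ^ 9 := by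
        gcongr
    _ = 10 ^ 9 * (j.factorial * S ^ (j + 1)) * ‖(c.scale : ℂ)‖ / (P ^ (j + 1) * 4 ^ j) := by ring
    _ ≤ E * ‖(c.den : ℂ)‖ := by
        rw [div_le_iff₀ (by positivity)]
        linarith

lemma norm_incGamma_sub_approx_le {P S : ℤ} (hP : 0 < P) (hS : 0 < S) {W : GaussianInt}
    (hW : (W / S : ℂ).re ≤ 1) {j : ℕ} {E : ℤ} (hE : 0 ≤ E) (h : IncGammaCertificate P S W j E) :
    ‖incGamma (P / S) (W / S) 0 - (incGammaConvergent P S W (2 * j)).approx / 10 ^ 9‖ ≤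
      (E + 1) / 10 ^ 9 := by
  have convergent_le := norm_incGamma_add_num_div_den_le hP hS hW hE h
  generalize incGammaConvergent P S W (2 * j) = c at *
  have rounding_le := norm_div_sub_gaussianInt_div_le (-(10 ^ 9 * c.num)) c.den
  have split : incGamma (P / S) (W / S) 0 - c.approx / 10 ^ 9 =
      (incGamma (P / S) (W / S) 0 + c.num / c.den) +
        ((-(10 ^ 9 * c.num) : GaussianInt) / c.den - c.approx) / 10 ^ 9 := by
    simp only [map_neg, map_mul, map_pow, map_ofNat]
    ring
  have norm_ten_pow : ‖(10 : ℂ) ^ 9‖ = 10 ^ 9 := by simp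
  rw [split, add_div]
  refine norm_add_le_of_le convergent_le ?_
  rw [norm_div, norm_ten_pow]
  gcongr
  exact rounding_le

/-! ### Certified values of the completed zeta function -/

/-- The value of `10 ^ 20 * completedRiemannZeta₀ (W / 113000)`, up to `2 * 10 ^ 12`, computed from
the first two terms of the theta series. -/
def zetaApprox (W : GaussianInt) : GaussianInt :=
  4321390673 * ((incGammaConvergent 710000 226000 W (2 * 14)).approx +
    (incGammaConvergent 710000 226000 (113000 - W) (2 * 14)).approx) +
  348735 * ((incGammaConvergent 2840000 226000 W (2 * 4)).approx +
    (incGammaConvergent 2840000 226000 (113000 - W) (2 * 4)).approx)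

/-- The numerical conditions under which `zetaApprox W` is accurate. -/
def ZetaCertificate (W : GaussianInt) : Prop :=
  IncGammaCertificate 710000 226000 W 14 19 ∧
  IncGammaCertificate 710000 226000 (113000 - W) 14 19 ∧
  IncGammaCertificate 2840000 226000 W 4 199999 ∧
  IncGammaCertificate 2840000 226000 (113000 - W) 4 199999

instance (W : GaussianInt) : Decidable (ZetaCertificate W) :=
  inferInstanceAs (Decidable (_ ∧ _))

lemma norm_completedRiemannZeta₀_sub_zetaApprox_le {s : ℂ} (hs : s.re ∈ Icc (-1 : ℝ) 2)
    {W : GaussianInt} (hW : s = W / 113000) (h : ZetaCertificate W) :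
    ‖completedRiemannZeta₀ s - zetaApprox W / 10 ^ 20‖ ≤ 2e-8 := by
  have s_half : (W / (226000 : ℤ) : ℂ) = s / 2 := by
    rw [hW]
    push_cast
    ring
  have one_sub_s_half : ((113000 - W : GaussianInt) / (226000 : ℤ) : ℂ) = (1 - s) / 2 := by
    rw [hW, map_sub, map_ofNat]
    push_cast
    ring
  have re_le : (s / 2).re ≤ 1 := by
    rw [div_ofNat_re]
    linarith [hs.2]
  have one_sub_re_le : ((1 - s) / 2).re ≤ 1 := by
    rw [div_ofNat_re, sub_re, one_re]
    linarith [hs.1]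
  obtain ⟨h₁, h₁', h₄, h₄'⟩ := h
  have b₁ := norm_incGamma_sub_approx_le (by norm_num) (by norm_num)
    (s_half ▸ re_le) (by norm_num) h₁
  have b₁' := norm_incGamma_sub_approx_le (by norm_num) (by norm_num)
    (one_sub_s_half ▸ one_sub_re_le) (by norm_num) h₁'
  have b₄ := norm_incGamma_sub_approx_le (by norm_num) (by norm_num)
    (s_half ▸ re_le) (by norm_num) h₄
  have b₄' := norm_incGamma_sub_approx_le (by norm_num) (by norm_num)
    (one_sub_s_half ▸ one_sub_re_le) (by norm_num) h₄'
  rw [s_half] at b₁ b₄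
  rw [one_sub_s_half] at b₁' b₄'
  norm_num1 at b₁ b₁' b₄ b₄'
  convert norm_completedRiemannZeta₀_sub_le hs (b₁.trans_eq (by norm_num))
    (b₁'.trans_eq (by norm_num)) (b₄.trans_eq (by norm_num)) (b₄'.trans_eq (by norm_num)) using 3
  simp only [zetaApprox, map_add, map_mul, map_ofNat]
  ring

/-- The value of `entireXi (W / 113000)`, cleared to a Gaussian integer. -/
def entireXiApprox (W : GaussianInt) : GaussianInt :=
  113000 ^ 2 * 10 ^ 20 + W * (W - 113000) * zetaApprox W

lemma norm_entireXi_sub_entireXiApprox_le {s : ℂ} (hs : s.re ∈ Icc (-1 : ℝ) 2)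
    {W : GaussianInt} (hW : s = W / 113000) (h : ZetaCertificate W) :
    ‖entireXi s - entireXiApprox W / (113000 ^ 2 * 10 ^ 20)‖ ≤ ‖s * (s - 1)‖ * 2e-8 := by
  have split : entireXi s - entireXiApprox W / (113000 ^ 2 * 10 ^ 20) =
      s * (s - 1) * (completedRiemannZeta₀ s - zetaApprox W / 10 ^ 20) := by
    simp only [entireXi, entireXiApprox, hW, map_add, map_sub, map_mul, map_pow, map_ofNat]
    ring
  rw [split, norm_mul]
  gcongr
  exact norm_completedRiemannZeta₀_sub_zetaApprox_le hs hW h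

lemma norm_div_sub_le_of_approx {X Y x y h : ℂ} {δ ε : ℝ} (hY : Y ≠ 0) (hX : ‖X - x‖ ≤ δ)
    (hy : ‖Y - y‖ ≤ δ) (hh : ‖h‖ ≤ 1) (hε : 0 ≤ ε)
    (hxy : ‖x - h * y‖ + (2 + ε) * δ ≤ ε * ‖y‖) : ‖X / Y - h‖ ≤ ε := by
  have quotient_eq : X / Y - h = ((X - x) + (x - h * y) - h * (Y - y)) / Y := by
    field_simp
    ring
  have numerator_le := norm_sub_le_of_le (norm_add_le_of_le hX le_rfl)
    (norm_mul_le_of_le hh hy) (a₁ := X - x + (x - h * y))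
  have y_le : ‖y‖ ≤ ‖Y‖ + δ := by
    rw [norm_sub_rev] at hy
    linarith [norm_sub_norm_le y Y]
  rw [quotient_eq, norm_div, div_le_iff₀ (norm_pos_iff.mpr hY)]
  nlinarith [mul_le_mul_of_nonneg_left y_le hε]

/-- The numerical conditions under which `criticalQuotient (T / 1000)` is within `e / 10 ^ 6` of
`H / 10 ^ 6`. -/
def CriticalQuotientCertificate (T : ℤ) (H : GaussianInt) (e : ℤ) : Prop :=
  let x := entireXiApprox ⟨56500, 113 * T⟩
  let y := entireXiApprox ⟨169500, 113 * T⟩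
  ZetaCertificate ⟨56500, 113 * T⟩ ∧ ZetaCertificate ⟨169500, 113 * T⟩ ∧
  H.norm ≤ 10 ^ 12 ∧ 0 ≤ e ∧ e ≤ 20000 ∧
  10100 * (10 ^ 6 * x - H * y).norm + 101 * ((T ^ 2 + 1250000) * (113000 ^ 2 * 404 * 10 ^ 10)) ^ 2 ≤
    100 * e ^ 2 * y.norm

instance (T : ℤ) (H : GaussianInt) (e : ℤ) : Decidable (CriticalQuotientCertificate T H e) :=
  inferInstanceAs (Decidable (_ ∧ _))

lemma norm_mul_sub_one_le (t : ℝ) :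
    ‖(1 / 2 + t * I) * (1 / 2 + t * I - 1)‖ ≤ t ^ 2 + 5 / 4 := by
  have h : (1 / 2 + t * I) * (1 / 2 + t * I - 1) = ((-(t ^ 2 + 1 / 4) : ℝ) : ℂ) := by
    push_cast
    linear_combination (t : ℂ) ^ 2 * I_sq
  rw [h, norm_real, Real.norm_eq_abs, abs_neg, abs_of_nonneg (by positivity)]
  linarith

lemma norm_add_one_mul_le (t : ℝ) :
    ‖(1 / 2 + t * I + 1) * (1 / 2 + t * I + 1 - 1)‖ ≤ t ^ 2 + 5 / 4 := by
  refine (pow_le_pow_iff_left₀ (norm_nonneg _) (by positivity) two_ne_zero).mp ?_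
  rw [Complex.sq_norm, Complex.normSq_apply]
  simp
  ring_nf
  norm_num

lemma add_le_mul_of_sq_add_sq_le {a b e y : ℝ} (he : 0 ≤ e) (hy : 0 ≤ y)
    (h : 10100 * a ^ 2 + 101 * b ^ 2 ≤ 100 * e ^ 2 * y ^ 2) : a + b ≤ e * y := by
  refine (abs_le_of_sq_le_sq' ?_ (by positivity)).2
  linarith [sq_nonneg (10 * a - 0.1 * b)]

lemma norm_approx_sub_add_le {x y H : GaussianInt} {T e : ℤ} (he : e ∈ Icc 0 20000)
    (h : 10100 * (10 ^ 6 * x - H * y).norm +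
      101 * ((T ^ 2 + 1250000) * (113000 ^ 2 * 404 * 10 ^ 10)) ^ 2 ≤ 100 * e ^ 2 * y.norm) :
    ‖(x / (113000 ^ 2 * 10 ^ 20) - H / 10 ^ 6 * (y / (113000 ^ 2 * 10 ^ 20)) : ℂ)‖ +
      (2 + e / 10 ^ 6) * ((((T : ℝ) / 1000) ^ 2 + 5 / 4) * 2e-8) ≤
    e / 10 ^ 6 * ‖(y / (113000 ^ 2 * 10 ^ 20) : ℂ)‖ := by
  have e_nonneg : (0 : ℝ) ≤ e := by exact_mod_cast he.1
  have e_le : (e : ℝ) ≤ 20000 := by exact_mod_cast he.2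
  have gap := add_le_mul_of_sq_add_sq_le e_nonneg (norm_nonneg (y : ℂ))
    (a := ‖((10 ^ 6 * x - H * y : GaussianInt) : ℂ)‖)
    (b := (T ^ 2 + 1250000) * (113000 ^ 2 * 404 * 10 ^ 10)) (by
      rw [← gaussianInt_norm_eq, ← gaussianInt_norm_eq]
      exact_mod_cast h)
  have difference_eq :
      (x / (113000 ^ 2 * 10 ^ 20) - H / 10 ^ 6 * (y / (113000 ^ 2 * 10 ^ 20)) : ℂ) =
        ((10 ^ 6 * x - H * y : GaussianInt) : ℂ) / (113000 ^ 2 * 10 ^ 26) := by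
    simp only [map_sub, map_mul, map_pow, map_ofNat]
    ring
  have norm_small : ‖(113000 ^ 2 * 10 ^ 20 : ℂ)‖ = 113000 ^ 2 * 10 ^ 20 := by simp
  have norm_large : ‖(113000 ^ 2 * 10 ^ 26 : ℂ)‖ = 113000 ^ 2 * 10 ^ 26 := by simp
  rw [difference_eq, norm_div, norm_div, norm_small, norm_large]
  have error_le : (2 + (e : ℝ) / 10 ^ 6) * ((((T : ℝ) / 1000) ^ 2 + 5 / 4) * 2e-8) ≤
      (T ^ 2 + 1250000) * (113000 ^ 2 * 404 * 10 ^ 10) / (113000 ^ 2 * 10 ^ 26) :=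
    calc (2 + (e : ℝ) / 10 ^ 6) * ((((T : ℝ) / 1000) ^ 2 + 5 / 4) * 2e-8)
        ≤ (2 + 20000 / 10 ^ 6) * ((((T : ℝ) / 1000) ^ 2 + 5 / 4) * 2e-8) := by gcongr
      _ = _ := by ring
  refine (add_le_add_right error_le _).trans ?_
  rw [← add_div, div_le_iff₀ (by positivity)]
  exact gap.trans_eq (by ring)

lemma norm_criticalQuotient_sub_le {T : ℤ} {H : GaussianInt} {e : ℤ}
    (h : CriticalQuotientCertificate T H e) :
    ‖criticalQuotient (T / 1000) - H / 10 ^ 6‖ ≤ e / 10 ^ 6 := by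
  obtain ⟨cert_x, cert_y, H_norm_le, e_nonneg, e_le, sq_le⟩ := h
  have : (0 : ℝ) ≤ e := by exact_mod_cast e_nonneg
  set s : ℂ := 1 / 2 + ((T / 1000 : ℝ) : ℂ) * I with hs
  have X_approx := (norm_entireXi_sub_entireXiApprox_le (s := s) (by norm_num [hs])
    (by rw [hs, GaussianInt.toComplex_def']; push_cast; ring) cert_x).trans
    (mul_le_mul_of_nonneg_right (norm_mul_sub_one_le _) (by norm_num))
  have Y_approx := (norm_entireXi_sub_entireXiApprox_le (s := s + 1) (by norm_num [hs])
    (by rw [hs, GaussianInt.toComplex_def']; push_cast; ring) cert_y).trans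
    (mul_le_mul_of_nonneg_right (norm_add_one_mul_le _) (by norm_num))
  have Y_ne : entireXi (s + 1) ≠ 0 := entireXi_ne_zero (by simp [hs])
  have h_le : ‖(H / 10 ^ 6 : ℂ)‖ ≤ 1 := by
    have H_sq_le : ‖(H : ℂ)‖ ^ 2 ≤ (10 ^ 6) ^ 2 := by
      rw [← gaussianInt_norm_eq]
      exact_mod_cast H_norm_le
    rw [norm_div, div_le_one₀ (by simp)]
    simpa using (pow_le_pow_iff_left₀ (norm_nonneg _) (by positivity) two_ne_zero).mp H_sq_le
  exact norm_div_sub_le_of_approx Y_ne X_approx Y_approx h_le (by positivity)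
    (norm_approx_sub_add_le ⟨e_nonneg, e_le⟩ sq_le)

/-! ### Positivity of rational polynomials on an interval -/

/-- A polynomial with rational coefficients, listed from the constant term upwards; unlike
`Polynomial ℚ` it can be evaluated by the kernel. -/
structure RatPoly where
  coeffs : List ℚ

namespace RatPoly

/-- The value at `t` of the polynomial with the given list of coefficients. -/
noncomputable def evalCoeffs : List ℚ → ℝ → ℝ
  | [], _ => 0
  | a :: p, t => a + t * evalCoeffs p t

/-- Termwise sum of coefficient lists of possibly different lengths. -/
def addCoeffs : List ℚ → List ℚ → List ℚ
  | [], q => q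
  | p, [] => p
  | a :: p, b :: q => (a + b) :: addCoeffs p q

/-- Coefficient list of a scalar multiple. -/
def scaleCoeffs (c : ℚ) (p : List ℚ) : List ℚ := p.map (c * ·)

/-- Coefficient list of a product. -/
def mulCoeffs : List ℚ → List ℚ → List ℚ
  | [], _ => []
  | a :: p, q => addCoeffs (scaleCoeffs a q) (0 :: mulCoeffs p q)

/-- The value of a polynomial at a real number. -/
noncomputable def eval (p : RatPoly) (t : ℝ) : ℝ := evalCoeffs p.coeffs t

instance : Add RatPoly := ⟨fun p q ↦ ⟨addCoeffs p.coeffs q.coeffs⟩⟩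
instance : Sub RatPoly := ⟨fun p q ↦ ⟨addCoeffs p.coeffs (scaleCoeffs (-1) q.coeffs)⟩⟩
instance : Mul RatPoly := ⟨fun p q ↦ ⟨mulCoeffs p.coeffs q.coeffs⟩⟩

lemma evalCoeffs_add (p q : List ℚ) (t : ℝ) :
    evalCoeffs (addCoeffs p q) t = evalCoeffs p t + evalCoeffs q t := by
  induction p generalizing q with
  | nil => simp [addCoeffs, evalCoeffs]
  | cons a p ih =>
    cases q with
    | nil => simp [addCoeffs, evalCoeffs]
    | cons b q =>
      simp only [addCoeffs, evalCoeffs, ih]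
      push_cast
      ring

lemma evalCoeffs_scale (c : ℚ) (p : List ℚ) (t : ℝ) :
    evalCoeffs (scaleCoeffs c p) t = c * evalCoeffs p t := by
  induction p with
  | nil => simp [scaleCoeffs, evalCoeffs]
  | cons a p ih =>
    rw [scaleCoeffs] at ih ⊢
    simp only [List.map_cons, evalCoeffs, ih]
    push_cast
    ring

lemma evalCoeffs_mul (p q : List ℚ) (t : ℝ) :
    evalCoeffs (mulCoeffs p q) t = evalCoeffs p t * evalCoeffs q t := by
  induction p with
  | nil => simp [mulCoeffs, evalCoeffs]
  | cons a p ih =>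
    simp only [mulCoeffs, evalCoeffs, evalCoeffs_add, evalCoeffs_scale, ih]
    push_cast
    ring

lemma eval_add (p q : RatPoly) (t : ℝ) : (p + q).eval t = p.eval t + q.eval t :=
  evalCoeffs_add _ _ _

lemma eval_sub (p q : RatPoly) (t : ℝ) : (p - q).eval t = p.eval t - q.eval t := by
  refine (evalCoeffs_add _ _ _).trans ?_
  rw [evalCoeffs_scale, eval, eval]
  push_cast
  ring

lemma eval_mul (p q : RatPoly) (t : ℝ) : (p * q).eval t = p.eval t * q.eval t :=
  evalCoeffs_mul _ _ _

/-- Coefficient list, as a polynomial in `u`, of `(1 + u) ^ n * p ((a + b * u) / (1 + u))`, where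
`n` is the number of coefficients of `p`; these are Bernstein coefficients of `p` on `[a, b]` up to
binomial factors. -/
def bernsteinCoeffs (a b : ℚ) : List ℚ → List ℚ
  | [] => []
  | c :: p => addCoeffs (scaleCoeffs c ((mulCoeffs [1, 1])^[p.length + 1] [1]))
      (mulCoeffs [a, b] (bernsteinCoeffs a b p))

lemma evalCoeffs_iterate_mul (q : List ℚ) (n : ℕ) (u : ℝ) :
    evalCoeffs ((mulCoeffs q)^[n] [1]) u = evalCoeffs q u ^ n := by
  induction n with
  | zero => simp [evalCoeffs]
  | succ n ih => rw [Function.iterate_succ_apply', evalCoeffs_mul, ih, pow_succ']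

lemma evalCoeffs_bernsteinCoeffs (a b : ℚ) (p : List ℚ) {u : ℝ} (hu : 1 + u ≠ 0) :
    evalCoeffs (bernsteinCoeffs a b p) u =
      (1 + u) ^ p.length * evalCoeffs p ((a + b * u) / (1 + u)) := by
  induction p with
  | nil => simp [bernsteinCoeffs, evalCoeffs]
  | cons c p ih =>
    simp only [bernsteinCoeffs, evalCoeffs_add, evalCoeffs_scale, evalCoeffs_iterate_mul,
      evalCoeffs_mul, ih, evalCoeffs, List.length_cons]
    push_cast
    field_simp
    ring

/-- A decidable criterion for positivity on `[a, b)`. -/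
def BernsteinNonneg (p : RatPoly) (a b : ℚ) : Prop := ∀ c ∈ bernsteinCoeffs a b p.coeffs, 0 ≤ c

instance (p : RatPoly) (a b : ℚ) : Decidable (p.BernsteinNonneg a b) :=
  inferInstanceAs (Decidable (∀ c ∈ _, _))

lemma evalCoeffs_nonneg {p : List ℚ} (hp : ∀ c ∈ p, 0 ≤ c) {u : ℝ} (hu : 0 ≤ u) :
    0 ≤ evalCoeffs p u := by
  induction p with
  | nil => exact le_rfl
  | cons a p ih =>
    have ha : (0 : ℝ) ≤ a := by exact_mod_cast hp a List.mem_cons_self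
    exact add_nonneg ha (mul_nonneg hu (ih fun c hc ↦ hp c (List.mem_cons_of_mem a hc)))

lemma BernsteinNonneg.eval_nonneg {p : RatPoly} {a b : ℚ} (h : p.BernsteinNonneg a b) {t : ℝ}
    (ht : t ∈ Ico (a : ℝ) b) : 0 ≤ p.eval t := by
  have b_sub_pos : 0 < b - t := sub_pos.mpr ht.2
  set u : ℝ := (t - a) / (b - t) with hu_def
  have u_nonneg : 0 ≤ u := div_nonneg (sub_nonneg.mpr ht.1) b_sub_pos.le
  have t_eq : (a + b * u) / (1 + u) = t := by
    rw [div_eq_iff (by positivity), hu_def]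
    field_simp
    ring
  have bernstein := evalCoeffs_nonneg h u_nonneg
  rw [evalCoeffs_bernsteinCoeffs a b _ (by positivity), t_eq] at bernstein
  exact nonneg_of_mul_nonneg_right bernstein (by positivity)

end RatPoly

/-! ### Certified enclosures of the quotient on the critical line -/

/-- A disc in the complex plane with rational data; `modulus` bounds the absolute value of its
centre `re + im * I`. -/
structure RatDisc where
  re : ℚ
  im : ℚ
  modulus : ℚ
  radius : ℚ

namespace RatDisc

/-- The centre of a disc as a complex number. -/
noncomputable def center (D : RatDisc) : ℂ := D.re + D.im * I

/-- The disc contains `z`, and its data are consistent. -/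
def Encloses (D : RatDisc) (z : ℂ) : Prop := ‖z - D.center‖ ≤ D.radius ∧ ‖D.center‖ ≤ D.modulus

/-- The unit disc. -/
def unit : RatDisc := ⟨0, 0, 0, 1⟩

lemma unit_encloses {z : ℂ} (hz : ‖z‖ ≤ 1) : unit.Encloses z := by
  simpa [Encloses, center, unit] using hz

end RatDisc

/-- A computed value of `criticalQuotient`: up to the factor `10 ^ 6`, the value, its absolute value
rounded down, and a bound for the error. -/
structure CriticalQuotientSample where
  value : GaussianInt
  modulus : ℤ
  error : ℤ

namespace CriticalQuotientSample

/-- The sample is a correct approximation of `criticalQuotient (T / 1000)`. -/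
def Valid (S : CriticalQuotientSample) (T : ℤ) : Prop :=
  CriticalQuotientCertificate T S.value S.error ∧ S.error ≤ S.modulus ∧
  S.modulus ^ 2 ≤ S.value.norm ∧ S.value.norm ≤ (S.modulus + 1) ^ 2 ∧
  S.modulus + 1 + S.error < 10 ^ 6

instance (S : CriticalQuotientSample) (T : ℤ) : Decidable (S.Valid T) :=
  inferInstanceAs (Decidable (_ ∧ _))

/-- The disc enclosing `criticalQuotient` on the interval of radius `r` about the sample point,
obtained from the Schwarz–Pick estimate `norm_criticalQuotient_sub_mul_le`. -/
def disc (S : CriticalQuotientSample) (r : ℚ) : RatDisc where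
  re := S.value.re / 10 ^ 6
  im := S.value.im / 10 ^ 6
  modulus := (S.modulus + 1) / 10 ^ 6
  radius := r * (1 - ((S.modulus - S.error) / 10 ^ 6) ^ 2) /
    (1 - r * ((S.modulus + 1 + S.error) / 10 ^ 6)) + S.error / 10 ^ 6

lemma center_disc (S : CriticalQuotientSample) (r : ℚ) :
    (S.disc r).center = S.value / 10 ^ 6 := by
  rw [RatDisc.center, GaussianInt.toComplex_def]
  simp only [disc]
  push_cast
  ring

/-- Validity of the sample, together with the condition on `r` under which the Schwarz–Pick estimate
applies. -/
def ValidWithin (S : CriticalQuotientSample) (T : ℤ) (r : ℚ) : Prop :=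
  S.Valid T ∧ r * ((S.modulus + 1 + S.error) / 10 ^ 6) < 1

instance (S : CriticalQuotientSample) (T : ℤ) (r : ℚ) : Decidable (S.ValidWithin T r) :=
  inferInstanceAs (Decidable (_ ∧ _))

variable {S : CriticalQuotientSample} {T : ℤ}

lemma Valid.norm_value_mem (h : S.Valid T) :
    ‖(S.value / 10 ^ 6 : ℂ)‖ ∈
      Icc ((S.modulus : ℝ) / 10 ^ 6) ((S.modulus + 1 : ℝ) / 10 ^ 6) := by
  obtain ⟨cert, error_le, modulus_sq_le, norm_le, -⟩ := h
  have : (0 : ℝ) ≤ S.modulus := by exact_mod_cast cert.2.2.2.1.trans error_le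
  have norm_ten_pow : ‖(10 : ℂ) ^ 6‖ = 10 ^ 6 := by simp
  rw [norm_div, norm_ten_pow]
  constructor
  · refine div_le_div_of_nonneg_right ?_ (by norm_num)
    refine (pow_le_pow_iff_left₀ this (norm_nonneg _) two_ne_zero).mp ?_
    rw [← gaussianInt_norm_eq]
    exact_mod_cast modulus_sq_le
  · refine div_le_div_of_nonneg_right ?_ (by norm_num)
    refine (pow_le_pow_iff_left₀ (norm_nonneg _) (by positivity) two_ne_zero).mp ?_
    rw [← gaussianInt_norm_eq]
    exact_mod_cast norm_le

lemma ValidWithin.disc_encloses {r : ℚ} (h : S.ValidWithin T r) {t : ℝ} (ht : |t - T / 1000| ≤ r) :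
    (S.disc r).Encloses (criticalQuotient t) := by
  obtain ⟨h, hr⟩ := h
  have sample_le := norm_criticalQuotient_sub_le h.1
  have value_mem := h.norm_value_mem
  obtain ⟨-, error_le, -, -, modulus_lt⟩ := h
  have error_le' : (S.error : ℝ) ≤ S.modulus := by exact_mod_cast error_le
  have modulus_lt' : (S.modulus + 1 + S.error : ℝ) < 10 ^ 6 := by exact_mod_cast modulus_lt
  have hr' : (r * ((S.modulus + 1 + S.error) / 10 ^ 6) : ℝ) < 1 := by exact_mod_cast hr
  have sample_norm := abs_le.mp ((abs_norm_sub_norm_le _ _).trans sample_le)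
  have pick := norm_criticalQuotient_sub_mul_le ht
    (m := (S.modulus - S.error) / 10 ^ 6) (M := (S.modulus + 1 + S.error) / 10 ^ 6)
    (div_nonneg (by linarith) (by norm_num))
    (by linarith [sample_norm.1, value_mem.1, sub_div (S.modulus : ℝ) S.error (10 ^ 6)])
    (by linarith [sample_norm.2, value_mem.2, add_div (S.modulus + 1 : ℝ) S.error (10 ^ 6)])
    ((div_lt_one (by norm_num)).mpr modulus_lt')
  rw [← le_div_iff₀ (sub_pos.mpr hr')] at pick
  rw [RatDisc.Encloses, center_disc]
  refine ⟨(norm_sub_le_norm_sub_add_norm_sub _ (criticalQuotient (T / 1000)) _).trans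
    ((add_le_add pick sample_le).trans_eq ?_), value_mem.2.trans_eq ?_⟩ <;>
  simp [disc]

end CriticalQuotientSample

/-! ### The boundary factor and its cubic comparison function -/

/-- The excess of `entireXi 2 = π / 3` over `1`. -/
noncomputable def xiTwoExcess : ℝ := π / 3 - 1

/-- A rational approximation of `xiTwoExcess`. -/
def xiTwoExcessApprox : ℚ := 4719755 / 10 ^ 8

/-- The linear polynomial `1 - a / 2 + a z`, equal to `1` at `z = 1 / 2`. -/
noncomputable def linearFactor (a : ℝ) (z : ℂ) : ℂ := 1 - a / 2 + a * z

/-- The boundary value at `z = t * I` of the normalised function `normalizedFactor` below, with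
independent variables in place of `xiTwoExcess` and of the two values of `criticalQuotient`. -/
noncomputable def boundaryForm (a : ℝ) (h₁ h₃ : ℂ) (t : ℝ) : ℂ :=
  linearFactor a (t * I) * (1 / 4 - 3 * t ^ 2 - 2 * t * I) - 2 * h₁ * (3 / 4 - t ^ 2 - 2 * t * I) +
    h₁ * h₃ * (t ^ 2 + 9 / 4)

/-- The boundary value at `z = t * I` of `normalizedFactor` below. -/
noncomputable def boundaryFactor (t : ℝ) : ℂ :=
  boundaryForm xiTwoExcess (criticalQuotient t) (criticalQuotient (3 * t)) t

/-- The boundary value at `z = t * I` of a cubic polynomial with exactly two zeros in the right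
half-plane, chosen so that its argument stays within `π / 2` of that of `boundaryFactor`. -/
noncomputable def comparisonCubic (t : ℝ) : ℂ :=
  linearFactor xiTwoExcessApprox (t * I) * (12 - t ^ 2 - 5 / 2 * t * I)

lemma norm_criticalQuotient_le_one (t : ℝ) : ‖criticalQuotient t‖ ≤ 1 :=
  norm_unitShiftQuotient_le_one (by simp)

lemma abs_xiTwoExcess_sub_le : |xiTwoExcess - xiTwoExcessApprox| ≤ 1e-8 := by
  have pi_gt := Real.pi_gt_d20
  have pi_lt := Real.pi_lt_d20
  rw [xiTwoExcess, xiTwoExcessApprox, abs_le]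
  push_cast
  constructor <;> linarith

lemma xiTwoExcess_pos : 0 < xiTwoExcess := by
  rw [xiTwoExcess]
  linarith [Real.pi_gt_three]

lemma norm_ofReal_add_ofReal_mul_I_le {x y r : ℝ} (hr : 0 ≤ r) (h : x ^ 2 + y ^ 2 ≤ r ^ 2) :
    ‖(x + y * I : ℂ)‖ ≤ r := by
  refine le_of_sq_le_sq ?_ hr
  rwa [Complex.sq_norm, normSq_add_mul_I]

lemma norm_boundaryForm_sub_le {a a' t : ℝ} {h₁ h₃ h₁' h₃' : ℂ} (ht : 0 ≤ t) :
    ‖boundaryForm a h₁ h₃ t - boundaryForm a' h₁' h₃' t‖ ≤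
      |a - a'| * (t + 1 / 2) * (3 * (t ^ 2 + 1 / 4)) + 2 * ‖h₁ - h₁'‖ * (t ^ 2 + 5 / 4) +
        (‖h₁‖ * ‖h₃ - h₃'‖ + ‖h₃'‖ * ‖h₁ - h₁'‖) * (t ^ 2 + 9 / 4) := by
  have difference_eq : boundaryForm a h₁ h₃ t - boundaryForm a' h₁' h₃' t =
      (a - a' : ℝ) * ((-1 / 2 : ℝ) + t * I) * ((1 / 4 - 3 * t ^ 2 : ℝ) + (-2 * t : ℝ) * I) +
      2 * -(h₁ - h₁') * ((3 / 4 - t ^ 2 : ℝ) + (-2 * t : ℝ) * I) +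
      (h₁ * (h₃ - h₃') + h₃' * (h₁ - h₁')) * (t ^ 2 + 9 / 4 : ℝ) := by
    simp only [boundaryForm, linearFactor]
    push_cast
    ring
  rw [difference_eq]
  refine norm_add₃_le.trans ?_
  simp only [norm_mul, norm_neg, norm_real, Real.norm_eq_abs, Complex.norm_ofNat]
  rw [abs_of_nonneg (by positivity : 0 ≤ t ^ 2 + 9 / 4)]
  gcongr
  · exact norm_ofReal_add_ofReal_mul_I_le (by positivity) (by nlinarith)
  · exact norm_ofReal_add_ofReal_mul_I_le (by positivity) (by nlinarith [sq_nonneg (t ^ 2)])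
  · exact norm_ofReal_add_ofReal_mul_I_le (by positivity) (by nlinarith)
  · exact (norm_add_le _ _).trans_eq (by rw [norm_mul, norm_mul])

lemma sub_mul_le_re_mul_conj {z z' w : ℂ} {d b : ℝ} (hz : ‖z - z'‖ ≤ d) (hw : ‖w‖ ≤ b) :
    (z' * conj w).re - d * b ≤ (z * conj w).re := by
  have norm_le : ‖(z - z') * conj w‖ ≤ d * b := by
    rw [norm_mul, norm_conj]
    exact mul_le_mul hz hw (norm_nonneg _) ((norm_nonneg _).trans hz)
  have re_ge := (abs_le.mp ((abs_re_le_norm _).trans norm_le)).1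
  rw [sub_mul, sub_re] at re_ge
  linarith

/-! ### The boundary factor on `[0, 10]` -/

namespace RatPoly

/-- Real part of `comparisonCubic`. -/
def comparisonRe : RatPoly :=
  ⟨[12 * (1 - xiTwoExcessApprox / 2), 0,
    -(1 - xiTwoExcessApprox / 2) + 5 / 2 * xiTwoExcessApprox]⟩

/-- Imaginary part of `comparisonCubic`. -/
def comparisonIm : RatPoly :=
  ⟨[0, -5 / 2 * (1 - xiTwoExcessApprox / 2) + 12 * xiTwoExcessApprox, 0, -xiTwoExcessApprox]⟩

/-- Real part of `boundaryForm` at the centres of two discs. -/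
def boundaryRe (D₁ D₃ : RatDisc) : RatPoly :=
  ⟨[(1 - xiTwoExcessApprox / 2) / 4 - 3 / 2 * D₁.re +
      9 / 4 * (D₁.re * D₃.re - D₁.im * D₃.im),
    -4 * D₁.im,
    -3 * (1 - xiTwoExcessApprox / 2) + 2 * xiTwoExcessApprox + 2 * D₁.re +
      (D₁.re * D₃.re - D₁.im * D₃.im)]⟩

/-- Imaginary part of `boundaryForm` at the centres of two discs. -/
def boundaryIm (D₁ D₃ : RatDisc) : RatPoly :=
  ⟨[-3 / 2 * D₁.im + 9 / 4 * (D₁.re * D₃.im + D₁.im * D₃.re),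
    xiTwoExcessApprox / 4 - 2 * (1 - xiTwoExcessApprox / 2) + 4 * D₁.re,
    2 * D₁.im + (D₁.re * D₃.im + D₁.im * D₃.re),
    -3 * xiTwoExcessApprox]⟩

/-- Bound for the distance of `boundaryFactor` from `boundaryForm` at the centres of two discs
enclosing its two values of `criticalQuotient`. -/
def boundaryError (D₁ D₃ : RatDisc) : RatPoly :=
  ⟨[D₁.radius * (5 / 2 + 9 / 4 * D₃.modulus) + 9 / 4 * (D₃.radius + 1 / 10 ^ 6), 0,
    D₁.radius * (2 + D₃.modulus) + (D₃.radius + 1 / 10 ^ 6)]⟩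

lemma eval_comparison (t : ℝ) :
    comparisonCubic t = comparisonRe.eval t + comparisonIm.eval t * I := by
  simp only [comparisonCubic, linearFactor, comparisonRe, comparisonIm, eval, evalCoeffs]
  push_cast
  ring_nf
  simp only [I_sq]
  ring

lemma eval_boundary (D₁ D₃ : RatDisc) (t : ℝ) :
    boundaryForm xiTwoExcessApprox D₁.center D₃.center t =
      (boundaryRe D₁ D₃).eval t + (boundaryIm D₁ D₃).eval t * I := by
  simp only [boundaryForm, linearFactor, RatDisc.center, boundaryRe, boundaryIm, eval, evalCoeffs]
  push_cast
  ring_nf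
  simp only [I_sq]
  ring

lemma norm_boundaryFactor_sub_le {t : ℝ} (ht : t ∈ Icc (0 : ℝ) 11) {D₁ D₃ : RatDisc}
    (h₁ : D₁.Encloses (criticalQuotient t)) (h₃ : D₃.Encloses (criticalQuotient (3 * t))) :
    ‖boundaryFactor t - boundaryForm xiTwoExcessApprox D₁.center D₃.center t‖ ≤
      (boundaryError D₁ D₃).eval t := by
  obtain ⟨ht₀, ht₁⟩ := ht
  have quotient_le := norm_criticalQuotient_le_one t
  calc _ ≤ _ := norm_boundaryForm_sub_le ht₀
    _ ≤ 1e-8 * (11 + 1 / 2) * (3 * (t ^ 2 + 1 / 4)) + 2 * D₁.radius * (t ^ 2 + 5 / 4) +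
        (1 * D₃.radius + D₃.modulus * D₁.radius) * (t ^ 2 + 9 / 4) := by
      have := (norm_nonneg _).trans h₁.1
      have := (norm_nonneg _).trans h₃.2
      gcongr
      exacts [abs_xiTwoExcess_sub_le, h₁.1, h₃.1, h₃.2, h₁.1]
    _ ≤ _ := by
      simp only [eval, boundaryError, evalCoeffs]
      push_cast
      nlinarith [sq_nonneg t]

end RatPoly

/-- The data from which `boundaryFactor` is bounded on the interval of radius `halfWidth / 1000`
about `midpoint / 1000`: samples of `criticalQuotient` at the midpoint and at its triple (where the
trivial bound by `1` may be used instead), and a polynomial majorant of `comparisonCubic`. -/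
structure LineCertificate where
  midpoint : ℤ
  halfWidth : ℤ
  sample₁ : CriticalQuotientSample
  sample₃ : Option CriticalQuotientSample
  majorant : RatPoly

namespace LineCertificate

/-- Left end of the interval. -/
def lower (C : LineCertificate) : ℚ := (C.midpoint - C.halfWidth) / 1000

/-- Right end of the interval. -/
def upper (C : LineCertificate) : ℚ := (C.midpoint + C.halfWidth) / 1000

/-- Radius of the interval. -/
def radius (C : LineCertificate) : ℚ := C.halfWidth / 1000

/-- Enclosure of `criticalQuotient t` for `t` in the interval. -/
def disc₁ (C : LineCertificate) : RatDisc := C.sample₁.disc C.radius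

/-- Enclosure of `criticalQuotient (3 * t)` for `t` in the interval. -/
def disc₃ (C : LineCertificate) : RatDisc :=
  C.sample₃.elim .unit fun S ↦ S.disc (3 * C.radius)

/-- The conditions under which the certificate proves `re_boundaryFactor_mul_conj_ge`. -/
def Valid (C : LineCertificate) : Prop :=
  C.sample₁.ValidWithin C.midpoint C.radius ∧
  (∀ S ∈ C.sample₃, S.ValidWithin (3 * C.midpoint) (3 * C.radius)) ∧
  C.majorant.BernsteinNonneg C.lower C.upper ∧
  (C.majorant * C.majorant - (RatPoly.comparisonRe * RatPoly.comparisonRe +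
    RatPoly.comparisonIm * RatPoly.comparisonIm)).BernsteinNonneg C.lower C.upper ∧
  (RatPoly.boundaryRe C.disc₁ C.disc₃ * RatPoly.comparisonRe +
    RatPoly.boundaryIm C.disc₁ C.disc₃ * RatPoly.comparisonIm -
    RatPoly.boundaryError C.disc₁ C.disc₃ * C.majorant -
    ⟨[1 / 1000]⟩).BernsteinNonneg C.lower C.upper

instance (C : LineCertificate) : Decidable C.Valid := inferInstanceAs (Decidable (_ ∧ _))

variable {C : LineCertificate} {t : ℝ}

lemma abs_sub_midpoint_le (ht : t ∈ Ico (C.lower : ℝ) C.upper) :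
    |t - C.midpoint / 1000| ≤ C.radius := by
  obtain ⟨h₁, h₂⟩ := ht
  rw [lower] at h₁
  rw [upper] at h₂
  rw [radius, abs_le]
  push_cast at *
  constructor <;> linarith

variable (hC : C.Valid) (ht : t ∈ Ico (C.lower : ℝ) C.upper)
include hC ht

lemma Valid.disc₁_encloses : C.disc₁.Encloses (criticalQuotient t) :=
  hC.1.disc_encloses (abs_sub_midpoint_le ht)

lemma Valid.disc₃_encloses : C.disc₃.Encloses (criticalQuotient (3 * t)) := by
  rw [disc₃]
  cases h : C.sample₃ with
  | none => exact RatDisc.unit_encloses (norm_criticalQuotient_le_one _)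
  | some S =>
    refine (hC.2.1 S h).disc_encloses ?_
    have := abs_sub_midpoint_le ht
    rw [abs_le] at this ⊢
    push_cast
    constructor <;> linarith

lemma Valid.norm_comparisonCubic_le : ‖comparisonCubic t‖ ≤ C.majorant.eval t := by
  have sq_le := hC.2.2.2.1.eval_nonneg ht
  simp only [RatPoly.eval_sub, RatPoly.eval_add, RatPoly.eval_mul] at sq_le
  rw [RatPoly.eval_comparison]
  exact norm_ofReal_add_ofReal_mul_I_le (hC.2.2.1.eval_nonneg ht) (by linarith)

lemma Valid.re_boundaryFactor_mul_conj_ge (ht' : t ∈ Icc (0 : ℝ) 11) :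
    1 / 1000 ≤ (boundaryFactor t * conj (comparisonCubic t)).re := by
  have gap := hC.2.2.2.2.eval_nonneg ht
  have one_thousandth : RatPoly.eval ⟨[1 / 1000]⟩ t = 1 / 1000 := by
    simp [RatPoly.eval, RatPoly.evalCoeffs]
  simp only [RatPoly.eval_sub, RatPoly.eval_add, RatPoly.eval_mul, one_thousandth] at gap
  have re_ge := sub_mul_le_re_mul_conj
    (RatPoly.norm_boundaryFactor_sub_le ht' (hC.disc₁_encloses ht) (hC.disc₃_encloses ht))
    (hC.norm_comparisonCubic_le ht)
  have re_eq (a b c d : ℝ) : ((a + b * I) * conj (c + d * I) : ℂ).re = a * c + b * d := by simp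
  rw [RatPoly.eval_boundary] at re_ge
  nth_rewrite 1 [RatPoly.eval_comparison] at re_ge
  rw [re_eq] at re_ge
  linarith

end LineCertificate

/-- Certificates whose intervals cover `[0, 10]`. -/
def lineCertificates : List LineCertificate := [
  ⟨290, 290, ⟨⟨977081, -13075⟩, 977168, 20⟩,
    some ⟨⟨976307, -39256⟩, 977095, 20⟩, ⟨[11.720, -0.003, -0.698]⟩⟩,
  ⟨850, 270, ⟨⟨976346, -38352⟩, 977098, 20⟩,
    some ⟨⟨969550, -115821⟩, 976443, 20⟩, ⟨[11.749, -0.098, -0.620]⟩⟩,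
  ⟨1370, 250, ⟨⟨975010, -61895⟩, 976972, 20⟩,
    some ⟨⟨956636, -189013⟩, 975129, 20⟩, ⟨[11.992, -0.523, -0.434]⟩⟩,
  ⟨1870, 250, ⟨⟨973117, -84641⟩, 976791, 20⟩,
    some ⟨⟨936738, -262873⟩, 972923, 20⟩, ⟨[13.047, -1.805, -0.044]⟩⟩,
  ⟨2350, 230, ⟨⟨970721, -106615⟩, 976558, 20⟩,
    some ⟨⟨908139, -338979⟩, 969341, 20⟩, ⟨[16.385, -4.937, 0.691]⟩⟩,
  ⟨2780, 200, ⟨⟨968075, -126448⟩, 976298, 20⟩,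
    some ⟨⟨870455, -413878⟩, 963839, 20⟩, ⟨[23.042, -10.105, 1.694]⟩⟩,
  ⟨3230, 250, ⟨⟨964775, -147386⟩, 975967, 20⟩,
    some ⟨⟨809597, -502721⟩, 952982, 41⟩, ⟨[31.047, -15.482, 2.597]⟩⟩,
  ⟨3760, 280, ⟨⟨960153, -172335⟩, 975496, 20⟩,
    some ⟨⟨673491, -626432⟩, 919786, 150⟩, ⟨[31.035, -15.552, 2.618]⟩⟩,
  ⟨4330, 290, ⟨⟨954224, -199589⟩, 974873, 20⟩,
    some ⟨⟨248355, -687665⟩, 731138, 857⟩, ⟨[21.453, -10.813, 2.032]⟩⟩,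
  ⟨4810, 190, ⟨⟨948391, -222944⟩, 974243, 20⟩,
    some ⟨⟨211646, 173030⟩, 273374, 3400⟩, ⟨[13.855, -7.492, 1.669]⟩⟩,
  ⟨5270, 270, ⟨⟨942006, -245734⟩, 973529, 20⟩,
    some ⟨⟨810069, -137036⟩, 821578, 5297⟩, ⟨[9.240, -5.644, 1.484]⟩⟩,
  ⟨6230, 690, ⟨⟨925784, -294872⟩, 971609, 20⟩,
    none, ⟨[5.306, -4.236, 1.358]⟩⟩,
  ⟨7750, 830, ⟨⟨889496, -378646⟩, 966734, 20⟩,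
    none, ⟨[7.223, -4.747, 1.392]⟩⟩,
  ⟨9310, 730, ⟨⟨829872, -476362⟩, 956874, 31⟩,
    none, ⟨[16.406, -6.889, 1.517]⟩⟩]

set_option maxRecDepth 100000 in
lemma lineCertificates_valid : ∀ C ∈ lineCertificates, C.Valid := by decide +kernel

/-- Every point of `[a, b)` lies in one of the intervals of the certificates. -/
def CoversIco : List LineCertificate → ℚ → ℚ → Prop
  | [], a, b => b ≤ a
  | C :: l, a, b => C.lower ≤ a ∧ CoversIco l C.upper b

lemma CoversIco.exists_mem {l : List LineCertificate} {a b : ℚ} (h : CoversIco l a b) {t : ℝ}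
    (ht : t ∈ Ico (a : ℝ) b) : ∃ C ∈ l, t ∈ Ico (C.lower : ℝ) C.upper := by
  induction l generalizing a with
  | nil => exact absurd (ht.1.trans_lt ht.2) (not_lt.mpr (by exact_mod_cast h))
  | cons C l ih =>
    rcases lt_or_ge t C.upper with lt_upper | upper_le
    · have lower_le : (C.lower : ℝ) ≤ a := by exact_mod_cast h.1
      exact ⟨C, List.mem_cons_self, lower_le.trans ht.1, lt_upper⟩
    · obtain ⟨C', hC', hmem⟩ := ih h.2 ⟨upper_le, ht.2⟩
      exact ⟨C', List.mem_cons_of_mem C hC', hmem⟩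

lemma lineCertificates_coversIco : CoversIco lineCertificates 0 (1004 / 100) := by
  norm_num [lineCertificates, CoversIco, LineCertificate.lower, LineCertificate.upper]

lemma one_thousandth_le_re_boundaryFactor_mul_conj {t : ℝ} (ht₀ : 0 ≤ t) (ht₁ : t ≤ 10) :
    1 / 1000 ≤ (boundaryFactor t * conj (comparisonCubic t)).re := by
  obtain ⟨C, hC, hmem⟩ := lineCertificates_coversIco.exists_mem (t := t)
    ⟨by simpa using ht₀, by push_cast; linarith⟩
  exact (lineCertificates_valid C hC).re_boundaryFactor_mul_conj_ge hmem ⟨ht₀, by linarith⟩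

/-! ### The boundary factor on the whole line -/

lemma norm_linearFactor_mul_I_sq (a t : ℝ) :
    ‖linearFactor a (t * I)‖ ^ 2 = (1 - a / 2) ^ 2 + (a * t) ^ 2 := by
  have linear_eq : linearFactor a (t * I) = (1 - a / 2 : ℝ) + (a * t : ℝ) * I := by
    rw [linearFactor]
    push_cast
    ring
  rw [linear_eq, Complex.sq_norm, normSq_add_mul_I]

lemma mul_le_norm_linearFactor (t : ℝ) :
    0.047 * t ≤ ‖linearFactor xiTwoExcessApprox (t * I)‖ := by
  refine le_of_sq_le_sq ?_ (norm_nonneg _)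
  rw [norm_linearFactor_mul_I_sq, xiTwoExcessApprox]
  norm_num
  nlinarith

lemma re_boundaryForm_zero_mul_conj (t : ℝ) :
    (boundaryForm xiTwoExcessApprox 0 0 t * conj (comparisonCubic t)).re =
      ‖linearFactor xiTwoExcessApprox (t * I)‖ ^ 2 * (3 * t ^ 4 - 31.25 * t ^ 2 + 3) := by
  have quadratics : ((1 / 4 - 3 * t ^ 2 - 2 * t * I) * conj (12 - t ^ 2 - 5 / 2 * t * I) : ℂ).re =
      3 * t ^ 4 - 31.25 * t ^ 2 + 3 := by
    simp [← ofReal_pow, map_ofNat]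
    ring
  rw [← quadratics, ← re_ofReal_mul, boundaryForm, comparisonCubic, ofReal_pow, ← mul_conj']
  simp only [map_mul]
  congr 1
  ring

section Tail

variable {t : ℝ} (ht : 10 ≤ t)
include ht

lemma le_norm_linearFactor : 1.08 ≤ ‖linearFactor xiTwoExcessApprox (t * I)‖ := by
  refine le_of_sq_le_sq ?_ (norm_nonneg _)
  rw [norm_linearFactor_mul_I_sq, xiTwoExcessApprox]
  norm_num
  nlinarith

lemma norm_comparisonCubic_le :
    ‖comparisonCubic t‖ ≤ ‖linearFactor xiTwoExcessApprox (t * I)‖ * (t ^ 2 - 8.4) := by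
  have quadratic_eq : (12 - t ^ 2 - 5 / 2 * t * I : ℂ) =
      (12 - t ^ 2 : ℝ) + (-(5 / 2 * t) : ℝ) * I := by
    push_cast
    ring
  rw [comparisonCubic, norm_mul, quadratic_eq]
  gcongr
  refine norm_ofReal_add_ofReal_mul_I_le (by nlinarith) ?_
  norm_num
  nlinarith

lemma norm_boundaryFactor_sub_boundaryForm_zero_le :
    ‖boundaryFactor t - boundaryForm xiTwoExcessApprox 0 0 t‖ ≤
      ‖linearFactor xiTwoExcessApprox (t * I)‖ *
        (1e-6 * (t ^ 2 + 1) + (3 * t ^ 2 + 4.75) / 1.08) := by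
  have one_le := le_norm_linearFactor ht
  have mul_le := mul_le_norm_linearFactor t
  set g := ‖linearFactor xiTwoExcessApprox (t * I)‖
  calc _ ≤ _ := norm_boundaryForm_sub_le (by linarith)
    _ ≤ 1e-8 * (25 * g) * (3 * (t ^ 2 + 1 / 4)) + 2 * 1 * (t ^ 2 + 5 / 4) +
        (1 * 1 + 0 * 1) * (t ^ 2 + 9 / 4) := by
      simp only [sub_zero, norm_zero, zero_mul]
      gcongr
      exacts [abs_xiTwoExcess_sub_le, by linarith, norm_criticalQuotient_le_one t,
        norm_criticalQuotient_le_one t, norm_criticalQuotient_le_one (3 * t)]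
    _ = 0.75e-6 * (t ^ 2 + 1 / 4) * g + (3 * t ^ 2 + 4.75) / 1.08 * 1.08 := by ring
    _ ≤ 1e-6 * (t ^ 2 + 1) * g + (3 * t ^ 2 + 4.75) / 1.08 * g := by gcongr <;> norm_num
    _ = _ := by ring

lemma pow_three_le_re_boundaryFactor_mul_conj_of_ten_le :
    1e-10 * (1 + t ^ 2) ^ 3 ≤ (boundaryFactor t * conj (comparisonCubic t)).re := by
  have re_ge := sub_mul_le_re_mul_conj (norm_boundaryFactor_sub_boundaryForm_zero_le ht)
    (norm_comparisonCubic_le ht)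
  rw [re_boundaryForm_zero_mul_conj] at re_ge
  have mul_le := mul_le_norm_linearFactor t
  set g := ‖linearFactor xiTwoExcessApprox (t * I)‖
  have t_sq_ge : 100 ≤ t ^ 2 := by nlinarith
  have polynomial_ge : 0.05 * t ^ 4 ≤ 3 * t ^ 4 - 31.25 * t ^ 2 + 3 -
      (1e-6 * (t ^ 2 + 1) + (3 * t ^ 2 + 4.75) / 1.08) * (t ^ 2 - 8.4) := by
    norm_num
    nlinarith
  calc 1e-10 * (1 + t ^ 2) ^ 3 ≤ 1e-10 * (t ^ 2 + t ^ 2) ^ 3 := by gcongr; linarith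
    _ = 8e-10 * t ^ 6 := by ring
    _ ≤ (0.047 * t) ^ 2 * (0.05 * t ^ 4) := by
      have : 0 ≤ t ^ 6 := by positivity
      norm_num
      linarith
    _ ≤ g ^ 2 * (0.05 * t ^ 4) := by gcongr
    _ ≤ g ^ 2 * _ := mul_le_mul_of_nonneg_left polynomial_ge (sq_nonneg g)
    _ ≤ _ := by linarith

end Tail

lemma pow_three_le_re_boundaryFactor_mul_conj_of_nonneg {t : ℝ} (ht : 0 ≤ t) :
    1e-10 * (1 + t ^ 2) ^ 3 ≤ (boundaryFactor t * conj (comparisonCubic t)).re := by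
  rcases le_total 10 t with ten_le | le_ten
  · exact pow_three_le_re_boundaryFactor_mul_conj_of_ten_le ten_le
  · calc 1e-10 * (1 + t ^ 2) ^ 3 ≤ 1e-10 * (1 + 10 ^ 2) ^ 3 := by gcongr
      _ ≤ 1 / 1000 := by norm_num
      _ ≤ _ := one_thousandth_le_re_boundaryFactor_mul_conj ht le_ten

lemma criticalQuotient_neg (t : ℝ) : criticalQuotient (-t) = conj (criticalQuotient t) := by
  rw [criticalQuotient, criticalQuotient, unitShiftQuotient, unitShiftQuotient, map_div₀,
    ← entireXi_conj, ← entireXi_conj]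
  simp [map_ofNat]

lemma linearFactor_conj (a : ℝ) (z : ℂ) : linearFactor a (conj z) = conj (linearFactor a z) := by
  simp [linearFactor, map_ofNat]

lemma boundaryFactor_neg (t : ℝ) : boundaryFactor (-t) = conj (boundaryFactor t) := by
  rw [boundaryFactor, boundaryFactor, criticalQuotient_neg, mul_neg, criticalQuotient_neg,
    boundaryForm, boundaryForm]
  simp [← linearFactor_conj, map_ofNat]

lemma comparisonCubic_neg (t : ℝ) : comparisonCubic (-t) = conj (comparisonCubic t) := by
  simp [comparisonCubic, ← linearFactor_conj, map_ofNat]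

lemma pow_three_le_re_boundaryFactor_mul_conj (t : ℝ) :
    1e-10 * (1 + t ^ 2) ^ 3 ≤ (boundaryFactor t * conj (comparisonCubic t)).re := by
  rcases le_total 0 t with t_nonneg | t_nonpos
  · exact pow_three_le_re_boundaryFactor_mul_conj_of_nonneg t_nonneg
  · have := pow_three_le_re_boundaryFactor_mul_conj_of_nonneg (neg_nonneg.mpr t_nonpos)
    rwa [boundaryFactor_neg, comparisonCubic_neg, ← map_mul, conj_re, neg_sq] at this

/-! ### Growth in the right half-plane -/

/-- The filter of neighbourhoods of infinity in the closed right half-plane. -/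
noncomputable def rightInfinity : Filter ℂ := Bornology.cobounded ℂ ⊓ 𝓟 {z | 0 ≤ z.re}

lemma eventually_re_nonneg_rightInfinity : ∀ᶠ z in rightInfinity, 0 ≤ z.re :=
  eventually_inf_principal.mpr (.of_forall fun _ hz ↦ hz)

lemma tendsto_norm_rightInfinity : Tendsto (fun z : ℂ ↦ ‖z‖) rightInfinity atTop :=
  tendsto_norm_cobounded_atTop.mono_left inf_le_left

lemma eventually_ne_zero_rightInfinity : ∀ᶠ z : ℂ in rightInfinity, z ≠ 0 := by
  filter_upwards [tendsto_norm_rightInfinity.eventually_gt_atTop 0] with z hz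
  exact norm_pos_iff.mp hz

lemma tendsto_ofReal_rightInfinity : Tendsto ((↑) : ℝ → ℂ) atTop rightInfinity := by
  refine tendsto_inf.mpr ⟨tendsto_norm_atTop_iff_cobounded.mp ?_, tendsto_principal.mpr ?_⟩
  · simpa only [norm_real] using tendsto_norm_atTop_atTop
  · filter_upwards [eventually_ge_atTop 0] with x hx
    exact hx

lemma exists_norm_le_of_isBigO_one {k : ℂ → ℂ} (hk : ∀ z : ℂ, 0 ≤ z.re → ContinuousAt k z)
    (hb : k =O[rightInfinity] fun _ ↦ (1 : ℂ)) : ∃ B, ∀ z : ℂ, 0 ≤ z.re → ‖k z‖ ≤ B := by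
  obtain ⟨C, hC⟩ := hb.bound
  rw [rightInfinity, eventually_inf_principal, ← comap_norm_atTop, eventually_comap] at hC
  obtain ⟨R, hR⟩ := eventually_atTop.mp hC
  have compact : IsCompact (Metric.closedBall (0 : ℂ) R ∩ {z : ℂ | 0 ≤ z.re}) :=
    (isCompact_closedBall _ _).inter_right (isClosed_le continuous_const continuous_re)
  obtain ⟨B, hB⟩ := compact.exists_bound_of_continuousOn (f := k)
    fun z hz ↦ (hk z hz.2).continuousWithinAt
  refine ⟨max B C, fun z hz ↦ ?_⟩
  rcases le_total ‖z‖ R with near | far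
  · exact (hB z ⟨mem_closedBall_zero_iff.mpr near, hz⟩).trans (le_max_left _ _)
  · exact (by simpa using hR _ far z rfl hz : ‖k z‖ ≤ C).trans (le_max_right _ _)

lemma re_nonneg_of_isBigO_one {k : ℂ → ℂ} (hd : ∀ z : ℂ, 0 ≤ z.re → DifferentiableAt ℂ k z)
    (hb : k =O[rightInfinity] fun _ ↦ (1 : ℂ)) (hl : ∀ t : ℝ, 0 ≤ (k (t * I)).re) {z : ℂ}
    (hz : 0 ≤ z.re) : 0 ≤ (k z).re := by
  obtain ⟨B, hB⟩ := exists_norm_le_of_isBigO_one (fun z hz ↦ (hd z hz).continuousAt) hb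
  exact re_nonneg_of_re_mul_I_nonneg (diffContOnCl_of_differentiableAt_re_nonneg hd) hB hl hz

lemma isLittleO_const_id_rightInfinity (c : ℂ) : (fun _ : ℂ ↦ c) =o[rightInfinity] (fun z ↦ z) :=
  isLittleO_const_left.mpr (.inr tendsto_norm_rightInfinity)

lemma isTheta_add_mul_rightInfinity {a c : ℂ} (hc : c ≠ 0) :
    (fun z : ℂ ↦ a + c * z) =Θ[rightInfinity] (fun z ↦ z) := by
  have : (fun z : ℂ ↦ c * z + a) =Θ[rightInfinity] (fun z ↦ z) :=
    ((isTheta_const_mul_left hc).mpr (isTheta_refl _ _)).add_isLittleO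
      (isLittleO_const_id_rightInfinity a)
  simpa only [add_comm] using this

lemma isTheta_sub_rightInfinity (a : ℂ) : (fun z : ℂ ↦ z - a) =Θ[rightInfinity] (fun z ↦ z) := by
  simpa [neg_add_eq_sub] using isTheta_add_mul_rightInfinity (a := -a) one_ne_zero

lemma isTheta_add_rightInfinity (a : ℂ) : (fun z : ℂ ↦ z + a) =Θ[rightInfinity] (fun z ↦ z) := by
  simpa using isTheta_sub_rightInfinity (-a)

lemma isBigO_inv_one_rightInfinity :
    (fun z : ℂ ↦ z⁻¹) =O[rightInfinity] fun _ ↦ (1 : ℂ) :=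
  (tendsto_inv₀_cobounded.mono_left inf_le_left).isBigO_one ℂ

lemma re_div_mul_I_add_one (r t : ℝ) : (r / (t * I + 1) : ℂ).re = r / (1 + t ^ 2) := by
  have denominator : (t * I + 1 : ℂ) = (1 : ℝ) + t * I := by push_cast; ring
  rw [denominator, div_re, normSq_add_mul_I]
  simp

lemma one_le_norm_add_one {z : ℂ} (hz : 0 ≤ z.re) : 1 ≤ ‖z + 1‖ := by
  have := re_le_norm (z + 1)
  rw [add_re, one_re] at this
  linarith

lemma div_add_one_le_re {k : ℂ → ℂ} (hd : ∀ z : ℂ, 0 ≤ z.re → DifferentiableAt ℂ k z)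
    (hb : k =O[rightInfinity] fun _ ↦ (1 : ℂ)) {r : ℝ}
    (hl : ∀ t : ℝ, r / (1 + t ^ 2) ≤ (k (t * I)).re) {x : ℝ} (hx : 0 ≤ x) :
    r / (x + 1) ≤ (k x).re := by
  have difference_nonneg : 0 ≤ (k x - r / (x + 1)).re := by
    refine re_nonneg_of_isBigO_one (k := fun z ↦ k z - r / (z + 1)) (fun z hz ↦ ?_)
      (hb.sub ?_) (fun t ↦ ?_) (by simpa using hx)
    · have : z + 1 ≠ 0 := norm_pos_iff.mp (one_pos.trans_le (one_le_norm_add_one hz))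
      exact (hd z hz).sub ((differentiableAt_const _).div (by fun_prop) this)
    · refine .of_bound ‖(r : ℂ)‖ ?_
      filter_upwards [eventually_re_nonneg_rightInfinity] with z hz
      rw [norm_div, norm_one, mul_one]
      exact div_le_self (norm_nonneg _) (one_le_norm_add_one hz)
    · rw [sub_re, re_div_mul_I_add_one]
      linarith [hl t]
  have real_value : (r / (x + 1) : ℂ) = (r / (x + 1) : ℝ) := by push_cast; rfl
  rw [sub_re, real_value, ofReal_re] at difference_nonneg
  linarith

lemma not_isLittleO_inv_of_le_re {k : ℂ → ℂ} (hd : ∀ z : ℂ, 0 ≤ z.re → DifferentiableAt ℂ k z)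
    {r : ℝ} (hr : 0 < r) (hl : ∀ t : ℝ, r / (1 + t ^ 2) ≤ (k (t * I)).re) :
    ¬k =o[rightInfinity] fun z ↦ z⁻¹ := by
  intro hk
  have small : ∀ᶠ x : ℝ in atTop, ‖k x‖ ≤ r / 3 * ‖(x : ℂ)⁻¹‖ :=
    tendsto_ofReal_rightInfinity.eventually (hk.bound (by positivity))
  obtain ⟨x, hx, hx1⟩ := (small.and (eventually_ge_atTop 1)).exists
  have lower : r / (2 * x) ≤ r / (x + 1) := by gcongr; linarith
  have large := div_add_one_le_re hd (hk.isBigO.trans isBigO_inv_one_rightInfinity) hl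
    (zero_le_one.trans hx1)
  have upper := (re_le_norm (k x)).trans hx
  rw [norm_inv, norm_real, Real.norm_of_nonneg (by linarith)] at upper
  have third_lt_half : r / 3 * x⁻¹ < r / (2 * x) := by
    rw [← div_eq_mul_inv, div_div]
    gcongr
    norm_num
  linarith

lemma neg_dslope_zero_eq {G : ℂ → ℂ} {r : ℝ} (hG : G 0 = -r) {z : ℂ} (hz : z ≠ 0) :
    -dslope G 0 z = -G z / z - r / z := by
  rw [dslope_of_ne _ hz, slope_def_field, hG]
  field_simp
  ring

lemma differentiableAt_dslope_zero {G : ℂ → ℂ} (hn : ∀ᶠ z in 𝓝 0, DifferentiableAt ℂ G z) {z : ℂ}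
    (hz : DifferentiableAt ℂ G z) : DifferentiableAt ℂ (dslope G 0) z := by
  rcases eq_or_ne z 0 with rfl | ne
  · obtain ⟨U, hU, differentiable⟩ := eventually_iff_exists_mem.mp hn
    exact ((differentiableOn_dslope hU).mpr fun w hw ↦
      (differentiable w hw).differentiableWithinAt).differentiableAt hU
  · exact (differentiableAt_dslope_of_ne ne).mpr hz

lemma re_neg_dslope_mul_I_nonneg {G : ℂ → ℂ} (hn : ∀ᶠ z in 𝓝 0, DifferentiableAt ℂ G z) {r : ℝ}
    (hG : G 0 = -r) (hl : ∀ t : ℝ, t ≠ 0 → 0 ≤ (-G (t * I) / (t * I)).re) (t : ℝ) :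
    0 ≤ (-dslope G 0 (t * I)).re := by
  have off_zero (t : ℝ) (ht : t ≠ 0) : 0 ≤ (-dslope G 0 (t * I)).re := by
    have pole_re : (r / (t * I) : ℂ).re = 0 := by simp [div_re]
    rw [neg_dslope_zero_eq hG (by simpa using ht), sub_re, pole_re, sub_zero]
    exact hl t ht
  rcases eq_or_ne t 0 with rfl | ne
  · have continuous_at : ContinuousAt (fun t : ℝ ↦ (-dslope G 0 (t * I)).re) 0 := by
      refine continuous_re.continuousAt.comp (ContinuousAt.neg (ContinuousAt.comp ?_ ?_))
      · exact (differentiableAt_dslope_zero hn (by simpa using hn.self_of_nhds)).continuousAt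
      · fun_prop
    refine ge_of_tendsto (continuous_at.continuousWithinAt (s := {0}ᶜ)) ?_
    filter_upwards [self_mem_nhdsWithin] with t ht
    exact off_zero t ht
  · exact off_zero t ne

lemma not_tendsto_zero_of_re_neg_div_nonneg {G : ℂ → ℂ}
    (hd : ∀ z : ℂ, 0 ≤ z.re → DifferentiableAt ℂ G z)
    (hn : ∀ᶠ z in 𝓝 0, DifferentiableAt ℂ G z) {r : ℝ} (hr : 0 < r) (hG : G 0 = -r)
    (hl : ∀ t : ℝ, t ≠ 0 → 0 ≤ (-G (t * I) / (t * I)).re) :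
    ¬Tendsto G rightInfinity (𝓝 0) := by
  intro hlim
  have bounded : (fun z ↦ -dslope G 0 z) =O[rightInfinity] fun _ ↦ (1 : ℂ) := by
    have numerator : (fun z ↦ -G z - r) =O[rightInfinity] fun _ ↦ (1 : ℂ) :=
      (hlim.neg.sub_const (r : ℂ)).isBigO_one ℂ
    refine ((numerator.mul isBigO_inv_one_rightInfinity).congr' ?_ (by simp))
    filter_upwards [eventually_ne_zero_rightInfinity] with z hz
    rw [neg_dslope_zero_eq hG hz, ← sub_div, div_eq_mul_inv]
  have re_nonneg (x : ℝ) (hx : 0 ≤ x) : 0 ≤ (-dslope G 0 x).re :=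
    re_nonneg_of_isBigO_one (fun z hz ↦ (differentiableAt_dslope_zero hn (hd z hz)).neg) bounded
      (re_neg_dslope_mul_I_nonneg hn hG hl) hx
  have re_le (x : ℝ) (hx : 0 < x) : (G x).re ≤ -r := by
    have := re_nonneg x hx.le
    rw [neg_dslope_zero_eq hG (mod_cast hx.ne'), ← sub_div, div_ofReal_re, sub_re, neg_re,
      ofReal_re, le_div_iff₀ hx] at this
    linarith
  have re_tendsto : Tendsto (fun x : ℝ ↦ (G x).re) atTop (𝓝 0) :=
    (continuous_re.tendsto 0).comp (hlim.comp tendsto_ofReal_rightInfinity)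
  have zero_le_neg := le_of_tendsto re_tendsto ((eventually_gt_atTop 0).mono re_le)
  linarith

/-! ### Zeros of the main factor in the right half-plane -/

/-- The nontrivial factor of `mainTerm` below: an entire function all of whose terms are multiples
of two values of `entireXi`. -/
noncomputable def mainFactor (z : ℂ) : ℂ :=
  entireXi (z + 3 / 2) * entireXi (3 * z + 3 / 2) *
      (linearFactor xiTwoExcess z * ((z - 1 / 2) * (3 * z - 1 / 2))) -
    entireXi (z + 1 / 2) * entireXi (3 * z + 1 / 2) * ((z + 3 / 2) * (z - 3 / 2)) -
    2 * entireXi (z + 1 / 2) * entireXi (3 * z + 3 / 2) * ((z - 1 / 2) * (z - 3 / 2))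

/-- The product of values of `entireXi` that dominates `mainFactor` in the right half-plane. -/
noncomputable def dominantProduct (z : ℂ) : ℂ := entireXi (z + 3 / 2) * entireXi (3 * z + 3 / 2)

/-- The quotient of `mainFactor` by `dominantProduct`. -/
noncomputable def normalizedFactor (z : ℂ) : ℂ :=
  linearFactor xiTwoExcess z * ((z - 1 / 2) * (3 * z - 1 / 2)) -
    (unitShiftQuotient (z + 1 / 2) * unitShiftQuotient (3 * z + 1 / 2) *
        ((z + 3 / 2) * (z - 3 / 2)) +
      2 * unitShiftQuotient (z + 1 / 2) * ((z - 1 / 2) * (z - 3 / 2)))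

@[fun_prop]
lemma differentiable_linearFactor (a : ℝ) : Differentiable ℂ (linearFactor a) := by
  unfold linearFactor
  fun_prop

@[fun_prop]
lemma differentiable_mainFactor : Differentiable ℂ mainFactor := by
  unfold mainFactor
  fun_prop

@[fun_prop]
lemma differentiable_dominantProduct : Differentiable ℂ dominantProduct := by
  unfold dominantProduct
  fun_prop

lemma dominantProduct_ne_zero {z : ℂ} (hz : 0 ≤ z.re) : dominantProduct z ≠ 0 :=
  mul_ne_zero (entireXi_ne_zero (by norm_num; linarith)) (entireXi_ne_zero (by norm_num; linarith))

lemma mainFactor_eq_mul {z : ℂ} (hz : 0 ≤ z.re) :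
    mainFactor z = dominantProduct z * normalizedFactor z := by
  obtain ⟨h₁, h₃⟩ := mul_ne_zero_iff.mp (dominantProduct_ne_zero hz)
  have shift₁ : z + 1 / 2 + 1 = z + 3 / 2 := by ring
  have shift₃ : 3 * z + 1 / 2 + 1 = 3 * z + 3 / 2 := by ring
  simp only [mainFactor, dominantProduct, normalizedFactor, unitShiftQuotient, shift₁, shift₃]
  generalize entireXi (z + 3 / 2) = x₁ at *
  generalize entireXi (3 * z + 3 / 2) = x₃ at *
  field_simp
  ring

lemma normalizedFactor_mul_I (t : ℝ) : normalizedFactor (t * I) = boundaryFactor t := by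
  have arg₁ : (t * I + 1 / 2 : ℂ) = 1 / 2 + t * I := by ring
  have arg₃ : (3 * (t * I) + 1 / 2 : ℂ) = 1 / 2 + (3 * t : ℝ) * I := by push_cast; ring
  rw [normalizedFactor, boundaryFactor, boundaryForm, criticalQuotient, criticalQuotient, arg₁,
    arg₃]
  linear_combination (3 * t ^ 2 * linearFactor xiTwoExcess (t * I) -
    unitShiftQuotient (1 / 2 + t * I) * t ^ 2 *
      (unitShiftQuotient (1 / 2 + (3 * t : ℝ) * I) + 2)) * I_sq

lemma isBigO_unitShiftQuotient_one {u : ℂ → ℂ} (hu : ∀ z : ℂ, 0 ≤ z.re → 0 ≤ (u z).re) :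
    (fun z ↦ unitShiftQuotient (u z)) =O[rightInfinity] fun _ ↦ (1 : ℂ) := by
  refine .of_bound 1 ?_
  filter_upwards [eventually_re_nonneg_rightInfinity] with z hz
  simpa using norm_unitShiftQuotient_le_one (hu z hz)

lemma isTheta_linearFactor {a : ℝ} (ha : a ≠ 0) :
    linearFactor a =Θ[rightInfinity] (fun z ↦ z) :=
  isTheta_add_mul_rightInfinity (mod_cast ha)

lemma isLittleO_mul_self_rightInfinity :
    (fun z : ℂ ↦ z * z) =o[rightInfinity] fun z ↦ z * (z * z) := by
  simpa only [one_mul] using (isLittleO_const_id_rightInfinity 1).mul_isBigO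
    (isBigO_refl (fun z : ℂ ↦ z * z) rightInfinity)

lemma isTheta_normalizedFactor :
    normalizedFactor =Θ[rightInfinity] fun z ↦ z * (z * z) := by
  have leading : (fun z : ℂ ↦ linearFactor xiTwoExcess z * ((z - 1 / 2) * (3 * z - 1 / 2)))
      =Θ[rightInfinity] fun z ↦ z * (z * z) := by
    refine (isTheta_linearFactor xiTwoExcess_pos.ne').mul ((isTheta_sub_rightInfinity _).mul ?_)
    simpa [neg_add_eq_sub] using
      isTheta_add_mul_rightInfinity (a := -(1 / 2)) (three_ne_zero (α := ℂ))
  have quotient₁ := isBigO_unitShiftQuotient_one (u := fun z ↦ z + 1 / 2)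
    fun z hz ↦ by norm_num; linarith
  have quotient₃ := isBigO_unitShiftQuotient_one (u := fun z ↦ 3 * z + 1 / 2)
    fun z hz ↦ by norm_num; linarith
  have term₁ := (quotient₁.mul quotient₃).mul
    ((isTheta_add_rightInfinity (3 / 2)).1.mul (isTheta_sub_rightInfinity (3 / 2)).1)
  have term₂ := (quotient₁.const_mul_left 2).mul
    ((isTheta_sub_rightInfinity (1 / 2)).1.mul (isTheta_sub_rightInfinity (3 / 2)).1)
  simp only [one_mul] at term₁ term₂
  have sum := leading.add_isLittleO
    ((term₁.add term₂).trans_isLittleO isLittleO_mul_self_rightInfinity).neg_left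
  exact (EventuallyEq.of_eq (funext fun z ↦ sub_eq_add_neg _ _)).trans_isTheta sum

lemma boundaryFactor_ne_zero (t : ℝ) : boundaryFactor t ≠ 0 := by
  intro h
  have lower := pow_three_le_re_boundaryFactor_mul_conj t
  rw [h, zero_mul, zero_re] at lower
  have : 0 < 1e-10 * (1 + t ^ 2) ^ 3 := by positivity
  linarith

lemma re_pos_of_mainFactor_eq_zero {a : ℂ} (h : mainFactor a = 0) (ha : 0 ≤ a.re) : 0 < a.re := by
  refine ha.lt_of_ne fun re_eq ↦ boundaryFactor_ne_zero a.im ?_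
  have a_eq : a = a.im * I := by apply Complex.ext <;> simp [← re_eq]
  rw [← normalizedFactor_mul_I, ← a_eq]
  exact (mul_eq_zero.mp ((mainFactor_eq_mul ha).symm.trans h)).resolve_left
    (dominantProduct_ne_zero ha)

/-- The quadratic factor of the reflected comparison cubic: it has no zero with `Re z ≥ 0`. -/
noncomputable def comparisonQuadratic (z : ℂ) : ℂ := 12 + 5 / 2 * z + z * z

lemma conj_comparisonCubic (t : ℝ) :
    conj (comparisonCubic t) =
      conj (linearFactor xiTwoExcessApprox (t * I)) * comparisonQuadratic (t * I) := by
  rw [comparisonCubic, map_mul, comparisonQuadratic]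
  congr 1
  simp only [map_sub, map_mul, map_div₀, map_pow, map_ofNat, conj_ofReal, conj_I]
  linear_combination -t ^ 2 * I_sq

lemma linearFactor_ne_zero {a : ℝ} (ha : 0 ≤ a) (ha' : a < 2) {z : ℂ} (hz : 0 ≤ z.re) :
    linearFactor a z ≠ 0 := by
  intro h
  have re_eq := congrArg re h
  have : (linearFactor a z).re = 1 - a / 2 + a * z.re := by simp [linearFactor]
  rw [this, zero_re] at re_eq
  nlinarith

lemma add_conj_ne_zero {a z : ℂ} (ha : 0 < a.re) (hz : 0 ≤ z.re) : z + conj a ≠ 0 := by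
  intro h
  have := congrArg re h
  rw [add_re, conj_re, zero_re] at this
  linarith

lemma mul_I_sub_ne_zero {a : ℂ} (ha : 0 < a.re) (t : ℝ) : t * I - a ≠ 0 := by
  intro h
  have := congrArg re h
  simp only [sub_re, re_ofReal_mul, I_re, mul_zero, zero_re] at this
  linarith

lemma normSq_mul_I_sub (a : ℂ) (t : ℝ) :
    (normSq (t * I - a) : ℂ) = -((t * I - a) * (t * I + conj a)) := by
  rw [← mul_conj, map_sub, map_mul, conj_ofReal, conj_I]
  ring

lemma normSq_mul_I_sub_le (a : ℂ) (t : ℝ) :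
    normSq (t * I - a) ≤ 2 * (1 + normSq a) * (1 + t ^ 2) := by
  simp only [normSq_apply, sub_re, sub_im, re_ofReal_mul, im_ofReal_mul, I_re, I_im]
  nlinarith [sq_nonneg (t + a.im), mul_nonneg (sq_nonneg t) (sq_nonneg a.re),
    mul_nonneg (sq_nonneg t) (sq_nonneg a.im), sq_nonneg a.re]

lemma linearFactor_xiTwoExcessApprox_ne_zero {z : ℂ} (hz : 0 ≤ z.re) :
    linearFactor xiTwoExcessApprox z ≠ 0 :=
  linearFactor_ne_zero (by norm_num [xiTwoExcessApprox]) (by norm_num [xiTwoExcessApprox]) hz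

lemma normSq_linearFactor_xiTwoExcessApprox_le (t : ℝ) :
    normSq (linearFactor xiTwoExcessApprox (t * I)) ≤ 1 + t ^ 2 := by
  have value : linearFactor xiTwoExcessApprox (t * I) =
      (1 - xiTwoExcessApprox / 2 : ℝ) + (xiTwoExcessApprox * t : ℝ) * I := by
    rw [linearFactor]
    push_cast
    ring
  rw [value, normSq_add_mul_I, xiTwoExcessApprox]
  norm_num
  nlinarith [sq_nonneg t]

section ThreeZeros

variable {a b c : ℂ} {u : ℂ → ℂ}

/-- If `normalizedFactor` is `(z - a) (z - b) (z - c) u z`, this function is holomorphic for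
`Re z ≥ 0`, decays like `z⁻²`, and has on the imaginary axis the argument of
`boundaryFactor t * conj (comparisonCubic t)`. -/
noncomputable def comparisonQuotient (a b c : ℂ) (u : ℂ → ℂ) (z : ℂ) : ℂ :=
  -(u z * comparisonQuadratic z) /
    (linearFactor xiTwoExcessApprox z * ((z + conj a) * ((z + conj b) * (z + conj c))))

lemma differentiableAt_comparisonQuotient (ha : 0 < a.re) (hb : 0 < b.re) (hc : 0 < c.re) {z : ℂ}
    (hz : 0 ≤ z.re) (hu : DifferentiableAt ℂ u z) :
    DifferentiableAt ℂ (comparisonQuotient a b c u) z := by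
  unfold comparisonQuotient comparisonQuadratic
  refine .div (by fun_prop) (by fun_prop) (mul_ne_zero
    (linearFactor_xiTwoExcessApprox_ne_zero hz) (mul_ne_zero (add_conj_ne_zero ha hz)
      (mul_ne_zero (add_conj_ne_zero hb hz) (add_conj_ne_zero hc hz))))

lemma eventually_sub_ne_zero_rightInfinity (a : ℂ) : ∀ᶠ z in rightInfinity, z - a ≠ 0 := by
  filter_upwards [tendsto_norm_rightInfinity.eventually_gt_atTop ‖a‖] with z hz
  exact sub_ne_zero.mpr fun h ↦ (h ▸ hz).false

lemma isBigO_one_of_normalizedFactor_eq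
    (h : ∀ z, 0 ≤ z.re → normalizedFactor z = (z - a) * ((z - b) * ((z - c) * u z))) :
    u =O[rightInfinity] fun _ ↦ (1 : ℂ) := by
  have denominator := (isTheta_sub_rightInfinity a).mul
    ((isTheta_sub_rightInfinity b).mul (isTheta_sub_rightInfinity c))
  refine (isTheta_normalizedFactor.div denominator).1.congr' ?_ ?_
  · filter_upwards [eventually_re_nonneg_rightInfinity, eventually_sub_ne_zero_rightInfinity a,
      eventually_sub_ne_zero_rightInfinity b, eventually_sub_ne_zero_rightInfinity c]
      with z hz hza hzb hzc
    rw [h z hz]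
    field_simp
  · filter_upwards [eventually_ne_zero_rightInfinity] with z hz
    field_simp

lemma isBigO_comparisonQuadratic :
    comparisonQuadratic =O[rightInfinity] fun z ↦ z * z := by
  have linear := (isTheta_add_mul_rightInfinity (a := 12) (c := 5 / 2) (by norm_num)).1.mul
    (isLittleO_const_id_rightInfinity 1).isBigO
  simp only [mul_one] at linear
  exact linear.add (isBigO_refl _ _)

lemma isLittleO_comparisonQuotient
    (h : ∀ z, 0 ≤ z.re → normalizedFactor z = (z - a) * ((z - b) * ((z - c) * u z))) :
    comparisonQuotient a b c u =o[rightInfinity] fun z ↦ z⁻¹ := by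
  have numerator :=
    ((isBigO_one_of_normalizedFactor_eq h).mul isBigO_comparisonQuadratic).neg_left
  have denominator := (isTheta_linearFactor (a := xiTwoExcessApprox)
    (by norm_num [xiTwoExcessApprox])).mul ((isTheta_add_rightInfinity (conj a)).mul
      ((isTheta_add_rightInfinity (conj b)).mul (isTheta_add_rightInfinity (conj c))))
  have quadratic_decay : comparisonQuotient a b c u =O[rightInfinity] fun z ↦ z⁻¹ * z⁻¹ := by
    refine (numerator.mul denominator.inv.1).congr' (.of_forall fun z ↦ rfl) ?_
    filter_upwards [eventually_ne_zero_rightInfinity] with z hz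
    field_simp
  refine quadratic_decay.trans_isLittleO ?_
  have inv_small : (fun z : ℂ ↦ z⁻¹) =o[rightInfinity] fun _ ↦ (1 : ℂ) :=
    (isLittleO_one_iff ℂ).mpr (tendsto_inv₀_cobounded.mono_left inf_le_left)
  simpa only [one_mul] using inv_small.mul_isBigO (isBigO_refl (fun z : ℂ ↦ z⁻¹) rightInfinity)

lemma comparisonQuotient_mul_I (ha : 0 < a.re) (hb : 0 < b.re) (hc : 0 < c.re)
    (h : ∀ z, 0 ≤ z.re → normalizedFactor z = (z - a) * ((z - b) * ((z - c) * u z))) (t : ℝ) :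
    comparisonQuotient a b c u (t * I) =
      ((normSq (linearFactor xiTwoExcessApprox (t * I)) * (normSq (t * I - a) *
        (normSq (t * I - b) * normSq (t * I - c))))⁻¹ : ℝ) *
        (boundaryFactor t * conj (comparisonCubic t)) := by
  have axis : 0 ≤ ((t : ℂ) * I).re := by simp
  have linear_ne := linearFactor_xiTwoExcessApprox_ne_zero axis
  have conj_linear_ne := (map_ne_zero (starRingEnd ℂ)).mpr linear_ne
  have ha' := mul_I_sub_ne_zero ha t
  have hb' := mul_I_sub_ne_zero hb t
  have hc' := mul_I_sub_ne_zero hc t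
  have ha'' := add_conj_ne_zero ha axis
  have hb'' := add_conj_ne_zero hb axis
  have hc'' := add_conj_ne_zero hc axis
  push_cast
  rw [conj_comparisonCubic, normSq_mul_I_sub, normSq_mul_I_sub, normSq_mul_I_sub, ← mul_conj,
    ← normalizedFactor_mul_I, h _ axis, comparisonQuotient]
  field_simp

lemma div_le_re_comparisonQuotient (ha : 0 < a.re) (hb : 0 < b.re) (hc : 0 < c.re)
    (h : ∀ z, 0 ≤ z.re → normalizedFactor z = (z - a) * ((z - b) * ((z - c) * u z))) (t : ℝ) :
    1e-10 / (8 * (1 + normSq a) * (1 + normSq b) * (1 + normSq c)) / (1 + t ^ 2) ≤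
      (comparisonQuotient a b c u (t * I)).re := by
  have := normSq_nonneg a
  have := normSq_nonneg b
  have := normSq_nonneg c
  set d := normSq (linearFactor xiTwoExcessApprox (t * I)) * (normSq (t * I - a) *
    (normSq (t * I - b) * normSq (t * I - c))) with d_def
  have d_pos : 0 < d := mul_pos
    (normSq_pos.mpr (linearFactor_xiTwoExcessApprox_ne_zero (by simp)))
    (mul_pos (normSq_pos.mpr (mul_I_sub_ne_zero ha t))
      (mul_pos (normSq_pos.mpr (mul_I_sub_ne_zero hb t))
        (normSq_pos.mpr (mul_I_sub_ne_zero hc t))))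
  have d_le : d ≤ (1 + t ^ 2) * ((2 * (1 + normSq a) * (1 + t ^ 2)) *
      ((2 * (1 + normSq b) * (1 + t ^ 2)) * (2 * (1 + normSq c) * (1 + t ^ 2)))) := by
    have := normSq_nonneg (t * I - a)
    have := normSq_nonneg (t * I - b)
    have := normSq_nonneg (t * I - c)
    rw [d_def]
    gcongr
    · exact normSq_linearFactor_xiTwoExcessApprox_le t
    all_goals exact normSq_mul_I_sub_le _ t
  rw [comparisonQuotient_mul_I ha hb hc h, re_ofReal_mul, ← d_def, inv_mul_eq_div,
    div_div, div_le_div_iff₀ (by positivity) d_pos]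
  calc 1e-10 * d ≤ 1e-10 * _ := mul_le_mul_of_nonneg_left d_le (by norm_num)
    _ = 1e-10 * (1 + t ^ 2) ^ 3 *
        (8 * (1 + normSq a) * (1 + normSq b) * (1 + normSq c) * (1 + t ^ 2)) := by ring
    _ ≤ _ := mul_le_mul_of_nonneg_right (pow_three_le_re_boundaryFactor_mul_conj t) (by positivity)

lemma not_normalizedFactor_eq_mul_mul_mul (ha : 0 < a.re) (hb : 0 < b.re) (hc : 0 < c.re)
    (hu : ∀ z, 0 ≤ z.re → DifferentiableAt ℂ u z) :
    ¬∀ z, 0 ≤ z.re → normalizedFactor z = (z - a) * ((z - b) * ((z - c) * u z)) := by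
  intro h
  have := normSq_nonneg a
  have := normSq_nonneg b
  have := normSq_nonneg c
  exact not_isLittleO_inv_of_le_re
    (fun z hz ↦ differentiableAt_comparisonQuotient ha hb hc hz (hu z hz)) (by positivity)
    (div_le_re_comparisonQuotient ha hb hc h) (isLittleO_comparisonQuotient h)

end ThreeZeros

lemma exists_eq_sub_mul_of_eq_zero {F : ℂ → ℂ} (hF : Differentiable ℂ F) {a : ℂ} (ha : F a = 0) :
    ∃ G, Differentiable ℂ G ∧ ∀ z, F z = (z - a) * G z := by
  refine ⟨dslope F a, ?_, fun z ↦ ?_⟩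
  · rw [← differentiableOn_univ]
    exact (differentiableOn_dslope univ_mem).mpr hF.differentiableOn
  · simpa [ha] using (sub_smul_dslope F a z).symm

lemma not_mainFactor_eq_mul_mul_mul {a b c : ℂ} (ha : 0 < a.re) (hb : 0 < b.re) (hc : 0 < c.re)
    {v : ℂ → ℂ} (hv : Differentiable ℂ v) :
    ¬∀ z, mainFactor z = (z - a) * ((z - b) * ((z - c) * v z)) := by
  intro h
  refine not_normalizedFactor_eq_mul_mul_mul (u := fun z ↦ v z / dominantProduct z) ha hb hc
    (fun z hz ↦ (hv z).div (by fun_prop) (dominantProduct_ne_zero hz)) fun z hz ↦ ?_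
  have dominant_ne := dominantProduct_ne_zero hz
  have factorization := (mainFactor_eq_mul hz).symm.trans (h z)
  field_simp
  linear_combination factorization

lemma add_one_ne_zero_of_neg_one_lt_re {z : ℂ} (hz : -1 < z.re) : z + 1 ≠ 0 := by
  intro h
  have := congrArg re h
  rw [add_re, one_re, zero_re] at this
  linarith

-- When `mainFactor` has fewer than two zeros with `Re z ≥ 0`, the missing ones are placed at `-1`.
lemma exists_mainFactor_eq_mul_mul : ∃ (a b : ℂ) (v : ℂ → ℂ),
    (∀ z, -1 < z.re → DifferentiableAt ℂ v z) ∧ (∀ z, 0 ≤ z.re → v z ≠ 0) ∧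
      ∀ z, -1 < z.re → mainFactor z = (z - a) * ((z - b) * v z) := by
  by_cases no_zero : ∀ z, 0 ≤ z.re → mainFactor z ≠ 0
  · refine ⟨-1, -1, fun z ↦ mainFactor z / (z + 1) ^ 2, fun z hz ↦ ?_, fun z hz ↦ ?_,
      fun z hz ↦ ?_⟩ <;> have ne := add_one_ne_zero_of_neg_one_lt_re (z := z) (by linarith)
    · exact (differentiable_mainFactor z).div (by fun_prop) (pow_ne_zero _ ne)
    · exact div_ne_zero (no_zero z hz) (pow_ne_zero _ ne)
    · rw [sub_neg_eq_add]
      field_simp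
  push Not at no_zero
  obtain ⟨a, ha, a_zero⟩ := no_zero
  obtain ⟨v₁, hv₁, eq₁⟩ := exists_eq_sub_mul_of_eq_zero differentiable_mainFactor a_zero
  by_cases one_zero : ∀ z, 0 ≤ z.re → v₁ z ≠ 0
  · refine ⟨a, -1, fun z ↦ v₁ z / (z + 1), fun z hz ↦ ?_, fun z hz ↦ ?_, fun z hz ↦ ?_⟩ <;>
      have ne := add_one_ne_zero_of_neg_one_lt_re (z := z) (by linarith)
    · exact (hv₁ z).div (by fun_prop) ne
    · exact div_ne_zero (one_zero z hz) ne
    · rw [sub_neg_eq_add, eq₁]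
      field_simp
  push Not at one_zero
  obtain ⟨b, hb, b_zero⟩ := one_zero
  obtain ⟨v₂, hv₂, eq₂⟩ := exists_eq_sub_mul_of_eq_zero hv₁ b_zero
  refine ⟨a, b, v₂, fun z _ ↦ hv₂ z, fun c hc c_zero ↦ ?_, fun z _ ↦ by rw [eq₁, eq₂]⟩
  obtain ⟨v₃, hv₃, eq₃⟩ := exists_eq_sub_mul_of_eq_zero hv₂ c_zero
  exact not_mainFactor_eq_mul_mul_mul (re_pos_of_mainFactor_eq_zero a_zero ha)
    (re_pos_of_mainFactor_eq_zero (by simp [eq₁, b_zero]) hb)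
    (re_pos_of_mainFactor_eq_zero (by simp [eq₁, eq₂, c_zero]) hc) hv₃
    fun z ↦ by rw [eq₁, eq₂, eq₃]

/-! ### The main term near the origin -/

lemma hasDerivAt_completedRiemannZeta₀ (s : ℂ) :
    HasDerivAt completedRiemannZeta₀ (deriv completedRiemannZeta₀ s) s :=
  (differentiable_completedZeta₀ s).hasDerivAt

lemma hasDerivAt_realZeta₀ (p : ℝ) :
    HasDerivAt realZeta₀ (deriv completedRiemannZeta₀ p).re p :=
  (hasDerivAt_completedRiemannZeta₀ p).real_of_complex

lemma ofReal_deriv_realZeta₀ (p : ℝ) :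
    ((deriv realZeta₀ p : ℝ) : ℂ) = deriv completedRiemannZeta₀ p := by
  have real_deriv := (hasDerivAt_realZeta₀ p).ofReal_comp
  simp only [ofReal_realZeta₀] at real_deriv
  rw [(hasDerivAt_realZeta₀ p).deriv]
  exact real_deriv.unique (hasDerivAt_completedRiemannZeta₀ p).comp_ofReal

lemma hasDerivAt_entireXi (s : ℂ) :
    HasDerivAt entireXi
      ((2 * s - 1) * completedRiemannZeta₀ s + s * (s - 1) * deriv completedRiemannZeta₀ s) s := by
  refine ((((hasDerivAt_id s).mul ((hasDerivAt_id s).sub_const 1)).mul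
    (hasDerivAt_completedRiemannZeta₀ s)).const_add 1).congr_deriv ?_
  simp only [Pi.mul_apply, id]
  ring

lemma hasDerivAt_entireXi_one_half : HasDerivAt entireXi 0 (1 / 2) := by
  have direct := (differentiable_entireXi (1 / 2)).hasDerivAt
  have reflected : HasDerivAt (fun s ↦ entireXi (1 - s)) (-deriv entireXi (1 / 2)) (1 / 2) := by
    refine HasDerivAt.comp_const_sub 1 (1 / 2) ?_
    norm_num [direct]
  simp only [entireXi_one_sub] at reflected
  have deriv_eq_zero := self_eq_neg.mp (direct.unique reflected)
  rwa [deriv_eq_zero] at direct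

lemma hasDerivAt_entireXi_mul_add {b d : ℂ} (h : HasDerivAt entireXi d b) (k : ℂ) :
    HasDerivAt (fun z ↦ entireXi (k * z + b)) (d * k) 0 := by
  refine HasDerivAt.comp (h₂ := entireXi) (0 : ℂ) (h := fun z ↦ k * z + b) ?_ ?_
  · simpa using h
  · simpa using ((hasDerivAt_id (0 : ℂ)).const_mul k).add_const b

/-- The function whose odd part is, up to a polynomial factor, the zeta function of
`(G₂, P_long)` in the variable `z = s - 1 / 2`. -/
noncomputable def mainTerm (z : ℂ) : ℂ := (z - 1 / 2) * (entireXi (2 * z + 1) * mainFactor z)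

section

variable {x y y' : ℂ}

lemma mainFactor_zero (hx : entireXi (1 / 2) = x) (hy : entireXi (3 / 2) = y) :
    mainFactor 0 = y ^ 2 * (1 - xiTwoExcess / 2) / 4 + 9 / 4 * x ^ 2 - 3 / 2 * x * y := by
  simp only [mainFactor, linearFactor, mul_zero, zero_add, hx, hy]
  ring

lemma hasDerivAt_mainFactor_zero (hx : entireXi (1 / 2) = x) (hy : entireXi (3 / 2) = y)
    (hy' : HasDerivAt entireXi y' (3 / 2)) :
    HasDerivAt mainFactor (y * y' * (1 - xiTwoExcess / 2) - y ^ 2 * (2 - 5 * xiTwoExcess / 4) -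
      9 / 2 * x * y' + 4 * x * y) 0 := by
  have id' := hasDerivAt_id (0 : ℂ)
  have xi₁ : HasDerivAt (fun z ↦ entireXi (z + 3 / 2)) y' 0 := by
    simpa using hasDerivAt_entireXi_mul_add hy' 1
  have xi₂ := hasDerivAt_entireXi_mul_add hy' 3
  have xi₃ : HasDerivAt (fun z ↦ entireXi (z + 1 / 2)) 0 0 := by
    simpa using hasDerivAt_entireXi_mul_add hasDerivAt_entireXi_one_half 1
  have xi₄ := hasDerivAt_entireXi_mul_add hasDerivAt_entireXi_one_half 3
  have poly₁ : HasDerivAt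
      (fun z : ℂ ↦ linearFactor xiTwoExcess z * ((z - 1 / 2) * (3 * z - 1 / 2)))
      (-2 + 5 * xiTwoExcess / 4) 0 := by
    refine (((id'.const_mul (xiTwoExcess : ℂ)).const_add (1 - xiTwoExcess / 2 : ℂ)).mul
      ((id'.sub_const (1 / 2)).mul ((id'.const_mul 3).sub_const (1 / 2)))).congr_deriv ?_
    simp
    ring
  have poly₂ : HasDerivAt (fun z : ℂ ↦ (z + 3 / 2) * (z - 3 / 2)) 0 0 :=
    ((id'.add_const (3 / 2)).mul (id'.sub_const (3 / 2))).congr_deriv (by simp)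
  have poly₃ : HasDerivAt (fun z : ℂ ↦ (z - 1 / 2) * (z - 3 / 2)) (-2) 0 :=
    ((id'.sub_const (1 / 2)).mul (id'.sub_const (3 / 2))).congr_deriv (by simp; ring)
  refine ((((xi₁.mul xi₂).mul poly₁).sub ((xi₃.mul xi₄).mul poly₂)).sub
    (((xi₃.const_mul 2).mul xi₂).mul poly₃)).congr_deriv ?_
  simp only [Pi.mul_apply, linearFactor, mul_zero, zero_add, hx, hy]
  ring

end

lemma hasDerivAt_mainTerm_zero {d : ℂ} (hd : HasDerivAt mainFactor d 0) :
    HasDerivAt mainTerm (mainFactor 0 * (1 - completedRiemannZeta₀ 1) - d / 2) 0 := by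
  have xi_deriv : HasDerivAt (fun z ↦ entireXi (2 * z + 1)) (completedRiemannZeta₀ 1 * 2) 0 :=
    hasDerivAt_entireXi_mul_add ((hasDerivAt_entireXi 1).congr_deriv (by ring)) 2
  refine (((hasDerivAt_id (0 : ℂ)).sub_const (1 / 2)).mul (xi_deriv.mul hd)).congr_deriv ?_
  simp only [Pi.mul_apply, mul_zero, zero_add, id, entireXi_one]
  ring

lemma abs_realZeta₀_sub_le {p : ℝ} (hp : p ∈ Icc (-1) 2) {n : ℤ} (hn : p = n / 113000)
    (h : ZetaCertificate ⟨n, 0⟩) :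
    |realZeta₀ p - (zetaApprox ⟨n, 0⟩).re / 10 ^ 20| ≤ 2e-8 := by
  have near := norm_completedRiemannZeta₀_sub_zetaApprox_le (s := p) (W := ⟨n, 0⟩)
    (by simpa using hp) (by rw [hn]; simp [GaussianInt.toComplex_def]) h
  refine le_trans (le_of_eq ?_) ((abs_re_le_norm _).trans near)
  have ten_pow : (10 : ℂ) ^ 20 = ((10 ^ 20 : ℝ) : ℂ) := by push_cast; rfl
  rw [← ofReal_realZeta₀, sub_re, ofReal_re, ten_pow, div_ofReal_re, GaussianInt.intCast_re]

set_option maxRecDepth 100000 in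
lemma abs_realZeta₀_one_half_sub_le : |realZeta₀ (1 / 2) - 0.0230337667| ≤ 3e-8 := by
  have approx : (zetaApprox ⟨56500, 0⟩).re = 2303376670364266156 := by decide +kernel
  have near := abs_realZeta₀_sub_le (p := 1 / 2) (n := 56500) (by norm_num) (by norm_num)
    (by decide +kernel)
  rw [approx, abs_le] at near
  rw [abs_le]
  constructor <;> norm_num at near ⊢ <;> linarith

set_option maxRecDepth 100000 in
lemma abs_realZeta₀_one_sub_le : |realZeta₀ 1 - 0.0230957012| ≤ 3e-8 := by
  have approx : (zetaApprox ⟨113000, 0⟩).re = 2309570111575526302 := by decide +kernel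
  have near := abs_realZeta₀_sub_le (p := 1) (n := 113000) (by norm_num) (by norm_num)
    (by decide +kernel)
  rw [approx, abs_le] at near
  rw [abs_le]
  constructor <;> norm_num at near ⊢ <;> linarith

set_option maxRecDepth 100000 in
lemma abs_realZeta₀_three_halves_sub_le : |realZeta₀ (3 / 2) - 0.0232827621| ≤ 3e-8 := by
  have approx : (zetaApprox ⟨169500, 0⟩).re = 2328276196364264261 := by decide +kernel
  have near := abs_realZeta₀_sub_le (p := 3 / 2) (n := 169500) (by norm_num) (by norm_num)
    (by decide +kernel)
  rw [approx, abs_le] at near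
  rw [abs_le]
  constructor <;> norm_num at near ⊢ <;> linarith

lemma realZeta₀_secant_le_deriv :
    2 * (realZeta₀ (3 / 2) - realZeta₀ 1) ≤ deriv realZeta₀ (3 / 2) := by
  have slope_le := convexOn_realZeta₀.slope_le_of_hasDerivAt (mem_univ 1) (mem_univ (3 / 2))
    (by norm_num) (hasDerivAt_realZeta₀ (3 / 2)).differentiableAt.hasDerivAt
  rw [slope_def_field, div_le_iff₀ (by norm_num)] at slope_le
  linarith

lemma central_values_pos {x y y' c a : ℝ} (hx : x ∈ Icc 0.994241 0.994242)
    (hy : y ∈ Icc 1.017462 1.0174623) (hy' : 0.0468459 ≤ y') (hc : c ≤ 0.0230958)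
    (ha : a ∈ Icc 0.0471975 0.0471976) :
    0 < y ^ 2 * (1 - a / 2) / 4 + 9 / 4 * x ^ 2 - 3 / 2 * x * y ∧
    0 < (y ^ 2 * (1 - a / 2) / 4 + 9 / 4 * x ^ 2 - 3 / 2 * x * y) * (1 - c) -
      (y * y' * (1 - a / 2) - y ^ 2 * (2 - 5 * a / 4) - 9 / 2 * x * y' + 4 * x * y) / 2 := by
  obtain ⟨x_ge, x_le⟩ := hx
  obtain ⟨y_ge, y_le⟩ := hy
  obtain ⟨a_ge, a_le⟩ := ha
  have x_sq : 0.988515 ≤ x ^ 2 := by nlinarith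
  have y_sq : 1.035228 ≤ y ^ 2 := by nlinarith
  have x_mul_y : x * y ≤ 1.011604 := by nlinarith
  have first : 1.035228 * 0.976401 ≤ y ^ 2 * (1 - a / 2) := by gcongr; linarith
  have value_ge : 1.035228 * 0.976401 / 4 + 9 / 4 * 0.988515 - 3 / 2 * 1.011604 ≤
      y ^ 2 * (1 - a / 2) / 4 + 9 / 4 * x ^ 2 - 3 / 2 * x * y := by
    linarith
  have coefficient : y * (1 - a / 2) ≤ 1.0174623 * 0.9764013 :=
    mul_le_mul y_le (by linarith) (by linarith) (by norm_num)
  have derivative : 0.0468459 * (9 / 2 * 0.994241 - 1.0174623 * 0.9764013) ≤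
      y' * (9 / 2 * x - y * (1 - a / 2)) :=
    mul_le_mul hy' (by linarith) (by norm_num) (by linarith)
  have second : 1.035228 * (2 - 5 * 0.0471976 / 4) ≤ y ^ 2 * (2 - 5 * a / 4) :=
    mul_le_mul y_sq (by linarith) (by norm_num) (by positivity)
  have product : (1.035228 * 0.976401 / 4 + 9 / 4 * 0.988515 - 3 / 2 * 1.011604) *
      (1 - 0.0230958) ≤
      (y ^ 2 * (1 - a / 2) / 4 + 9 / 4 * x ^ 2 - 3 / 2 * x * y) * (1 - c) :=
    mul_le_mul value_ge (by linarith) (by norm_num) (by linarith)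
  refine ⟨by linarith, ?_⟩
  norm_num at *
  linarith

lemma entireXi_one_half : entireXi (1 / 2) = (1 - realZeta₀ (1 / 2) / 4 : ℝ) := by
  have := entireXi_ofReal (1 / 2)
  push_cast at this ⊢
  rw [this]
  ring

lemma entireXi_three_halves : entireXi (3 / 2) = (1 + 3 / 4 * realZeta₀ (3 / 2) : ℝ) := by
  have := entireXi_ofReal (3 / 2)
  push_cast at this ⊢
  rw [this]
  ring

lemma hasDerivAt_entireXi_three_halves : HasDerivAt entireXi
    (2 * realZeta₀ (3 / 2) + 3 / 4 * deriv realZeta₀ (3 / 2) : ℝ) (3 / 2) := by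
  refine (hasDerivAt_entireXi (3 / 2)).congr_deriv ?_
  have value := ofReal_realZeta₀ (3 / 2)
  have derivative := ofReal_deriv_realZeta₀ (3 / 2)
  push_cast at value derivative ⊢
  rw [value, derivative]
  ring

lemma exists_pos_hasDerivAt_mainTerm_zero : ∃ w D : ℝ, 0 < w ∧ 0 < D ∧ mainFactor 0 = D ∧
    HasDerivAt mainTerm w 0 := by
  have zeta_half := abs_le.mp abs_realZeta₀_one_half_sub_le
  have zeta_one := abs_le.mp abs_realZeta₀_one_sub_le
  have zeta_three_halves := abs_le.mp abs_realZeta₀_three_halves_sub_le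
  have excess := abs_le.mp abs_xiTwoExcess_sub_le
  have secant := realZeta₀_secant_le_deriv
  norm_num [xiTwoExcessApprox] at zeta_half zeta_one zeta_three_halves excess
  obtain ⟨value_pos, deriv_pos⟩ := central_values_pos (x := 1 - realZeta₀ (1 / 2) / 4)
    (y := 1 + 3 / 4 * realZeta₀ (3 / 2))
    (y' := 2 * realZeta₀ (3 / 2) + 3 / 4 * deriv realZeta₀ (3 / 2)) (c := realZeta₀ 1)
    (a := xiTwoExcess) (by constructor <;> norm_num <;> linarith)
    (by constructor <;> norm_num <;> linarith) (by norm_num; linarith) (by norm_num; linarith)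
    (by constructor <;> norm_num <;> linarith)
  refine ⟨_, _, deriv_pos, value_pos, ?_, ?_⟩
  · rw [mainFactor_zero entireXi_one_half entireXi_three_halves]
    push_cast
    ring
  · refine (hasDerivAt_mainTerm_zero
      (hasDerivAt_mainFactor_zero entireXi_one_half entireXi_three_halves
        hasDerivAt_entireXi_three_halves)).congr_deriv ?_
    have zeta_value := ofReal_realZeta₀ 1
    rw [ofReal_one] at zeta_value
    rw [mainFactor_zero entireXi_one_half entireXi_three_halves, ← zeta_value]
    push_cast
    ring

/-! ### Zeros of the odd part of the main term -/

/-- Twice the odd part of `mainTerm`. -/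
noncomputable def oddMainTerm (z : ℂ) : ℂ := mainTerm z - mainTerm (-z)

@[fun_prop]
lemma differentiable_mainTerm : Differentiable ℂ mainTerm := by
  unfold mainTerm
  fun_prop

lemma differentiable_oddMainTerm : Differentiable ℂ oddMainTerm := by
  unfold oddMainTerm
  fun_prop

lemma oddMainTerm_neg (z : ℂ) : oddMainTerm (-z) = -oddMainTerm z := by
  rw [oddMainTerm, oddMainTerm, neg_neg, neg_sub]

lemma mainTerm_conj (z : ℂ) : mainTerm (conj z) = conj (mainTerm z) := by
  simp only [mainTerm, mainFactor, linearFactor, map_add, map_sub, map_mul, map_div₀, map_one,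
    map_ofNat, conj_ofReal, ← entireXi_conj]

lemma mainTerm_neg (z : ℂ) : mainTerm (-z) = -((z + 1 / 2) * (entireXi (2 * z) *
    (entireXi (z - 1 / 2) * entireXi (3 * z - 1 / 2) *
        (linearFactor xiTwoExcess (-z) * ((z + 1 / 2) * (3 * z + 1 / 2))) -
      entireXi (z + 1 / 2) * entireXi (3 * z + 1 / 2) * ((z - 3 / 2) * (z + 3 / 2)) -
      2 * entireXi (z + 1 / 2) * entireXi (3 * z - 1 / 2) * ((z + 1 / 2) * (z + 3 / 2))))) := by
  rw [mainTerm, mainFactor, ← entireXi_one_sub (2 * z), ← entireXi_one_sub (z - 1 / 2),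
    ← entireXi_one_sub (3 * z - 1 / 2), ← entireXi_one_sub (z + 1 / 2),
    ← entireXi_one_sub (3 * z + 1 / 2)]
  ring_nf

lemma completedRiemannZeta_two : completedRiemannZeta 2 = (1 + xiTwoExcess) / 2 := by
  have zeta_two := riemannZeta_def_of_ne_zero (s := 2) (by norm_num)
  have gamma_two : Gammaℝ 2 = (π : ℂ)⁻¹ := by
    rw [Gammaℝ_def]
    norm_num [cpow_neg_one]
  have : (π : ℂ) ≠ 0 := mod_cast Real.pi_ne_zero
  rw [riemannZeta_two, gamma_two] at zeta_two
  field_simp at zeta_two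
  rw [xiTwoExcess]
  push_cast
  linear_combination -zeta_two / 6

lemma entireXi_two : entireXi 2 = 1 + xiTwoExcess := by
  rw [entireXi_eq (by norm_num) (by norm_num), completedRiemannZeta_two]
  ring

lemma oddMainTerm_one_half : oddMainTerm (1 / 2) = 0 := by
  have reflected : entireXi (-1) = 1 + xiTwoExcess := by
    rw [← entireXi_two, ← entireXi_one_sub]
    norm_num
  unfold oddMainTerm mainTerm mainFactor linearFactor
  norm_num [entireXi_one, entireXi_zero, reflected]
  ring

lemma oddMainTerm_one_sixth : oddMainTerm (1 / 6) = 0 := by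
  have reflected : entireXi (1 / 3) = entireXi (2 / 3) := by
    rw [← entireXi_one_sub]
    norm_num
  unfold oddMainTerm mainTerm mainFactor linearFactor
  norm_num [entireXi_one, entireXi_zero, entireXi_two] at reflected ⊢
  rw [reflected]
  ring

lemma entireXi_two_mul_add_one_ne_zero {z : ℂ} (hz : 0 ≤ z.re) : entireXi (2 * z + 1) ≠ 0 :=
  entireXi_ne_zero (by norm_num; linarith)

lemma isBigO_entireXi_div_one {u : ℂ → ℂ} {c : ℝ} (hc : 1 < c)
    (hu : ∀ z : ℂ, 0 ≤ z.re → (1 - c) / 2 ≤ (u z).re) :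
    (fun z ↦ entireXi (u z) / entireXi (u z + c)) =O[rightInfinity] fun _ ↦ (1 : ℂ) := by
  refine .of_bound 1 ?_
  filter_upwards [eventually_re_nonneg_rightInfinity] with z hz
  rw [norm_one, mul_one, norm_div]
  exact div_le_one_of_le₀ (norm_entireXi_le_norm_add hc (hu z hz)) (norm_nonneg _)

lemma mainTerm_neg_div {z : ℂ} (hz : 0 ≤ z.re) :
    mainTerm (-z) / (dominantProduct z * entireXi (2 * z + 1)) =
      -((z + 1 / 2) * (unitShiftQuotient (2 * z) *
        (entireXi (z - 1 / 2) / entireXi (z - 1 / 2 + (2 : ℝ)) *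
            (entireXi (3 * z - 1 / 2) / entireXi (3 * z - 1 / 2 + (2 : ℝ))) *
            (linearFactor xiTwoExcess (-z) * ((z + 1 / 2) * (3 * z + 1 / 2))) -
          unitShiftQuotient (z + 1 / 2) * unitShiftQuotient (3 * z + 1 / 2) *
            ((z - 3 / 2) * (z + 3 / 2)) -
          2 * unitShiftQuotient (z + 1 / 2) *
            (entireXi (3 * z - 1 / 2) / entireXi (3 * z - 1 / 2 + (2 : ℝ))) *
            ((z + 1 / 2) * (z + 3 / 2))))) := by
  have dominant_ne := dominantProduct_ne_zero hz
  have := entireXi_two_mul_add_one_ne_zero hz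
  rw [dominantProduct] at dominant_ne ⊢
  obtain ⟨_, _⟩ := mul_ne_zero_iff.mp dominant_ne
  have shift₁ : z + 1 / 2 + 1 = z + 3 / 2 := by ring
  have shift₂ : 3 * z + 1 / 2 + 1 = 3 * z + 3 / 2 := by ring
  have shift₃ : z - 1 / 2 + (2 : ℝ) = z + 3 / 2 := by push_cast; ring
  have shift₄ : 3 * z - 1 / 2 + (2 : ℝ) = 3 * z + 3 / 2 := by push_cast; ring
  rw [mainTerm_neg, unitShiftQuotient, unitShiftQuotient, unitShiftQuotient, shift₁, shift₂,
    shift₃, shift₄]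
  generalize entireXi (z + 3 / 2) = x₁ at *
  generalize entireXi (3 * z + 3 / 2) = x₃ at *
  field_simp

lemma isBigO_mainTerm_neg_div :
    (fun z ↦ mainTerm (-z) / (dominantProduct z * entireXi (2 * z + 1))) =O[rightInfinity]
      fun z ↦ z * (z * (z * z)) := by
  have quotient₁ := isBigO_unitShiftQuotient_one (u := fun z ↦ z + 1 / 2)
    fun z hz ↦ by norm_num; linarith
  have quotient₂ := isBigO_unitShiftQuotient_one (u := fun z ↦ 2 * z)
    fun z hz ↦ by norm_num; linarith
  have quotient₃ := isBigO_unitShiftQuotient_one (u := fun z ↦ 3 * z + 1 / 2)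
    fun z hz ↦ by norm_num; linarith
  have double₁ := isBigO_entireXi_div_one (u := fun z ↦ z - 1 / 2) one_lt_two
    fun z hz ↦ by norm_num; linarith
  have double₃ := isBigO_entireXi_div_one (u := fun z ↦ 3 * z - 1 / 2) one_lt_two
    fun z hz ↦ by norm_num; linarith
  have cubic : (fun z : ℂ ↦ linearFactor xiTwoExcess (-z) * ((z + 1 / 2) * (3 * z + 1 / 2)))
      =O[rightInfinity] fun z ↦ z * (z * z) := by
    have linear : (fun z : ℂ ↦ linearFactor xiTwoExcess (-z)) =O[rightInfinity] fun z ↦ z := by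
      simpa [linearFactor] using (isTheta_add_mul_rightInfinity (a := 1 - xiTwoExcess / 2)
        (c := -xiTwoExcess) (by simpa using xiTwoExcess_pos.ne')).1
    refine linear.mul ((isTheta_add_rightInfinity _).1.mul ?_)
    simpa [add_comm] using
      (isTheta_add_mul_rightInfinity (a := 1 / 2) (three_ne_zero (α := ℂ))).1
  have quadratic₁ := ((isTheta_sub_rightInfinity (3 / 2)).1.mul
    (isTheta_add_rightInfinity (3 / 2)).1).trans isLittleO_mul_self_rightInfinity.isBigO
  have quadratic₂ := ((isTheta_add_rightInfinity (1 / 2)).1.mul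
    (isTheta_add_rightInfinity (3 / 2)).1).trans isLittleO_mul_self_rightInfinity.isBigO
  have bound := ((isTheta_add_rightInfinity (1 / 2)).1.mul (quotient₂.mul
    ((((double₁.mul double₃).mul cubic).sub ((quotient₁.mul quotient₃).mul quadratic₁)).sub
      (((quotient₁.const_mul_left 2).mul double₃).mul quadratic₂)))).neg_left
  simp only [one_mul] at bound
  refine bound.congr' ?_ .rfl
  filter_upwards [eventually_re_nonneg_rightInfinity] with z hz
  exact (mainTerm_neg_div hz).symm

lemma isBigO_oddMainTerm_div :
    (fun z ↦ oddMainTerm z / (dominantProduct z * entireXi (2 * z + 1))) =O[rightInfinity]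
      fun z ↦ z * (z * (z * z)) := by
  have main := (isTheta_sub_rightInfinity (1 / 2)).1.mul isTheta_normalizedFactor.1
  refine (main.sub isBigO_mainTerm_neg_div).congr' ?_ .rfl
  filter_upwards [eventually_re_nonneg_rightInfinity] with z hz
  have := dominantProduct_ne_zero hz
  have := entireXi_two_mul_add_one_ne_zero hz
  rw [oddMainTerm, sub_div, sub_left_inj, mainTerm, mainFactor_eq_mul hz]
  generalize entireXi (2 * z + 1) = x at *
  field_simp

lemma mainTerm_mul_I_ne_zero (t : ℝ) : mainTerm (t * I) ≠ 0 := by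
  have factor_ne : mainFactor (t * I) ≠ 0 := fun h ↦
    absurd (re_pos_of_mainFactor_eq_zero h (by simp)) (by simp)
  exact mul_ne_zero (mul_I_sub_ne_zero (by norm_num) t)
    (mul_ne_zero (entireXi_two_mul_add_one_ne_zero (by simp)) factor_ne)

lemma re_oddMainTerm_div_mainTerm_nonneg (t : ℝ) :
    0 ≤ (oddMainTerm (t * I) / mainTerm (t * I)).re := by
  have ne := mainTerm_mul_I_ne_zero t
  have reflected : mainTerm (-(t * I)) = conj (mainTerm (t * I)) := by simp [← mainTerm_conj]
  have norm_eq_one : ‖conj (mainTerm (t * I)) / mainTerm (t * I)‖ = 1 := by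
    rw [norm_div, RCLike.norm_conj, div_self (norm_ne_zero_iff.mpr ne)]
  rw [oddMainTerm, reflected, sub_div, div_self ne, sub_re, one_re, sub_nonneg, ← norm_eq_one]
  exact re_le_norm _

section ExtraZero

variable {a b s₀ : ℂ} {v χ : ℂ → ℂ}

/-- If `mainFactor z = (z - a) (z - b) v z` and `oddMainTerm z` is
`z (z - 1 / 2) (z - 1 / 6) (z - s₀) χ z`, this function is holomorphic for `Re z ≥ 0`, decays like
`z⁻¹`, and its quotient by `z` is on the imaginary axis a negative multiple of
`oddMainTerm z / mainTerm z`. -/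
noncomputable def oddQuotient (a b s₀ : ℂ) (v χ : ℂ → ℂ) (z : ℂ) : ℂ :=
  χ z * ((z + conj a) * (z + conj b)) /
    (v z * entireXi (2 * z + 1) * ((z + 1 / 6) * (z + conj s₀)))

lemma add_one_div_six_ne_zero {z : ℂ} (hz : 0 ≤ z.re) : z + 1 / 6 ≠ 0 := by
  simpa [map_ofNat] using add_conj_ne_zero (a := 1 / 6) (by norm_num) hz

lemma oddQuotient_denominator_ne_zero (hs₀ : 0 < s₀.re) {z : ℂ} (hz : 0 ≤ z.re) (hv : v z ≠ 0) :
    v z * entireXi (2 * z + 1) * ((z + 1 / 6) * (z + conj s₀)) ≠ 0 :=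
  mul_ne_zero (mul_ne_zero hv (entireXi_two_mul_add_one_ne_zero hz))
    (mul_ne_zero (add_one_div_six_ne_zero hz) (add_conj_ne_zero hs₀ hz))

lemma differentiableAt_oddQuotient (hs₀ : 0 < s₀.re) (hχ : Differentiable ℂ χ) {z : ℂ}
    (hz : 0 ≤ z.re) (hv : DifferentiableAt ℂ v z) (hv₀ : v z ≠ 0) :
    DifferentiableAt ℂ (oddQuotient a b s₀ v χ) z := by
  unfold oddQuotient
  exact .div (by fun_prop) (by fun_prop) (oddQuotient_denominator_ne_zero hs₀ hz hv₀)

lemma eventually_differentiableAt_oddQuotient (hs₀ : 0 < s₀.re) (hχ : Differentiable ℂ χ)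
    (hv : ∀ᶠ z in 𝓝 0, DifferentiableAt ℂ v z) (hv₀ : v 0 ≠ 0) :
    ∀ᶠ z in 𝓝 0, DifferentiableAt ℂ (oddQuotient a b s₀ v χ) z := by
  have hv' := hv.self_of_nhds
  have continuous_denominator : ContinuousAt
      (fun z ↦ v z * entireXi (2 * z + 1) * ((z + 1 / 6) * (z + conj s₀))) 0 :=
    DifferentiableAt.continuousAt (𝕜 := ℂ) (by fun_prop)
  filter_upwards [hv, continuous_denominator.eventually_ne
    (oddQuotient_denominator_ne_zero hs₀ le_rfl hv₀)] with z hvz ne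
  unfold oddQuotient
  exact .div (by fun_prop) (by fun_prop) ne

lemma isBigO_oddQuotient (hs₀ : 0 < s₀.re) (hv₀ : ∀ z, 0 ≤ z.re → v z ≠ 0)
    (hv : ∀ z, 0 ≤ z.re → mainFactor z = (z - a) * ((z - b) * v z))
    (hχ : ∀ z, oddMainTerm z = z * ((z - 1 / 2) * ((z - 1 / 6) * ((z - s₀) * χ z)))) :
    oddQuotient a b s₀ v χ =O[rightInfinity] fun z ↦ z⁻¹ := by
  have zeros : (fun z : ℂ ↦ z * ((z - 1 / 2) * ((z - 1 / 6) * (z - s₀)))) =Θ[rightInfinity]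
      fun z ↦ z * (z * (z * z)) :=
    (isTheta_refl _ _).mul ((isTheta_sub_rightInfinity _).mul
      ((isTheta_sub_rightInfinity _).mul (isTheta_sub_rightInfinity _)))
  have reflected : (fun z : ℂ ↦ (z + conj a) * (z + conj b)) =Θ[rightInfinity] fun z ↦ z * z :=
    (isTheta_add_rightInfinity _).mul (isTheta_add_rightInfinity _)
  have main_zeros : (fun z : ℂ ↦ (z - a) * (z - b)) =Θ[rightInfinity] fun z ↦ z * z :=
    (isTheta_sub_rightInfinity _).mul (isTheta_sub_rightInfinity _)
  have odd_reflected : (fun z : ℂ ↦ (z + 1 / 6) * (z + conj s₀)) =Θ[rightInfinity]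
      fun z ↦ z * z :=
    (isTheta_add_rightInfinity _).mul (isTheta_add_rightInfinity _)
  refine (((isBigO_oddMainTerm_div.mul zeros.inv.1).mul (reflected.mul main_zeros).1).mul
    (isTheta_normalizedFactor.mul odd_reflected).inv.1).congr' ?_ ?_
  · filter_upwards [eventually_re_nonneg_rightInfinity, eventually_ne_zero_rightInfinity,
      eventually_sub_ne_zero_rightInfinity a, eventually_sub_ne_zero_rightInfinity b,
      eventually_sub_ne_zero_rightInfinity s₀, eventually_sub_ne_zero_rightInfinity (1 / 2),
      eventually_sub_ne_zero_rightInfinity (1 / 6)] with z hz z_ne hza hzb hzs hz₂ hz₆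
    have dominant_ne := dominantProduct_ne_zero hz
    have denominator_ne := oddQuotient_denominator_ne_zero hs₀ hz (hv₀ z hz)
    simp only [mul_ne_zero_iff] at denominator_ne
    obtain ⟨⟨v_ne, -⟩, sixth_ne, conj_ne⟩ := denominator_ne
    have normalized : normalizedFactor z = (z - a) * ((z - b) * v z) / dominantProduct z :=
      eq_div_of_mul_eq dominant_ne (by rw [← hv z hz, mainFactor_eq_mul hz, mul_comm])
    rw [normalized, hχ, oddQuotient]
    generalize z - 1 / 2 = z₂ at *
    generalize z - 1 / 6 = z₆ at *
    generalize z + 1 / 6 = z₆' at *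
    field_simp
  · filter_upwards [eventually_ne_zero_rightInfinity] with z hz
    field_simp

lemma hasDerivAt_oddMainTerm_zero {w : ℂ} (hw : HasDerivAt mainTerm w 0) :
    HasDerivAt oddMainTerm (2 * w) 0 := by
  have reflected : HasDerivAt (fun z ↦ mainTerm (-z)) (-w) 0 := by
    simpa using HasDerivAt.comp_const_sub (f := mainTerm) 0 0 (by simpa using hw)
  exact (hw.sub reflected).congr_deriv (by ring)

lemma mul_eq_of_hasDerivAt_mainTerm (hχ_diff : Differentiable ℂ χ)
    (hχ : ∀ z, oddMainTerm z = z * ((z - 1 / 2) * ((z - 1 / 6) * ((z - s₀) * χ z)))) {w : ℂ}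
    (hw : HasDerivAt mainTerm w 0) : s₀ * χ 0 = -24 * w := by
  have cofactor : DifferentiableAt ℂ
      (fun z ↦ (z - 1 / 2) * ((z - 1 / 6) * ((z - s₀) * χ z))) 0 := by fun_prop
  have product := (hasDerivAt_id (0 : ℂ)).mul cofactor.hasDerivAt
  have derivative := ((hasDerivAt_oddMainTerm_zero hw).congr_of_eventuallyEq
    (.of_forall fun z ↦ (hχ z).symm)).unique product
  simp only [id, one_mul, zero_mul, add_zero, zero_sub] at derivative
  linear_combination 12 * derivative

lemma oddQuotient_zero (hs₀ : s₀ ≠ 0) {w D : ℝ} (hD : (D : ℂ) = a * (b * v 0)) (hD₀ : D ≠ 0)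
    (hw : s₀ * χ 0 = -24 * w) :
    oddQuotient a b s₀ v χ 0 =
      -(144 * w * (normSq a * normSq b) / (D * normSq s₀) : ℝ) := by
  have product_ne : a * (b * v 0) ≠ 0 := by rw [← hD]; exact_mod_cast hD₀
  simp only [mul_ne_zero_iff] at product_ne
  obtain ⟨a_ne, b_ne, v_ne⟩ := product_ne
  have conj_ne : conj s₀ ≠ 0 := by simpa using hs₀
  have χ_zero : χ 0 = -24 * w / s₀ := eq_div_of_mul_eq hs₀ (by rw [← hw, mul_comm])
  push_cast
  rw [oddQuotient, ← mul_conj, ← mul_conj, ← mul_conj, hD, χ_zero]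
  simp only [mul_zero, zero_add, entireXi_one]
  field_simp
  ring

lemma neg_oddQuotient_mul_I_div (hs₀ : 0 < s₀.re) (hv₀ : ∀ z, 0 ≤ z.re → v z ≠ 0)
    (hv : ∀ z, 0 ≤ z.re → mainFactor z = (z - a) * ((z - b) * v z))
    (hχ : ∀ z, oddMainTerm z = z * ((z - 1 / 2) * ((z - 1 / 6) * ((z - s₀) * χ z))))
    {t : ℝ} (ht : t ≠ 0) :
    -oddQuotient a b s₀ v χ (t * I) / (t * I) =
      (normSq (t * I - a) * normSq (t * I - b) /
        (t ^ 2 * (normSq (t * I - 1 / 6) * normSq (t * I - s₀))) : ℝ) *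
        (oddMainTerm (t * I) / mainTerm (t * I)) := by
  have axis : 0 ≤ ((t : ℂ) * I).re := by simp
  have main_ne := mainTerm_mul_I_ne_zero t
  have denominator_ne := oddQuotient_denominator_ne_zero hs₀ axis (hv₀ _ axis)
  have sixth_sub_ne := mul_I_sub_ne_zero (a := 1 / 6) (by norm_num) t
  have zero_sub_ne := mul_I_sub_ne_zero hs₀ t
  have t_sq : (t : ℂ) ^ 2 = -(t * I * (t * I)) := by linear_combination (t : ℂ) ^ 2 * I_sq
  have conj_sixth : conj (1 / 6 : ℂ) = 1 / 6 := by simp [map_ofNat]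
  have z_ne : (t : ℂ) * I ≠ 0 := by simp [ht]
  rw [mainTerm, hv _ axis] at main_ne
  push_cast
  rw [normSq_mul_I_sub, normSq_mul_I_sub, normSq_mul_I_sub, normSq_mul_I_sub, t_sq, conj_sixth,
    oddQuotient, hχ, mainTerm, hv _ axis]
  simp only [mul_ne_zero_iff] at main_ne denominator_ne
  obtain ⟨half_ne, xi_ne, a_ne, b_ne, v_ne⟩ := main_ne
  obtain ⟨-, sixth_ne, conj_ne⟩ := denominator_ne
  generalize (t : ℂ) * I = z at *
  generalize z - 1 / 2 = z₂ at *
  generalize z - 1 / 6 = z₆ at *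
  generalize z + 1 / 6 = z₆' at *
  field_simp

end ExtraZero

lemma exists_oddMainTerm_eq {s₀ : ℂ} (h : oddMainTerm s₀ = 0) (h₀ : s₀ ≠ 0) (h₂ : s₀ ≠ 1 / 2)
    (h₆ : s₀ ≠ 1 / 6) : ∃ χ, Differentiable ℂ χ ∧
      ∀ z, oddMainTerm z = z * ((z - 1 / 2) * ((z - 1 / 6) * ((z - s₀) * χ z))) := by
  have zero : oddMainTerm 0 = 0 := by simp [oddMainTerm]
  obtain ⟨F₁, hF₁, eq₁⟩ := exists_eq_sub_mul_of_eq_zero differentiable_oddMainTerm zero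
  obtain ⟨F₂, hF₂, eq₂⟩ := exists_eq_sub_mul_of_eq_zero hF₁ (a := 1 / 2) <| by
    simpa only [oddMainTerm_one_half, sub_zero, mul_eq_zero, one_div_ne_zero (two_ne_zero (α := ℂ)),
      false_or] using (eq₁ (1 / 2)).symm
  obtain ⟨F₃, hF₃, eq₃⟩ := exists_eq_sub_mul_of_eq_zero hF₂ (a := 1 / 6) <| by
    have := (eq₁ (1 / 6)).symm
    rw [oddMainTerm_one_sixth, eq₂] at this
    norm_num at this
    simpa using this
  obtain ⟨χ, hχ, eq₄⟩ := exists_eq_sub_mul_of_eq_zero hF₃ (a := s₀) <| by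
    have := (eq₁ s₀).symm
    rw [h, eq₂, eq₃] at this
    simpa only [mul_eq_zero, sub_eq_zero, h₀, h₂, h₆, false_or] using this
  exact ⟨χ, hχ, fun z ↦ by rw [eq₁, eq₂, eq₃, eq₄, sub_zero]⟩

lemma eq_one_half_or_one_sixth_of_oddMainTerm_eq_zero {s₀ : ℂ} (hs₀ : 0 < s₀.re)
    (h : oddMainTerm s₀ = 0) : s₀ = 1 / 2 ∨ s₀ = 1 / 6 := by
  by_contra! ne
  have s₀_ne : s₀ ≠ 0 := fun h ↦ by simp [h] at hs₀
  obtain ⟨w, D, hw, hD, factor_zero, deriv_zero⟩ := exists_pos_hasDerivAt_mainTerm_zero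
  obtain ⟨a, b, v, v_diff, v_ne, hv⟩ := exists_mainFactor_eq_mul_mul
  obtain ⟨χ, χ_diff, hχ⟩ := exists_oddMainTerm_eq h s₀_ne ne.1 ne.2
  have hv' : ∀ z, 0 ≤ z.re → mainFactor z = (z - a) * ((z - b) * v z) :=
    fun z hz ↦ hv z (by linarith)
  have v_diff_near : ∀ᶠ z in 𝓝 (0 : ℂ), DifferentiableAt ℂ v z := by
    filter_upwards [continuous_re.continuousAt.eventually_const_lt (u := -1) (by simp)] with z hz
    exact v_diff z hz
  have D_eq : (D : ℂ) = a * (b * v 0) := by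
    rw [← factor_zero, hv' 0 le_rfl]
    ring
  have D_ne : a * (b * v 0) ≠ 0 := by rw [← D_eq]; exact_mod_cast hD.ne'
  have := normSq_pos.mpr (left_ne_zero_of_mul D_ne)
  have := normSq_pos.mpr (left_ne_zero_of_mul (right_ne_zero_of_mul D_ne))
  have := normSq_pos.mpr s₀_ne
  refine not_tendsto_zero_of_re_neg_div_nonneg
    (fun z hz ↦ differentiableAt_oddQuotient hs₀ χ_diff hz (v_diff z (by linarith)) (v_ne z hz))
    (eventually_differentiableAt_oddQuotient hs₀ χ_diff v_diff_near (v_ne 0 le_rfl))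
    (by positivity)
    (oddQuotient_zero s₀_ne D_eq hD.ne' (mul_eq_of_hasDerivAt_mainTerm χ_diff hχ deriv_zero))
    (fun t ht ↦ ?_)
    ((isBigO_oddQuotient hs₀ v_ne hv' hχ).trans_tendsto
      (tendsto_inv₀_cobounded.mono_left inf_le_left))
  rw [neg_oddQuotient_mul_I_div hs₀ v_ne hv' hχ ht, re_ofReal_mul]
  exact mul_nonneg (div_nonneg (mul_nonneg (normSq_nonneg _) (normSq_nonneg _)) (mul_nonneg
    (sq_nonneg t) (mul_nonneg (normSq_nonneg _) (normSq_nonneg _))))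
    (re_oddMainTerm_div_mainTerm_nonneg t)

/-! ### Comparison with the zeta function -/

lemma oddMainTerm_sub_one_half (s : ℂ) : oddMainTerm (s - 1 / 2) =
    (s - 1) * (entireXi (2 * s) *
      (entireXi (s + 1) * entireXi (3 * s) *
          ((1 + xiTwoExcess * (s - 1)) * ((s - 1) * (3 * s - 2))) -
        entireXi s * entireXi (3 * s - 1) * ((s + 1) * (s - 2)) -
        2 * entireXi s * entireXi (3 * s) * ((s - 1) * (s - 2)))) +
    s * (entireXi (2 * s - 1) *
      (entireXi (s - 1) * entireXi (3 * s - 2) *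
          ((1 - xiTwoExcess * s) * (s * (3 * s - 1))) -
        entireXi s * entireXi (3 * s - 1) * ((s + 1) * (s - 2)) -
        2 * entireXi s * entireXi (3 * s - 2) * (s * (s + 1)))) := by
  rw [oddMainTerm, mainTerm_neg, mainTerm, mainFactor, linearFactor, linearFactor]
  ring_nf

lemma oddMainTerm_eq_mul_xiG2Plong {s : ℂ} (hs : s ∉ S1) : oddMainTerm (s - 1 / 2) =
    12 * (2 * s - 1) * s ^ 3 * (s - 1) ^ 3 * (3 * s - 1) * (3 * s - 2) * (s + 1) * (s - 2) *
      xiG2Plong s := by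
  simp only [S1, mem_insert_iff, mem_singleton_iff, not_or] at hs
  obtain ⟨ne_neg_one, ne_zero, ne_third, ne_half, ne_two_thirds, ne_one, ne_two⟩ := hs
  have h₁ : s + 1 ≠ 0 := fun h ↦ ne_neg_one (by linear_combination h)
  have h₂ : s - 1 ≠ 0 := fun h ↦ ne_one (by linear_combination h)
  have h₃ : 3 * s - 1 ≠ 0 := fun h ↦ ne_third (by linear_combination h / 3)
  have h₄ : 2 * s - 1 ≠ 0 := fun h ↦ ne_half (by linear_combination h / 2)
  have h₅ : 3 * s - 2 ≠ 0 := fun h ↦ ne_two_thirds (by linear_combination h / 3)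
  have h₆ : s - 2 ≠ 0 := fun h ↦ ne_two (by linear_combination h)
  rw [oddMainTerm_sub_one_half,
    entireXi_eq (s := 2 * s) (by simpa) (sub_ne_zero.mp h₄),
    entireXi_eq (s := s + 1) h₁ (by simpa),
    entireXi_eq (s := 3 * s) (by simpa) (sub_ne_zero.mp h₃),
    entireXi_eq (s := s) ne_zero ne_one,
    entireXi_eq (s := 3 * s - 1) h₃ fun h ↦ h₅ (by linear_combination h),
    entireXi_eq (s := 2 * s - 1) h₄ fun h ↦ ne_one (by linear_combination h / 2),
    entireXi_eq (s := s - 1) h₂ fun h ↦ h₆ (by linear_combination h),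
    entireXi_eq (s := 3 * s - 2) h₅ fun h ↦ ne_one (by linear_combination h / 3),
    xiG2Plong, completedRiemannZeta_two]
  have double : 2 * s - 2 = 2 * (s - 1) := by ring
  have triple : 3 * s - 3 = 3 * (s - 1) := by ring
  rw [double, triple]
  generalize completedRiemannZeta (2 * s) = x₁
  generalize completedRiemannZeta (s + 1) = x₂
  generalize completedRiemannZeta (3 * s) = x₃
  generalize completedRiemannZeta s = x₄
  generalize completedRiemannZeta (3 * s - 1) = x₅
  generalize completedRiemannZeta (2 * s - 1) = x₆
  generalize completedRiemannZeta (s - 1) = x₇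
  generalize completedRiemannZeta (3 * s - 2) = x₈
  have h₃' : s * 3 - 1 ≠ 0 := by rwa [mul_comm]
  have h₅' : s * 3 - 2 ≠ 0 := by rwa [mul_comm]
  field_simp
  ring

end xiG2Plong

theorem xiG2Plong_riemann_hypothesis (s : ℂ) (hs : s ∉ S1) (hzero : xiG2Plong s = 0) :
    s.re = 1 / 2 := by
  have odd_zero : xiG2Plong.oddMainTerm (s - 1 / 2) = 0 := by
    rw [xiG2Plong.oddMainTerm_eq_mul_xiG2Plong hs, hzero, mul_zero]
  have odd_zero_neg : xiG2Plong.oddMainTerm (1 / 2 - s) = 0 := by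
    rw [← neg_sub, xiG2Plong.oddMainTerm_neg, odd_zero, neg_zero]
  simp only [S1, Set.mem_insert_iff, Set.mem_singleton_iff, not_or] at hs
  obtain ⟨-, ne_zero, ne_third, -, ne_two_thirds, ne_one, -⟩ := hs
  rcases lt_trichotomy s.re (1 / 2) with left | critical | right
  · rcases xiG2Plong.eq_one_half_or_one_sixth_of_oddMainTerm_eq_zero (by norm_num; linarith)
      odd_zero_neg with h | h
    · exact absurd (by linear_combination -h) ne_zero
    · exact absurd (by linear_combination -h) ne_third
  · exact critical
  · rcases xiG2Plong.eq_one_half_or_one_sixth_of_oddMainTerm_eq_zero (by norm_num; linarith)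
      odd_zero with h | h
    · exact absurd (by linear_combination h) ne_one
    · exact absurd (by linear_combination h) ne_two_thirds
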